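/- arXiv:1804.08068 — 5 statements merged into one kernel-verified Lean document; each statement's English description precedes it below -/
import Mathlib

section
/- Let U be a subset of the set of prime numbers ℙ such that the relative density δ(U) exists and equals γ > 0, and let V be a subset of ℕ. Then the set U/V = {u/v : u ∈ U, v ∈ V} is dense in ℝ_{>0} if and only if V is infinite. -/
/-!
The primes in `(αx, βx]` make up a positive proportion of those up to `βx`, so if `U` missed this
interval its counting ratio would jump between `αx` and `βx` by a fixed factor. Hence `U` meets
`(αx, βx]` for all large `x`, and taking `x = v ∈ V` puts a quotient `u / v` into `(α, β]`.

The lower bound for primes in `(αx, βx]` needs only half of the Wiener–Ikehara argument, and no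
error term. Take `φ` of compact support with `φ 0 > 0` and `𝓕 φ ≤ 0` off a short interval around
`0`. Then `∑ Λ(n) / n * 𝓕 φ (log n - L)` is at most `‖φ‖₁` times its part over `n ≈ exp L`, while
the continuity of `ζ' / ζ + 1 / (s - 1)` on `Re s = 1` makes it tend to `φ 0` as
`L → ∞`.
-/

open Filter MeasureTheory Topology FourierTransform SchwartzMap
open scoped ComplexConjugate Convolution ContDiff

section TestFunction

lemma fourier_conj_comp_neg {V : Type*} [NormedAddCommGroup V] [InnerProductSpace ℝ V]
    [FiniteDimensional ℝ V] [MeasurableSpace V] [BorelSpace V] (f : V → ℂ) (w : V) :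
    𝓕 (fun y => conj (f (-y))) w = conj (𝓕 f w) := by
  rw [Real.fourier_eq, Real.fourier_eq, ← integral_conj, ← integral_neg_eq_self]
  congr 1 with y
  simp only [neg_neg, inner_neg_left, Circle.smul_def, smul_eq_mul, map_mul, AddChar.map_neg_eq_inv,
    Circle.coe_inv_eq_conj, Complex.conj_conj]

lemma fourier_comp_mul_right {E : Type*} [NormedAddCommGroup E] [NormedSpace ℂ E] (f : ℝ → E)
    {c : ℝ} (hc : c ≠ 0) (t : ℝ) :
    𝓕 (fun y => f (y * c)) t = |c⁻¹| • 𝓕 f (t * c⁻¹) := by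
  rw [Real.fourier_real_eq, Real.fourier_real_eq, ← Measure.integral_comp_mul_right]
  congr 1 with y
  congr 3
  field_simp

/-- Fourier transforms of autoconvolutions of even functions are squares. -/
lemma exists_hasCompactSupport_fourier_nonneg {V : Type*} [NormedAddCommGroup V]
    [InnerProductSpace ℝ V] [FiniteDimensional ℝ V] [MeasurableSpace V] [BorelSpace V] :
    ∃ φ : 𝓢(V, ℂ), HasCompactSupport φ ∧ 0 < (φ 0).re ∧ ∀ t, 0 ≤ (𝓕 φ t).re := by
  let b : ContDiffBump (0 : V) := ⟨1, 2, one_pos, one_lt_two⟩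
  let f : V → ℂ := fun y => (b y : ℂ)
  have hfs : HasCompactSupport f := b.hasCompactSupport.comp_left Complex.ofReal_zero
  have hfd : ContDiff ℝ ∞ f := Complex.ofRealCLM.contDiff.comp b.contDiff
  have hfi : Integrable f := hfd.continuous.integrable_of_hasCompactSupport hfs
  have hfreal : ∀ t, (𝓕 f t).im = 0 := fun t => by
    rw [← Complex.conj_eq_iff_im, ← fourier_conj_comp_neg]
    simp only [f, b.neg, Complex.conj_ofReal]
  have hffs : HasCompactSupport (f ⋆[ContinuousLinearMap.mul ℂ ℂ] f) := hfs.convolution _ hfs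
  have hffd : ContDiff ℝ ∞ (f ⋆[ContinuousLinearMap.mul ℂ ℂ] f) :=
    hfs.contDiff_convolution_right (ContinuousLinearMap.mul ℝ ℂ) hfi.locallyIntegrable hfd
  let φ : 𝓢(V, ℂ) := hffs.toSchwartzMap hffd
  have hφ0 : φ 0 = ((∫ y, b y * b y : ℝ) : ℂ) := by
    change ∫ y, f y * f (0 - y) = _
    simp only [f, zero_sub, b.neg, ← Complex.ofReal_mul, integral_complex_ofReal]
  refine ⟨φ, hffs, ?_, fun t => ?_⟩
  · rw [hφ0, Complex.ofReal_re]
    refine (b.continuous.mul b.continuous).integral_pos_of_hasCompactSupport_nonneg_nonzero (x := 0)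
      b.hasCompactSupport.mul_right (fun y => mul_self_nonneg _) ?_
    exact (mul_pos (b.pos_of_mem_ball (Metric.mem_ball_self b.rOut_pos))
      (b.pos_of_mem_ball (Metric.mem_ball_self b.rOut_pos))).ne'
  · have hsq : 𝓕 φ t = 𝓕 f t * 𝓕 f t := Real.fourier_mul_convolution_eq hfi hfi t
    rw [hsq, Complex.mul_re, hfreal, mul_zero, sub_zero]
    exact mul_self_nonneg _

lemma fourier_deriv_deriv (φ : 𝓢(ℝ, ℂ)) (t : ℝ) :
    𝓕 (derivCLM ℂ ℂ (derivCLM ℂ ℂ φ)) t = -((2 * Real.pi * t) ^ 2 : ℝ) * 𝓕 φ t := by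
  have hderiv : ∀ g : 𝓢(ℝ, ℂ), 𝓕 (derivCLM ℂ ℂ g) t = 2 * Real.pi * Complex.I * t * 𝓕 g t := by
    intro g
    exact congrFun (Real.fourier_deriv g.integrable g.differentiable
      (derivCLM ℂ ℂ g).integrable) t
  rw [hderiv, hderiv]
  push_cast
  linear_combination (2 * Real.pi * t) ^ 2 * 𝓕 φ t * Complex.I_sq

/-- If `𝓕 φ ≥ 0`, then `φ + (2πT)⁻² φ''` works for large `T`, since its transform is
`(1 - (t / T)²) 𝓕 φ`. -/
lemma exists_pos_hasCompactSupport_fourier_nonpos :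
    ∃ T : ℝ, 0 < T ∧ ∃ φ : 𝓢(ℝ, ℂ), HasCompactSupport φ ∧ 0 < (φ 0).re ∧
      ∀ t, T ≤ |t| → (𝓕 φ t).re ≤ 0 := by
  obtain ⟨φ, hφs, hφ0, hφ⟩ := exists_hasCompactSupport_fourier_nonneg (V := ℝ)
  set φ₂ := derivCLM ℂ ℂ (derivCLM ℂ ℂ φ)
  obtain ⟨T, hψ0, hT⟩ :
      ∃ T : ℝ, 0 < (φ 0).re + ((2 * Real.pi * T) ^ 2)⁻¹ * (φ₂ 0).re ∧ 0 < T := by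
    have hlim : Tendsto (fun T : ℝ => (φ 0).re + ((2 * Real.pi * T) ^ 2)⁻¹ * (φ₂ 0).re) atTop
        (𝓝 ((φ 0).re + 0 * (φ₂ 0).re)) :=
      ((((tendsto_pow_atTop two_ne_zero).comp
        (tendsto_id.const_mul_atTop Real.two_pi_pos)).inv_tendsto_atTop).mul_const _).const_add _
    rw [zero_mul, add_zero] at hlim
    exact ((hlim.eventually (lt_mem_nhds hφ0)).and (eventually_gt_atTop 0)).exists
  let ψ : 𝓢(ℝ, ℂ) := φ + (((2 * Real.pi * T) ^ 2)⁻¹ : ℝ) • φ₂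
  have hψ : ∀ t, 𝓕 ψ t = ((1 - t ^ 2 / T ^ 2 : ℝ) : ℂ) * 𝓕 φ t := fun t => by
    have hlin : 𝓕 ψ t = 𝓕 φ t + (((2 * Real.pi * T) ^ 2)⁻¹ : ℝ) • 𝓕 φ₂ t := by
      simp only [ψ, FourierTransform.fourier_add, FourierTransform.fourier_smul,
        add_apply, smul_apply]
    rw [hlin, fourier_deriv_deriv, Complex.real_smul]
    push_cast
    have hT' : (T : ℂ) ≠ 0 := by exact_mod_cast hT.ne'
    field_simp
    ring
  refine ⟨T, hT, ψ, hφs.add hφs.deriv.deriv.smul_left, ?_, fun t ht => ?_⟩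
  · simpa only [ψ, add_apply, smul_apply, Complex.add_re, Complex.smul_re, smul_eq_mul] using hψ0
  · rw [hψ, Complex.re_ofReal_mul]
    refine mul_nonpos_of_nonpos_of_nonneg (sub_nonpos.2 ?_) (hφ t)
    rw [one_le_div (by positivity), ← sq_abs t]
    gcongr

lemma exists_hasCompactSupport_fourier_nonpos {T : ℝ} (hT : 0 < T) :
    ∃ φ : 𝓢(ℝ, ℂ), HasCompactSupport φ ∧ 0 < (φ 0).re ∧ ∀ t, T ≤ |t| → (𝓕 φ t).re ≤ 0 := by
  obtain ⟨T₀, hT₀, φ, hφs, hφ0, hφ⟩ := exists_pos_hasCompactSupport_fourier_nonpos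
  have hc : 0 < T / T₀ := div_pos hT hT₀
  refine ⟨compCLMOfContinuousLinearEquiv ℂ
    (ContinuousLinearEquiv.unitsEquivAut ℝ (Units.mk0 _ hc.ne')) φ,
    hφs.comp_homeomorph (Homeomorph.mulRight₀ _ hc.ne'), ?_, fun t ht => ?_⟩
  · simpa using hφ0
  · change (𝓕 (fun y => φ (y * (T / T₀))) t).re ≤ 0
    rw [fourier_comp_mul_right _ hc.ne', Complex.smul_re]
    refine smul_nonpos_of_nonneg_of_nonpos (abs_nonneg _) (hφ _ ?_)
    rw [abs_mul, inv_div, abs_of_pos (div_pos hT₀ hT), mul_div_assoc', le_div_iff₀ hT,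
      mul_comm T₀]
    gcongr

end TestFunction

section Tauberian

lemma term_add_two_pi_mul_I (a : ℕ → ℂ) (s : ℂ) (y : ℝ) (n : ℕ) :
    LSeries.term a (s + 2 * Real.pi * y * Complex.I) n =
      Real.fourierChar (-(y * Real.log n)) • LSeries.term a s n := by
  rcases eq_or_ne n 0 with rfl | hn
  · simp only [LSeries.term_zero, smul_zero]
  · have hn' : (n : ℂ) ≠ 0 := Nat.cast_ne_zero.2 hn
    rw [LSeries.term_of_ne_zero hn, LSeries.term_of_ne_zero hn, Circle.smul_def,
      Real.fourierChar_apply, Complex.cpow_add _ _ hn', Complex.cpow_def_of_ne_zero hn' (_ * _),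
      ← Complex.natCast_log, smul_eq_mul, div_mul_eq_div_div, div_eq_mul_inv _ (Complex.exp _),
      ← Complex.exp_neg, mul_comm]
    congr 2
    push_cast
    ring

lemma hasSum_term_mul_fourier {a : ℕ → ℂ} {s : ℂ} (hs : LSeriesSummable a s) {φ : ℝ → ℂ}
    (hφ : Integrable φ) :
    HasSum (fun n => LSeries.term a s n * 𝓕 φ (Real.log n))
      (∫ y : ℝ, φ y * LSeries a (s + 2 * Real.pi * y * Complex.I)) := by
  let F : ℕ → ℝ → ℂ := fun n y => φ y * LSeries.term a (s + 2 * Real.pi * y * Complex.I) n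
  have hF : ∀ n y, F n y = LSeries.term a s n * (Real.fourierChar (-(y * Real.log n)) • φ y) :=
    fun n y => by simp only [F, term_add_two_pi_mul_I, Circle.smul_def, smul_eq_mul]; ring
  have hFint : ∀ n, ∫ y, F n y = LSeries.term a s n * 𝓕 φ (Real.log n) := fun n => by
    rw [Real.fourier_real_eq, ← integral_const_mul]
    exact integral_congr_ae (Eventually.of_forall (hF n))
  have hFnorm : ∀ n, ∫ y, ‖F n y‖ = ‖LSeries.term a s n‖ * ∫ y, ‖φ y‖ := fun n => by
    simp only [hF, norm_mul, Circle.norm_smul, integral_const_mul]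
  have hFi : ∀ n, Integrable (F n) := fun n => by
    simp only [funext (hF n)]
    have := (VectorFourier.fourierIntegral_convergent_iff (L := LinearMap.mul ℝ ℝ)
      Real.continuous_fourierChar continuous_mul (Real.log n)).2 hφ
    exact this.const_mul _
  have h := hasSum_integral_of_summable_integral_norm hFi
    (by simpa only [hFnorm] using hs.norm.mul_right _)
  simp only [hFint, F, tsum_mul_left] at h
  exact h

lemma integral_exp_neg_mul_fourier {s : ℂ} (hs : 0 < s.re) {φ : ℝ → ℂ} (hφ : Integrable φ) :
    ∫ t in Set.Ioi (0 : ℝ), Complex.exp (-s * t) * 𝓕 φ t =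
      ∫ y : ℝ, φ y / (s + 2 * Real.pi * y * Complex.I) := by
  have hexp : Integrable (fun t : ℝ => Complex.exp (-s * t)) (volume.restrict (Set.Ioi 0)) :=
    integrableOn_exp_mul_complex_Ioi (by simpa using hs) 0
  have hflip : ∫ t in Set.Ioi (0 : ℝ), 𝓕 φ t • Complex.exp (-s * t) =
      ∫ y, φ y • ∫ t in Set.Ioi (0 : ℝ), Real.fourierChar (-(y * t)) • Complex.exp (-s * t) := by
    simp only [Real.fourier_real_eq]
    exact VectorFourier.integral_fourierIntegral_smul_eq_flip (L := LinearMap.mul ℝ ℝ)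
      Real.continuous_fourierChar continuous_mul hφ hexp
  have hlaplace (y : ℝ) : ∫ t in Set.Ioi (0 : ℝ), Real.fourierChar (-(y * t)) •
      Complex.exp (-s * t) = (s + 2 * Real.pi * y * Complex.I)⁻¹ := by
    have hre : (-(s + 2 * Real.pi * y * Complex.I)).re < 0 := by simpa using hs
    have h := integral_exp_mul_complex_Ioi hre 0
    rw [Complex.ofReal_zero, mul_zero, Complex.exp_zero, neg_div_neg_eq, one_div] at h
    rw [← h]
    refine integral_congr_ae (Eventually.of_forall fun t => ?_)
    simp only [Circle.smul_def, Real.fourierChar_apply, smul_eq_mul, ← Complex.exp_add]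
    push_cast
    ring_nf
  simp only [hlaplace, smul_eq_mul, ← div_eq_mul_inv] at hflip
  simp only [mul_comm (Complex.exp _), hflip]

lemma tendsto_integral_exp_neg_mul {f : ℝ → ℂ} (hf : IntegrableOn f (Set.Ioi 0)) :
    Tendsto (fun ε : ℝ => ∫ t in Set.Ioi (0 : ℝ), Complex.exp (-ε * t) * f t) (𝓝[>] 0)
      (𝓝 (∫ t in Set.Ioi (0 : ℝ), f t)) := by
  refine tendsto_integral_filter_of_dominated_convergence (fun t => ‖f t‖) ?_ ?_ hf.norm ?_
  · exact Eventually.of_forall fun ε => AEStronglyMeasurable.mul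
      (Continuous.aestronglyMeasurable (by fun_prop)) hf.aestronglyMeasurable
  · filter_upwards [self_mem_nhdsWithin] with ε hε
    filter_upwards [ae_restrict_mem measurableSet_Ioi] with t ht
    rw [norm_mul]
    refine mul_le_of_le_one_left (norm_nonneg _) ?_
    rw [Complex.norm_exp, Real.exp_le_one_iff]
    simpa using mul_nonneg (Set.mem_Ioi.1 hε).le (Set.mem_Ioi.1 ht).le
  · refine Eventually.of_forall fun t => ?_
    have hcont : ContinuousAt (fun ε : ℝ => Complex.exp (-ε * t) * f t) 0 := by fun_prop
    simpa using hcont.tendsto.mono_left nhdsWithin_le_nhds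

lemma continuous_comp_vertical {G : ℂ → ℂ} (hG : ContinuousOn G {s | 1 ≤ s.re}) {σ : ℝ}
    (hσ : 1 ≤ σ) : Continuous fun y : ℝ => G (σ + 2 * Real.pi * y * Complex.I) :=
  hG.comp_continuous (by fun_prop) fun y => by simpa using hσ

lemma tendsto_integral_mul_vertical {G : ℂ → ℂ} (hG : ContinuousOn G {s | 1 ≤ s.re}) {φ : ℝ → ℂ}
    (hφc : Continuous φ) (hφs : HasCompactSupport φ) :
    Tendsto (fun σ : ℝ => ∫ y : ℝ, φ y * G (σ + 2 * Real.pi * y * Complex.I)) (𝓝[>] 1)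
      (𝓝 (∫ y : ℝ, φ y * G (1 + 2 * Real.pi * y * Complex.I))) := by
  have hcont : ContinuousOn (fun σ : ℝ => ∫ y : ℝ, φ y * G (σ + 2 * Real.pi * y * Complex.I))
      (Set.Ici 1) := by
    refine continuousOn_integral_of_compact_support hφs ?_ fun σ y _ hy => ?_
    · refine (hφc.comp continuous_snd).continuousOn.mul (hG.comp (by fun_prop) fun p hp => ?_)
      simpa using hp.1
    · rw [image_eq_zero_of_notMem_tsupport hy, zero_mul]
  simpa using (hcont 1 Set.self_mem_Ici).mono_left (nhdsWithin_mono 1 Set.Ioi_subset_Ici_self)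

lemma term_ofReal (a : ℕ → ℝ) {σ : ℝ} (hσ : σ ≠ 0) (n : ℕ) :
    LSeries.term (fun n => (a n : ℂ)) σ n = ((a n / (n : ℝ) ^ σ : ℝ) : ℂ) := by
  rw [LSeries.term_of_ne_zero' (Complex.ofReal_ne_zero.2 hσ), Complex.ofReal_div,
    Complex.ofReal_cpow n.cast_nonneg, Complex.ofReal_natCast]

lemma re_tsum_term_mul_fourier_le {a : ℕ → ℝ} {φ : ℝ → ℂ} (ha0 : ∀ n, 0 ≤ a n) {σ : ℝ} (hσ : 1 ≤ σ)
    (hs : Summable fun n => LSeries.term (fun n => (a n : ℂ)) σ n * 𝓕 φ (Real.log n))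
    {S : Finset ℕ} (hS : ∀ n ∉ S, n ≠ 0 → (𝓕 φ (Real.log n)).re ≤ 0) :
    (∑' n, LSeries.term (fun n => (a n : ℂ)) σ n * 𝓕 φ (Real.log n)).re ≤
      (∫ y, ‖φ y‖) * ∑ n ∈ S, a n / n := by
  have hterm (n : ℕ) : (LSeries.term (fun n => (a n : ℂ)) σ n * 𝓕 φ (Real.log n)).re =
      a n / (n : ℝ) ^ σ * (𝓕 φ (Real.log n)).re := by
    rw [term_ofReal a (by linarith), Complex.re_ofReal_mul]
  have hnonpos : ∀ n ∉ S, a n / (n : ℝ) ^ σ * (𝓕 φ (Real.log n)).re ≤ 0 := fun n hn => by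
    rcases eq_or_ne n 0 with rfl | hn0
    · rw [Nat.cast_zero, Real.zero_rpow (by linarith), div_zero, zero_mul]
    · exact mul_nonpos_of_nonneg_of_nonpos (div_nonneg (ha0 n) (by positivity)) (hS n hn hn0)
  have hsum := Complex.hasSum_re hs.hasSum
  simp only [hterm] at hsum
  have hfin := sum_le_hasSum S (fun n hn => neg_nonneg.2 (hnonpos n hn)) hsum.neg
  rw [Finset.sum_neg_distrib, neg_le_neg_iff] at hfin
  refine hfin.trans ?_
  rw [Finset.mul_sum]
  refine Finset.sum_le_sum fun n _ => ?_
  have hbound : (𝓕 φ (Real.log n)).re ≤ ∫ y, ‖φ y‖ := (Complex.re_le_norm _).trans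
    (VectorFourier.norm_fourierIntegral_le_integral_norm _ _ _ _ _)
  have hrpow : a n / (n : ℝ) ^ σ ≤ a n / n := by
    rcases eq_or_ne n 0 with rfl | hn0
    · rw [Nat.cast_zero, Real.zero_rpow (by linarith)]
    · have hn1 : (1 : ℝ) ≤ n := Nat.one_le_cast.2 (Nat.one_le_iff_ne_zero.2 hn0)
      exact div_le_div_of_nonneg_left (ha0 n) (by linarith) (Real.self_le_rpow_of_one_le hn1 hσ)
  rw [mul_comm]
  exact mul_le_mul hbound hrpow (div_nonneg (ha0 n) (by positivity))
    (integral_nonneg fun y => norm_nonneg _)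

lemma fourier_fourierChar_smul {E : Type*} [NormedAddCommGroup E] [NormedSpace ℂ E] (f : ℝ → E)
    (L t : ℝ) : 𝓕 (fun y => Real.fourierChar (y * L) • f y) t = 𝓕 f (t - L) := by
  rw [Real.fourier_real_eq, Real.fourier_real_eq]
  congr 1 with y
  rw [smul_smul, ← AddChar.map_add_eq_mul]
  ring_nf

lemma tendsto_integral_Ioi_comp_sub {E : Type*} [NormedAddCommGroup E] [NormedSpace ℝ E]
    {f : ℝ → E} (hf : Integrable f) :
    Tendsto (fun L : ℝ => ∫ t in Set.Ioi (0 : ℝ), f (t - L)) atTop (𝓝 (∫ t, f t)) := by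
  have hshift (L : ℝ) : ∫ t in Set.Ioi (0 : ℝ), f (t - L) = ∫ t in Set.Ioi (-L), f t := by
    have h := (measurePreserving_sub_right volume L).setIntegral_preimage_emb
      (measurableEmbedding_subRight L) f (Set.Ioi (-L))
    rwa [Set.preimage_sub_const_Ioi, neg_add_cancel] at h
  simp only [hshift]
  exact (aecover_Ioi tendsto_neg_atTop_atBot).integral_tendsto_of_countably_generated hf

lemma integral_fourier_eq_apply_zero {φ : ℝ → ℂ} (hφc : Continuous φ) (hφ : Integrable φ)
    (hφi : Integrable (𝓕 φ)) : ∫ t, 𝓕 φ t = φ 0 := by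
  rw [← congrFun (hφc.fourierInv_fourier_eq hφ hφi) 0, Real.fourierInv_eq]
  simp

lemma tendsto_integral_fourierChar_smul_add {φ : ℝ → ℂ} (hφc : Continuous φ) (hφ : Integrable φ)
    (hφi : Integrable (𝓕 φ)) (g : ℝ → ℂ) (A : ℝ) :
    Tendsto (fun L : ℝ => (∫ y, Real.fourierChar (y * L) • φ y * g y).re +
      A * (∫ t in Set.Ioi (0 : ℝ), 𝓕 (fun y => Real.fourierChar (y * L) • φ y) t).re) atTop
      (𝓝 (A * (φ 0).re)) := by
  have hRL : Tendsto (fun L : ℝ => ∫ y, Real.fourierChar (y * L) • φ y * g y) atTop (𝓝 0) := by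
    refine (((Real.zero_at_infty_fourier fun y => φ y * g y).mono_left atBot_le_cocompact).comp
      tendsto_neg_atTop_atBot).congr fun L => ?_
    simp only [Function.comp_apply, Real.fourier_real_eq, mul_neg, neg_neg, smul_mul_assoc]
  have hpole := tendsto_integral_Ioi_comp_sub hφi
  rw [integral_fourier_eq_apply_zero hφc hφ hφi] at hpole
  simp only [fourier_fourierChar_smul]
  simpa using ((Complex.continuous_re.tendsto _).comp hRL).add
    (((Complex.continuous_re.tendsto _).comp hpole).const_mul A)

/-- The analytic hypothesis of the Wiener–Ikehara theorem for a Dirichlet series with coefficients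
`a`: on `Re s > 1` it converges absolutely and equals `A / (s - 1) + G s`, where `G` is continuous
up to the line `Re s = 1`. -/
structure WienerIkeharaHypothesis (a : ℕ → ℂ) (A : ℂ) (G : ℂ → ℂ) : Prop where
  summable : ∀ s : ℂ, 1 < s.re → LSeriesSummable a s
  lseries_eq : ∀ s : ℂ, 1 < s.re → LSeries a s = G s + A / (s - 1)
  continuousOn : ContinuousOn G {s | 1 ≤ s.re}

namespace WienerIkeharaHypothesis

section Complex

variable {a : ℕ → ℂ} {A : ℂ} {G : ℂ → ℂ} {φ : ℝ → ℂ}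

lemma hasSum_term_mul_fourier (h : WienerIkeharaHypothesis a A G)
    (hφc : Continuous φ) (hφs : HasCompactSupport φ) {σ : ℝ} (hσ : 1 < σ) :
    HasSum (fun n => LSeries.term a σ n * 𝓕 φ (Real.log n))
      ((∫ y : ℝ, φ y * G (σ + 2 * Real.pi * y * Complex.I)) +
        A * ∫ t in Set.Ioi (0 : ℝ), Complex.exp (-(σ - 1 : ℝ) * t) * 𝓕 φ t) := by
  have hφ : Integrable φ := hφc.integrable_of_hasCompactSupport hφs
  have hpole (y : ℝ) : ((σ - 1 : ℝ) : ℂ) + 2 * Real.pi * y * Complex.I ≠ 0 := fun h0 => by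
    have hre : σ - 1 = 0 := by simpa using congrArg Complex.re h0
    linarith
  have hsplit (y : ℝ) : φ y * LSeries a (σ + 2 * Real.pi * y * Complex.I) =
      φ y * G (σ + 2 * Real.pi * y * Complex.I) +
        A * (φ y / ((σ - 1 : ℝ) + 2 * Real.pi * y * Complex.I)) := by
    rw [h.lseries_eq _ (by simpa using hσ)]
    push_cast
    ring
  rw [integral_exp_neg_mul_fourier (by simpa using hσ) hφ, ← integral_const_mul, ← integral_add]
  · simp only [← hsplit]
    exact _root_.hasSum_term_mul_fourier (h.summable σ (by simpa using hσ)) hφ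
  · exact (hφc.mul (continuous_comp_vertical h.continuousOn hσ.le)).integrable_of_hasCompactSupport
      hφs.mul_right
  · refine ((hφc.div (by fun_prop) hpole).integrable_of_hasCompactSupport ?_).const_mul A
    simp only [div_eq_mul_inv]
    exact hφs.mul_right

lemma tendsto_tsum_term_mul_fourier (h : WienerIkeharaHypothesis a A G)
    (hφc : Continuous φ) (hφs : HasCompactSupport φ) (hφi : Integrable (𝓕 φ)) :
    Tendsto (fun σ : ℝ => ∑' n, LSeries.term a σ n * 𝓕 φ (Real.log n)) (𝓝[>] 1)
      (𝓝 ((∫ y : ℝ, φ y * G (1 + 2 * Real.pi * y * Complex.I)) +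
        A * ∫ t in Set.Ioi (0 : ℝ), 𝓕 φ t)) := by
  have hsub : Tendsto (fun σ : ℝ => σ - 1) (𝓝[>] 1) (𝓝[>] 0) := by
    have hcont : ContinuousWithinAt (fun σ : ℝ => σ - 1) (Set.Ioi 1) 1 := by fun_prop
    simpa using hcont.tendsto_nhdsWithin (t := Set.Ioi 0) fun σ hσ => sub_pos.2 hσ
  refine ((tendsto_integral_mul_vertical h.continuousOn hφc hφs).add
    (((tendsto_integral_exp_neg_mul hφi.integrableOn).comp hsub).const_mul A)).congr' ?_
  filter_upwards [self_mem_nhdsWithin] with σ hσ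
  exact (h.hasSum_term_mul_fourier hφc hφs hσ).tsum_eq.symm

end Complex

section Real

variable {a : ℕ → ℝ} {A : ℝ} {G : ℂ → ℂ}

lemma re_integral_mul_add_le_sum {φ : ℝ → ℂ}
    (h : WienerIkeharaHypothesis (fun n => (a n : ℂ)) A G) (ha : ∀ n, 0 ≤ a n)
    (hφc : Continuous φ) (hφs : HasCompactSupport φ) (hφi : Integrable (𝓕 φ))
    {S : Finset ℕ} (hS : ∀ n ∉ S, n ≠ 0 → (𝓕 φ (Real.log n)).re ≤ 0) :
    (∫ y : ℝ, φ y * G (1 + 2 * Real.pi * y * Complex.I)).re +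
      A * (∫ t in Set.Ioi (0 : ℝ), 𝓕 φ t).re ≤ (∫ y, ‖φ y‖) * ∑ n ∈ S, a n / n := by
  rw [← Complex.re_ofReal_mul, ← Complex.add_re]
  refine le_of_tendsto ((Complex.continuous_re.tendsto _).comp
    (h.tendsto_tsum_term_mul_fourier hφc hφs hφi)) ?_
  filter_upwards [self_mem_nhdsWithin] with σ hσ
  exact re_tsum_term_mul_fourier_le ha (Set.mem_Ioi.1 hσ).le
    (h.hasSum_term_mul_fourier hφc hφs hσ).summable hS

/-- The modulation `y ↦ e(yL) φ y` shifts `𝓕 φ` to `L`; as `L → ∞`, the contribution of `G` dies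
by Riemann–Lebesgue, and that of the pole tends to `A ∫ 𝓕 φ = A φ 0`. -/
lemma eventually_le_sum_of_fourier_nonpos
    (h : WienerIkeharaHypothesis (fun n => (a n : ℂ)) A G) (ha : ∀ n, 0 ≤ a n) (hA : 0 < A)
    {φ : 𝓢(ℝ, ℂ)} (hφs : HasCompactSupport φ) (hφ0 : 0 < (φ 0).re) {T : ℝ}
    (hφT : ∀ t, T ≤ |t| → (𝓕 φ t).re ≤ 0) :
    ∃ c : ℝ, 0 < c ∧ ∀ᶠ L in atTop, ∀ S : Finset ℕ,
      (∀ n ∉ S, n ≠ 0 → T ≤ |Real.log n - L|) → c ≤ ∑ n ∈ S, a n / n := by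
  have hφi : Integrable (𝓕 (φ : ℝ → ℂ)) := (𝓕 φ).integrable
  refine ⟨A * (φ 0).re / 2 / ((∫ y, ‖φ y‖) + 1), by positivity, ?_⟩
  filter_upwards [(tendsto_integral_fourierChar_smul_add φ.continuous φ.integrable hφi
    (fun y => G (1 + 2 * Real.pi * y * Complex.I)) A).eventually
    (lt_mem_nhds (half_lt_self (mul_pos hA hφ0)))] with L hL S hS
  have hshift : 𝓕 (fun y => Real.fourierChar (y * L) • φ y) = fun t => 𝓕 (φ : ℝ → ℂ) (t - L) :=
    funext (fourier_fourierChar_smul φ L)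
  have hsum := h.re_integral_mul_add_le_sum ha (φ := fun y => Real.fourierChar (y * L) • φ y)
    ((Real.continuous_fourierChar.comp (by fun_prop)).smul φ.continuous) hφs.smul_left
    (hshift ▸ hφi.comp_sub_right L) (S := S) fun n hn hn0 => by
      rw [hshift]
      exact hφT _ (hS n hn hn0)
  simp only [Circle.norm_smul] at hsum
  have hS0 : 0 ≤ ∑ n ∈ S, a n / n :=
    Finset.sum_nonneg fun n _ => div_nonneg (ha n) n.cast_nonneg
  rw [div_le_iff₀ (by positivity)]
  linarith

theorem eventually_mul_le_sum_Ioc (h : WienerIkeharaHypothesis (fun n => (a n : ℂ)) A G)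
    (ha : ∀ n, 0 ≤ a n) (hA : 0 < A) {α β : ℝ} (hα : 0 < α) (hαβ : α < β) :
    ∃ c : ℝ, 0 < c ∧ ∀ᶠ x : ℝ in atTop, c * x ≤ ∑ n ∈ Finset.Ioc ⌊α * x⌋₊ ⌊β * x⌋₊, a n := by
  have hβ : 0 < β := hα.trans hαβ
  have hT : 0 < (Real.log β - Real.log α) / 2 := half_pos (sub_pos.2 (Real.log_lt_log hα hαβ))
  obtain ⟨φ, hφs, hφ0, hφT⟩ := exists_hasCompactSupport_fourier_nonpos hT
  obtain ⟨c, hc, hL⟩ := h.eventually_le_sum_of_fourier_nonpos ha hA hφs hφ0 hφT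
  have hlog : Tendsto (fun x => Real.log x + (Real.log α + Real.log β) / 2) atTop atTop :=
    tendsto_atTop_add_const_right _ _ Real.tendsto_log_atTop
  refine ⟨c * α, mul_pos hc hα, ?_⟩
  filter_upwards [hlog.eventually hL, eventually_gt_atTop 0] with x hx hx0
  have hαx : 0 < α * x := mul_pos hα hx0
  calc c * α * x = c * (α * x) := mul_assoc _ _ _
    _ ≤ (∑ n ∈ Finset.Ioc ⌊α * x⌋₊ ⌊β * x⌋₊, a n / n) * (α * x) := by
        gcongr
        refine hx _ fun n hn hn0 => ?_
        have hn0' : (0 : ℝ) < n := Nat.cast_pos.2 (Nat.pos_of_ne_zero hn0)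
        rw [Finset.mem_Ioc, Nat.floor_lt hαx.le, Nat.le_floor_iff (by positivity), not_and_or,
          not_lt, not_le] at hn
        rcases hn with hn | hn
        · have := Real.log_le_log hn0' hn
          rw [Real.log_mul hα.ne' hx0.ne'] at this
          exact le_abs.2 (Or.inr (by linarith))
        · have := Real.log_le_log (by positivity) hn.le
          rw [Real.log_mul hβ.ne' hx0.ne'] at this
          exact le_abs.2 (Or.inl (by linarith))
    _ ≤ ∑ n ∈ Finset.Ioc ⌊α * x⌋₊ ⌊β * x⌋₊, a n := by
        rw [Finset.sum_mul]
        refine Finset.sum_le_sum fun n hn => ?_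
        have hn' := (Nat.floor_lt hαx.le).1 (Finset.mem_Ioc.1 hn).1
        rw [div_mul_eq_mul_div]
        exact div_le_of_le_mul₀ n.cast_nonneg (ha n)
          (mul_le_mul_of_nonneg_left hn'.le (ha n))

end Real

end WienerIkeharaHypothesis

end Tauberian

section PrimeNumbers

open scoped ArithmeticFunction.vonMangoldt

lemma wienerIkeharaHypothesis_vonMangoldt :
    WienerIkeharaHypothesis (fun n => (Λ n : ℂ)) (1 : ℝ)
      (ArithmeticFunction.vonMangoldt.LFunctionResidueClassAux (1 : ZMod 1)) where
  summable s hs := ArithmeticFunction.LSeriesSummable_vonMangoldt hs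
  lseries_eq s hs := by
    have hres : ArithmeticFunction.vonMangoldt.residueClass (1 : ZMod 1) = fun n => Λ n := by
      funext n
      simp [ArithmeticFunction.vonMangoldt.residueClass, Subsingleton.elim _ (1 : ZMod 1)]
    have haux := ArithmeticFunction.vonMangoldt.eqOn_LFunctionResidueClassAux
      (a := (1 : ZMod 1)) isUnit_one hs
    simp [haux, hres]
  continuousOn := ArithmeticFunction.vonMangoldt.continuousOn_LFunctionResidueClassAux _

variable {α β : ℝ}

lemma eventually_mul_le_psi_sub_psi (hα : 0 < α) (hαβ : α < β) :
    ∃ c : ℝ, 0 < c ∧ ∀ᶠ x : ℝ in atTop,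
      c * x ≤ Chebyshev.psi (β * x) - Chebyshev.psi (α * x) := by
  obtain ⟨c, hc, hsum⟩ := wienerIkeharaHypothesis_vonMangoldt.eventually_mul_le_sum_Ioc
    (fun _ => ArithmeticFunction.vonMangoldt_nonneg) one_pos hα hαβ
  refine ⟨c, hc, ?_⟩
  filter_upwards [hsum, eventually_ge_atTop 0] with x hx hx0
  rwa [Chebyshev.psi, Chebyshev.psi, ← Finset.sum_Ioc_consecutive _ (Nat.zero_le ⌊α * x⌋₊)
    (Nat.floor_le_floor (by gcongr)), add_sub_cancel_left]

lemma eventually_mul_le_theta_sub_theta (hα : 0 < α) (hαβ : α < β) :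
    ∃ c : ℝ, 0 < c ∧ ∀ᶠ x : ℝ in atTop,
      c * x ≤ Chebyshev.theta (β * x) - Chebyshev.theta (α * x) := by
  obtain ⟨c, hc, hpsi⟩ := eventually_mul_le_psi_sub_psi hα hαβ
  obtain ⟨C, hC⟩ := Chebyshev.psi_sub_theta_le_mul_sqrt
  refine ⟨c / 2, half_pos hc, ?_⟩
  filter_upwards [hpsi, (Real.tendsto_sqrt_atTop.const_mul_atTop (half_pos hc)).eventually_ge_atTop
    (C * √β), eventually_ge_atTop 0] with x hx hCx hx0
  have hsqrt : C * √(β * x) ≤ c / 2 * x := calc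
    C * √(β * x) = C * √β * √x := by rw [Real.sqrt_mul (hα.trans hαβ).le, mul_assoc]
    _ ≤ c / 2 * √x * √x := by gcongr
    _ = c / 2 * x := by rw [mul_assoc, Real.mul_self_sqrt hx0]
  linarith [hC (β * x), Chebyshev.theta_le_psi (α * x)]

lemma theta_sub_theta_le {a b : ℝ} (hab : a ≤ b) :
    Chebyshev.theta b - Chebyshev.theta a ≤
      ((Nat.primeCounting ⌊b⌋₊ : ℝ) - Nat.primeCounting ⌊a⌋₊) * Real.log b := by
  have hsub : Nat.primesLE ⌊a⌋₊ ⊆ Nat.primesLE ⌊b⌋₊ := Nat.primesLE_mono (Nat.floor_le_floor hab)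
  rw [Chebyshev.theta_eq_sum_primesLE, Chebyshev.theta_eq_sum_primesLE,
    ← Nat.primesLE_card_eq_primeCounting, ← Nat.primesLE_card_eq_primeCounting,
    ← Finset.sum_sdiff_eq_sub hsub, ← Finset.cast_card_sdiff hsub, ← nsmul_eq_mul]
  refine Finset.sum_le_card_nsmul _ _ _ fun p hp => ?_
  have hp := Nat.mem_primesLE.1 (Finset.mem_sdiff.1 hp).1
  exact Real.log_le_log (Nat.cast_pos.2 hp.2.pos) ((Nat.le_floor_iff' hp.2.ne_zero).1 hp.1)

lemma eventually_primeCounting_le_mul (hα : 0 < α) (hαβ : α < β) :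
    ∃ δ : ℝ, 0 < δ ∧ ∀ᶠ x : ℝ in atTop,
      (Nat.primeCounting ⌊α * x⌋₊ : ℝ) ≤ (1 - δ) * Nat.primeCounting ⌊β * x⌋₊ := by
  have hβ : 0 < β := hα.trans hαβ
  have hβx : Tendsto (fun x : ℝ => β * x) atTop atTop := tendsto_id.const_mul_atTop hβ
  have hK : 0 < (Real.log 4 + 1) * β :=
    mul_pos (add_pos (Real.log_pos (by norm_num)) one_pos) hβ
  obtain ⟨c, hc, htheta⟩ := eventually_mul_le_theta_sub_theta hα hαβ
  refine ⟨c / ((Real.log 4 + 1) * β), div_pos hc hK, ?_⟩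
  filter_upwards [htheta, hβx.eventually (Chebyshev.eventually_primeCounting_le (ε := 1) one_pos),
    hβx.eventually_gt_atTop 1, eventually_ge_atTop 0] with x hx hπ hβx1 hx0
  have hlog : 0 < Real.log (β * x) := Real.log_pos hβx1
  rw [le_div_iff₀ hlog] at hπ
  have hgap : c / ((Real.log 4 + 1) * β) * Nat.primeCounting ⌊β * x⌋₊ ≤
      Nat.primeCounting ⌊β * x⌋₊ - Nat.primeCounting ⌊α * x⌋₊ := by
    refine le_of_mul_le_mul_right ?_ hlog
    calc c / ((Real.log 4 + 1) * β) * Nat.primeCounting ⌊β * x⌋₊ * Real.log (β * x)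
        ≤ c / ((Real.log 4 + 1) * β) * ((Real.log 4 + 1) * (β * x)) := by
          rw [mul_assoc]
          gcongr
      _ = c * x := by field_simp
      _ ≤ Chebyshev.theta (β * x) - Chebyshev.theta (α * x) := hx
      _ ≤ _ := theta_sub_theta_le (by gcongr)
  linarith

lemma ncard_primes_le (n : ℕ) : {p : ℕ | p.Prime ∧ p ≤ n}.ncard = Nat.primeCounting n := by
  rw [← Nat.primesLE_card_eq_primeCounting, ← Set.ncard_coe_finset]
  congr 1
  ext p
  simp [Nat.mem_primesLE, and_comm]

/-- If `U`, with counting function `u`, misses `(αx, βx]`, then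
`u(βx) / π(βx) = u(αx) / π(βx) ≤ (1 - δ) u(αx) / π(αx)`, contradicting `(1 - δ) γ < γ`. -/
lemma eventually_exists_mem_of_tendsto_relativeDensity {U : Set ℕ} {γ : ℝ} (hγ : 0 < γ)
    (hU : Tendsto (fun n : ℕ => ({p ∈ U | p ≤ n}.ncard : ℝ) / ({p : ℕ | p.Prime ∧ p ≤ n}.ncard : ℝ))
      atTop (𝓝 γ)) (hα : 0 < α) (hαβ : α < β) :
    ∀ᶠ x : ℝ in atTop, ∃ u ∈ U, α * x < u ∧ u ≤ β * x := by
  simp only [ncard_primes_le] at hU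
  obtain ⟨δ, hδ, hπ⟩ := eventually_primeCounting_le_mul hα hαβ
  have hfloor {c : ℝ} (hc : 0 < c) : Tendsto (fun x : ℝ => ⌊c * x⌋₊) atTop atTop :=
    tendsto_nat_floor_atTop.comp (tendsto_id.const_mul_atTop hc)
  have hlt := ((hU.comp (hfloor hα)).const_mul (1 - δ)).eventually_lt
    (hU.comp (hfloor (hα.trans hαβ))) (by nlinarith)
  filter_upwards [hlt, hπ, (hfloor hα).eventually_ge_atTop 2] with x hx hπx hx2
  have hπα : (0 : ℝ) < Nat.primeCounting ⌊α * x⌋₊ :=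
    Nat.cast_pos.2 (zero_lt_one.trans_le (Nat.monotone_primeCounting hx2))
  have hπβ : (0 : ℝ) < Nat.primeCounting ⌊β * x⌋₊ := by
    refine Nat.cast_pos.2 (Nat.pos_of_ne_zero fun h0 => hπα.not_ge ?_)
    simpa [h0] using hπx
  by_contra! hgap
  have hsub : {p ∈ U | p ≤ ⌊β * x⌋₊} ⊆ {p ∈ U | p ≤ ⌊α * x⌋₊} := fun p hp => ⟨hp.1, by
    by_contra! hlt
    exact (hgap p hp.1 (Nat.lt_of_floor_lt hlt)).not_ge
      ((Nat.le_floor_iff' (Nat.ne_zero_of_lt hlt)).1 hp.2)⟩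
  have hcard : ({p ∈ U | p ≤ ⌊β * x⌋₊}.ncard : ℝ) ≤ {p ∈ U | p ≤ ⌊α * x⌋₊}.ncard :=
    Nat.cast_le.2 (Set.ncard_le_ncard hsub ((Set.finite_Iic _).subset fun _ hp => hp.2))
  refine hx.not_ge ?_
  calc ({p ∈ U | p ≤ ⌊β * x⌋₊}.ncard : ℝ) / Nat.primeCounting ⌊β * x⌋₊
      ≤ {p ∈ U | p ≤ ⌊α * x⌋₊}.ncard / Nat.primeCounting ⌊β * x⌋₊ := by gcongr
    _ = Nat.primeCounting ⌊α * x⌋₊ / Nat.primeCounting ⌊β * x⌋₊ *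
        ({p ∈ U | p ≤ ⌊α * x⌋₊}.ncard / Nat.primeCounting ⌊α * x⌋₊) := by field_simp
    _ ≤ (1 - δ) * ({p ∈ U | p ≤ ⌊α * x⌋₊}.ncard / Nat.primeCounting ⌊α * x⌋₊) := by
      gcongr
      exact (div_le_iff₀ hπβ).2 hπx

end PrimeNumbers

section Quotients

variable {U V : Set ℕ}

lemma infinite_of_Ioi_subset_closure_quotients
    (h : Set.Ioi (0 : ℝ) ⊆ closure {x : ℝ | ∃ u ∈ U, ∃ v ∈ V, x = (u : ℝ) / (v : ℝ)}) :
    V.Infinite := by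
  intro hV
  obtain ⟨N, hN⟩ := hV.bddAbove
  set Q := {x : ℝ | ∃ u ∈ U, ∃ v ∈ V, x = (u : ℝ) / (v : ℝ)}
  have hfin : (Set.Ioo 0 1 ∩ Q).Finite := by
    refine ((Set.finite_Iic N).image2 (fun u v : ℕ => (u : ℝ) / v) hV).subset ?_
    rintro _ ⟨⟨h0, h1⟩, u, -, v, hv, rfl⟩
    have hv0 : (0 : ℝ) < v := v.cast_nonneg.lt_of_ne' (div_ne_zero_iff.1 h0.ne').2
    have huv : u < v := Nat.cast_lt.1 ((div_lt_one hv0).1 h1)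
    exact ⟨u, huv.le.trans (hN hv), v, hv, rfl⟩
  refine Set.Ioo_infinite (zero_lt_one' ℝ) (hfin.subset fun x hx => ?_)
  exact hfin.isClosed.closure_subset (isOpen_Ioo.inter_closure ⟨hx, h hx.1⟩)

lemma Ioi_subset_closure_quotients_of_infinite
    (hU : ∀ α β : ℝ, 0 < α → α < β → ∀ᶠ x : ℝ in atTop, ∃ u ∈ U, α * x < u ∧ u ≤ β * x)
    (hV : V.Infinite) :
    Set.Ioi (0 : ℝ) ⊆ closure {x : ℝ | ∃ u ∈ U, ∃ v ∈ V, x = (u : ℝ) / (v : ℝ)} := by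
  intro x hx
  refine Metric.mem_closure_iff.2 fun ε hε => ?_
  have hv := tendsto_natCast_atTop_atTop.eventually
    (hU x (x + ε / 2) hx (lt_add_of_pos_right _ (half_pos hε)))
  obtain ⟨v, hvV, ⟨u, huU, hlo, hhi⟩, hv0⟩ :=
    ((Nat.frequently_atTop_iff_infinite.2 hV).and_eventually
      (hv.and (eventually_gt_atTop 0))).exists
  have hv0' : (0 : ℝ) < v := Nat.cast_pos.2 hv0
  refine ⟨u / v, ⟨u, huU, v, hvV, rfl⟩, ?_⟩
  rw [Real.dist_eq, abs_sub_lt_iff]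
  rw [← lt_div_iff₀ hv0'] at hlo
  rw [← div_le_iff₀ hv0'] at hhi
  constructor <;> linarith

end Quotients

theorem stmt_5_general (U V : Set ℕ) (γ : ℝ) (hγ : 0 < γ)
    (hU : Tendsto (fun n : ℕ => ({p ∈ U | p ≤ n}.ncard : ℝ) / ({p : ℕ | p.Prime ∧ p ≤ n}.ncard : ℝ))
      atTop (𝓝 γ)) :
    Set.Ioi (0 : ℝ) ⊆ closure {x : ℝ | ∃ u ∈ U, ∃ v ∈ V, x = (u : ℝ) / (v : ℝ)} ↔ V.Infinite :=
  ⟨infinite_of_Ioi_subset_closure_quotients,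
    Ioi_subset_closure_quotients_of_infinite fun _ _ hα hαβ =>
      eventually_exists_mem_of_tendsto_relativeDensity hγ hU hα hαβ⟩

/-- Theorem 3: if `U` is a set of primes with relative density `γ > 0`
(relative to the prime counting function) and `V ⊆ ℕ`, then
`U/V = {u/v : u ∈ U, v ∈ V}` is dense in the positive reals iff `V` is infinite. -/
theorem stmt_5 (U : Set ℕ) (hUP : ∀ p ∈ U, Nat.Prime p) (V : Set ℕ) (γ : ℝ) (hγ : 0 < γ)
    (hU : Filter.Tendsto
      (fun n : ℕ => ({p ∈ U | p ≤ n}.ncard : ℝ) / ({p : ℕ | Nat.Prime p ∧ p ≤ n}.ncard : ℝ))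
      Filter.atTop (nhds γ)) :
    (Set.Ioi (0 : ℝ) ⊆
        closure {x : ℝ | ∃ u ∈ U, ∃ v ∈ V, x = (u : ℝ) / (v : ℝ)}) ↔ V.Infinite := by
  exact stmt_5_general U V γ hγ hU
end

section
/- Let U be a subset of the set of prime numbers ℙ such that the relative density δ(U) exists and equals γ > 0. Then U is fractionally dense in ℝ_{>0}, i.e. the quotient set R(U) = {p/q : p, q ∈ U} is dense in the positive reals. -/
/-!
It suffices that, for every `r > 1`, the window `(x, r x]` meets `U` once `x` is large: choosing
`q ∈ U` large and then `p ∈ U` in `(a q, b q]` puts `p / q` in `(a, b]`. Since `U` has positive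
density, this in turn follows from a bound `π x ≤ (1 - c) * π (r x)` with `c > 0`, that is, from
the windows `(x, r x]` containing a positive proportion of the primes up to `r x`.

For that, only the lower-bound half of the Wiener–Ikehara theorem is needed. Because `-ζ'/ζ` minus
its pole extends continuously to `Re s = 1`, testing it against a triangle of half-width `l` and
using the Riemann–Lebesgue lemma shows that the mean of `Λ n / n` against the Fejér kernel
`K (log x - log n)` of bandwidth `l` stays bounded below. Chebyshev's upper bound makes the
contribution of `|log x - log n| ≥ ε` to this mean `O(1 / l)`, so for `l` large the lower bound must
come from the window `|log x - log n| < ε`.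
-/

open Filter MeasureTheory Set Topology
open Complex (I)

section FejerKernel

/-- The Fejér kernel of bandwidth `l`, normalised as the Fourier transform of the triangle function
`t ↦ 1 - |t| / l` on `[-l, l]` (see `fejerMean_exp`). -/
noncomputable def fejerKernel (l u : ℝ) : ℝ := l * Real.sinc (l * u / 2) ^ 2

variable {l : ℝ}

lemma fejerKernel_nonneg (hl : 0 ≤ l) (u : ℝ) : 0 ≤ fejerKernel l u :=
  mul_nonneg hl (sq_nonneg _)

lemma fejerKernel_le (hl : 0 ≤ l) (u : ℝ) : fejerKernel l u ≤ l :=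
  mul_le_of_le_one_right hl ((sq_le_one_iff_abs_le_one _).mpr (Real.abs_sinc_le_one _))

lemma continuous_fejerKernel (l : ℝ) : Continuous (fejerKernel l) :=
  continuous_const.mul ((Real.continuous_sinc.comp (by fun_prop)).pow 2)

lemma fejerKernel_of_ne_zero {u : ℝ} (hl : l ≠ 0) (hu : u ≠ 0) :
    fejerKernel l u = 4 * Real.sin (l * u / 2) ^ 2 / (l * u ^ 2) := by
  rw [fejerKernel, Real.sinc_of_ne_zero (by positivity)]
  field

lemma fejerKernel_le_div_sq (hl : 0 < l) {u : ℝ} (hu : u ≠ 0) :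
    fejerKernel l u ≤ 4 / (l * u ^ 2) := by
  rw [fejerKernel_of_ne_zero hl.ne' hu]
  gcongr
  linarith [Real.sin_sq_le_one (l * u / 2)]

lemma fejerKernel_le_of_le_abs (hl : 0 < l) {ε u : ℝ} (hε : 0 < ε) (hu : ε ≤ |u|) :
    fejerKernel l u ≤ 4 / l * (1 + 1 / ε ^ 2) / (1 + u ^ 2) := by
  have hu0 : u ≠ 0 := abs_pos.mp (hε.trans_le hu)
  have hsq : 1 ≤ u ^ 2 / ε ^ 2 := by
    rw [one_le_div (by positivity), ← sq_abs u]
    gcongr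
  calc fejerKernel l u ≤ 4 / (l * u ^ 2) := fejerKernel_le_div_sq hl hu0
    _ = 4 / l * (1 + u ^ 2) / u ^ 2 / (1 + u ^ 2) := by field
    _ ≤ 4 / l * (u ^ 2 / ε ^ 2 + u ^ 2) / u ^ 2 / (1 + u ^ 2) := by gcongr
    _ = 4 / l * (1 + 1 / ε ^ 2) / (1 + u ^ 2) := by field

lemma two_div_pi_le_sinc {x : ℝ} (hx : |x| ≤ Real.pi / 2) : 2 / Real.pi ≤ Real.sinc x := by
  wlog h0 : 0 ≤ x generalizing x
  · simpa only [Real.sinc_neg] using this (x := -x) (by rwa [abs_neg]) (by linarith)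
  rcases h0.eq_or_lt with rfl | hpos
  · rw [Real.sinc_zero, div_le_one Real.pi_pos]
    exact Real.two_le_pi
  · rw [Real.sinc_of_ne_zero hpos.ne', le_div_iff₀ hpos]
    exact Real.mul_le_sin h0 (abs_of_pos hpos ▸ hx)

lemma le_fejerKernel (hl : 0 < l) {u : ℝ} (hu : |u| ≤ 1 / l) : 2 / 5 * l ≤ fejerKernel l u := by
  have hlu : |l * u / 2| ≤ Real.pi / 2 := by
    rw [abs_div, abs_mul, abs_of_pos hl, abs_two]
    gcongr
    calc l * |u| ≤ l * (1 / l) := by gcongr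
      _ = 1 := mul_one_div_cancel hl.ne'
      _ ≤ Real.pi := by linarith [Real.pi_gt_three]
  calc 2 / 5 * l ≤ (2 / Real.pi) ^ 2 * l := by
        gcongr
        rw [div_pow, div_le_div_iff₀ (by norm_num) (by positivity)]
        nlinarith [Real.pi_lt_d2, Real.pi_pos]
    _ ≤ Real.sinc (l * u / 2) ^ 2 * l := by
        gcongr
        exact two_div_pi_le_sinc hlu
    _ = fejerKernel l u := mul_comm _ _

end FejerKernel

section FejerMean

/-- The Fejér mean at `T`: the Fourier transform at `T` of `F` cut off by the triangle
function on `[-l, l]`. -/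
noncomputable def fejerMean (l T : ℝ) (F : ℝ → ℂ) : ℂ :=
  ∫ t in -l..l, ((1 - |t| / l : ℝ) : ℂ) * Complex.exp (t * T * I) * F t

variable {l : ℝ}

lemma integral_triangle_mul_cos (hl : l ≠ 0) {u : ℝ} (hu : u ≠ 0) :
    ∫ t in (0 : ℝ)..l, (1 - t / l) * Real.cos (t * u) = (1 - Real.cos (l * u)) / (l * u ^ 2) := by
  have hderiv (t : ℝ) : HasDerivAt
      (fun t ↦ (1 - t / l) * (Real.sin (t * u) / u) - Real.cos (t * u) / (l * u ^ 2))
      ((1 - t / l) * Real.cos (t * u)) t := by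
    have htu : HasDerivAt (fun t ↦ t * u) u t := by simpa using (hasDerivAt_id t).mul_const u
    have htl : HasDerivAt (fun t ↦ 1 - t / l) (-(1 / l)) t :=
      ((hasDerivAt_id t).div_const l).const_sub 1
    convert! (htl.mul (htu.sin.div_const u)).sub (htu.cos.div_const (l * u ^ 2)) using 1
    field
  rw [intervalIntegral.integral_eq_sub_of_hasDerivAt (fun t _ ↦ hderiv t)
    (Continuous.intervalIntegrable (by fun_prop) _ _)]
  simp only [div_self hl, sub_self, zero_mul, zero_div, Real.sin_zero, Real.cos_zero, mul_zero]
  ring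

lemma two_mul_integral_triangle_mul_cos (hl : l ≠ 0) (u : ℝ) :
    2 * ∫ t in (0 : ℝ)..l, (1 - t / l) * Real.cos (t * u) = fejerKernel l u := by
  rcases eq_or_ne u 0 with rfl | hu
  · simp only [mul_zero, Real.cos_zero, mul_one, fejerKernel, zero_div, Real.sinc_zero, one_pow]
    rw [intervalIntegral.integral_sub intervalIntegrable_const
      (Continuous.intervalIntegrable (by fun_prop) _ _), intervalIntegral.integral_div,
      integral_id, intervalIntegral.integral_const, smul_eq_mul]
    field
  · have hcos : Real.cos (l * u) = 1 - 2 * Real.sin (l * u / 2) ^ 2 := by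
      rw [← mul_div_cancel₀ (l * u) two_ne_zero, Real.cos_two_mul, Real.cos_sq']
      ring_nf
    rw [integral_triangle_mul_cos hl hu, fejerKernel_of_ne_zero hl hu, hcos]
    ring

lemma fejerMean_one (hl : 0 < l) (u : ℝ) : fejerMean l u 1 = fejerKernel l u := by
  set f : ℝ → ℂ := fun t ↦ ((1 - |t| / l : ℝ) : ℂ) * Complex.exp (t * u * I) with hf
  have hfc : Continuous f := by fun_prop
  have hfold (t : ℝ) (ht : 0 ≤ t) :
      f (-t) + f t = ((2 * ((1 - t / l) * Real.cos (t * u)) : ℝ) : ℂ) := by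
    simp only [hf, abs_neg, abs_of_nonneg ht]
    push_cast
    rw [Complex.cos]
    ring_nf
  calc fejerMean l u 1 = ∫ t in -l..l, f t := by simp only [fejerMean, Pi.one_apply, mul_one, hf]
    _ = (∫ t in (0 : ℝ)..l, f (-t)) + ∫ t in (0 : ℝ)..l, f t := by
        rw [intervalIntegral.integral_comp_neg, neg_zero,
          intervalIntegral.integral_add_adjacent_intervals] <;>
        exact hfc.intervalIntegrable _ _
    _ = ∫ t in (0 : ℝ)..l, ((2 * ((1 - t / l) * Real.cos (t * u)) : ℝ) : ℂ) := by
        rw [← intervalIntegral.integral_add (Continuous.intervalIntegrable (by fun_prop) _ _)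
          (hfc.intervalIntegrable _ _)]
        refine intervalIntegral.integral_congr fun t ht ↦ hfold t ?_
        exact (uIcc_of_le hl.le ▸ ht).1
    _ = fejerKernel l u := by
        rw [intervalIntegral.integral_ofReal, intervalIntegral.integral_const_mul,
          two_mul_integral_triangle_mul_cos hl.ne']

lemma fejerMean_exp (hl : 0 < l) (T v : ℝ) :
    fejerMean l T (fun t ↦ Complex.exp (-(t * v * I))) = fejerKernel l (T - v) := by
  rw [← fejerMean_one hl, fejerMean, fejerMean]
  refine intervalIntegral.integral_congr fun t _ ↦ ?_
  simp only [Pi.one_apply, mul_one]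
  rw [mul_assoc, ← Complex.exp_add]
  push_cast
  ring_nf

lemma fejerMean_add {F G : ℝ → ℂ} (hF : Continuous F) (hG : Continuous G) (l T : ℝ) :
    fejerMean l T (fun t ↦ F t + G t) = fejerMean l T F + fejerMean l T G := by
  simp only [fejerMean, mul_add]
  exact intervalIntegral.integral_add (Continuous.intervalIntegrable (by fun_prop) _ _)
    (Continuous.intervalIntegrable (by fun_prop) _ _)

lemma fejerMean_const_mul (l T : ℝ) (c : ℂ) (F : ℝ → ℂ) :
    fejerMean l T (fun t ↦ c * F t) = c * fejerMean l T F := by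
  simp only [fejerMean, mul_left_comm _ c, intervalIntegral.integral_const_mul]

lemma continuous_fejerMean {X : Type*} [TopologicalSpace X] {F : X → ℝ → ℂ}
    (hF : Continuous F.uncurry) (l T : ℝ) : Continuous fun x ↦ fejerMean l T (F x) := by
  refine intervalIntegral.continuous_parametric_intervalIntegral_of_continuous' ?_ _ _
  have : Continuous fun p : X × ℝ ↦ F p.1 p.2 := hF
  simp only [Function.uncurry_def]
  fun_prop

lemma tendsto_fejerMean_atTop (hl : 0 ≤ l) (F : ℝ → ℂ) :
    Tendsto (fun T ↦ fejerMean l T F) atTop (𝓝 0) := by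
  have hscale : Tendsto (fun T : ℝ ↦ -(T / (2 * Real.pi))) atTop (cocompact ℝ) :=
    (tendsto_neg_atTop_atBot.comp (tendsto_id.atTop_div_const Real.two_pi_pos)).mono_right
      atBot_le_cocompact
  refine ((Real.tendsto_integral_exp_smul_cocompact ((Ioc (-l) l).indicator
    fun t ↦ ((1 - |t| / l : ℝ) : ℂ) * F t)).comp hscale).congr fun T ↦ ?_
  rw [fejerMean, intervalIntegral.integral_of_le (by linarith),
    ← integral_indicator measurableSet_Ioc]
  refine integral_congr_ae (.of_forall fun t ↦ ?_)
  have hphase : 2 * Real.pi * -(t * -(T / (2 * Real.pi))) = t * T := by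
    field
  simp only [Circle.smul_def, Real.fourierChar_apply, hphase, smul_eq_mul]
  by_cases ht : t ∈ Ioc (-l) l
  · simp only [indicator_of_mem ht]
    push_cast
    ring
  · simp only [indicator_of_notMem ht, mul_zero]

variable {X : Type*} [MeasurableSpace X] {μ : Measure X}

lemma integrable_mul_fejerKernel {w φ : X → ℝ} (hw : Integrable w μ)
    (hφ : Measurable φ) (hl : 0 ≤ l) : Integrable (fun x ↦ w x * fejerKernel l (φ x)) μ :=
  hw.mul_bdd ((continuous_fejerKernel l).measurable.comp hφ).aestronglyMeasurable
    (.of_forall fun x ↦ by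
      rw [Real.norm_of_nonneg (fejerKernel_nonneg hl _)]
      exact fejerKernel_le hl _)

lemma fejerMean_integral [SFinite μ] {w φ : X → ℝ} (hw : Integrable w μ) (hφ : Measurable φ)
    (hl : 0 < l) (T : ℝ) :
    fejerMean l T (fun t ↦ ∫ x, w x * Complex.exp (-(t * φ x * I)) ∂μ) =
      ((∫ x, w x * fejerKernel l (T - φ x) ∂μ : ℝ) : ℂ) := by
  have hint : Integrable (Function.uncurry fun (t : ℝ) (x : X) ↦ ((1 - |t| / l : ℝ) : ℂ) *
      Complex.exp (t * T * I) * (w x * Complex.exp (-(t * φ x * I))))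
      ((volume.restrict (uIoc (-l) l)).prod μ) := by
    have htri : IntegrableOn (fun t : ℝ ↦ ((1 - |t| / l : ℝ) : ℂ) * Complex.exp (t * T * I))
        (uIoc (-l) l) :=
      (Continuous.integrableOn_uIcc (by fun_prop)).mono_set uIoc_subset_uIcc
    refine ((htri.mul_prod hw.ofReal).mul_bdd (c := 1)
      (g := fun p ↦ Complex.exp (-(p.1 * φ p.2 * I))) (by fun_prop)
      (.of_forall fun p ↦ ?_)).congr (.of_forall fun p ↦ ?_)
    · simp [Complex.norm_exp]
    · simp only [Function.uncurry_def]
      exact mul_assoc _ _ _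
  calc _ = ∫ t in -l..l, ∫ x, ((1 - |t| / l : ℝ) : ℂ) * Complex.exp (t * T * I) *
          (w x * Complex.exp (-(t * φ x * I))) ∂μ := by
        simp only [fejerMean, integral_const_mul]
    _ = ∫ x, fejerMean l T (fun t ↦ w x * Complex.exp (-(t * φ x * I))) ∂μ :=
        intervalIntegral_integral_swap hint
    _ = ∫ x, ((w x * fejerKernel l (T - φ x) : ℝ) : ℂ) ∂μ := by
        simp only [fejerMean_const_mul, fejerMean_exp hl, Complex.ofReal_mul]
    _ = _ := integral_complex_ofReal

end FejerMean

section Tail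

lemma sum_mul_comp_le_mul_tsum {ι κ : Type*} [DecidableEq κ] {s : Finset ι} {b : ι → ℝ}
    {f : ι → κ} {h : κ → ℝ} {B : ℝ} (hB : 0 ≤ B) (hb : ∀ j, ∑ i ∈ s with f i = j, b i ≤ B)
    (h_nonneg : ∀ j, 0 ≤ h j) (h_summable : Summable h) :
    ∑ i ∈ s, b i * h (f i) ≤ B * ∑' j, h j :=
  calc ∑ i ∈ s, b i * h (f i)
      = ∑ j ∈ s.image f, ∑ i ∈ s with f i = j, b i * h (f i) :=
        (Finset.sum_fiberwise_of_maps_to (fun _ hi ↦ Finset.mem_image_of_mem f hi) _).symm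
    _ = ∑ j ∈ s.image f, (∑ i ∈ s with f i = j, b i) * h j := by
        refine Finset.sum_congr rfl fun j _ ↦ ?_
        rw [Finset.sum_mul]
        exact Finset.sum_congr rfl fun i hi ↦ by rw [(Finset.mem_filter.mp hi).2]
    _ ≤ ∑ j ∈ s.image f, B * h j := by
        gcongr with j
        exacts [h_nonneg j, hb j]
    _ ≤ B * ∑' j, h j := by
        rw [← Finset.mul_sum]
        gcongr
        exact h_summable.sum_le_tsum _ fun j _ ↦ h_nonneg j

lemma summable_int_one_div_one_add_sq : Summable fun j : ℤ ↦ 1 / (1 + (j : ℝ) ^ 2) := by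
  refine (Real.summable_one_div_int_pow.mpr one_lt_two).of_norm_bounded_eventually ?_
  filter_upwards [(finite_singleton (0 : ℤ)).compl_mem_cofinite] with j hj
  have : (j : ℝ) ≠ 0 := Int.cast_ne_zero.mpr hj
  rw [Real.norm_of_nonneg (by positivity)]
  gcongr
  linarith

lemma one_div_one_add_sq_le_floor (u : ℝ) :
    1 / (1 + u ^ 2) ≤ 3 * (1 / (1 + (⌊u⌋ : ℝ) ^ 2)) := by
  have hfract : (u - ⌊u⌋) ^ 2 ≤ 1 :=
    pow_le_one₀ (sub_nonneg.mpr (Int.floor_le u)) (by linarith [Int.lt_floor_add_one u])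
  rw [mul_one_div, div_le_div_iff₀ (by positivity) (by positivity)]
  nlinarith [sq_nonneg (2 * u - ⌊u⌋)]

variable {a : ℕ → ℝ} {C : ℝ}

lemma sum_div_le_of_sum_Icc_le (ha : ∀ n, 0 ≤ a n)
    (hC : ∀ n : ℕ, ∑ k ∈ Finset.Icc 1 n, a k ≤ C * n) {x y : ℝ} (hx : 0 < x) (hy : 0 ≤ y)
    {s : Finset ℕ} (hs : ∀ n ∈ s, x ≤ n ∧ (n : ℝ) ≤ y) :
    ∑ n ∈ s, a n / n ≤ C * y / x := by
  have hC0 : 0 ≤ C := (ha 1).trans (by simpa using hC 1)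
  have hsub : s ⊆ Finset.Icc 1 ⌊y⌋₊ := fun n hn ↦ Finset.mem_Icc.mpr
    ⟨Nat.cast_pos.mp (hx.trans_le (hs n hn).1), Nat.le_floor (hs n hn).2⟩
  calc ∑ n ∈ s, a n / n ≤ ∑ n ∈ s, a n / x := by
        gcongr with n hn
        exacts [ha n, (hs n hn).1]
    _ = (∑ n ∈ s, a n) / x := (Finset.sum_div _ _ _).symm
    _ ≤ (∑ n ∈ Finset.Icc 1 ⌊y⌋₊, a n) / x := by
        gcongr
        exact fun n _ _ ↦ ha n
    _ ≤ C * ⌊y⌋₊ / x := by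
        gcongr
        exact hC _
    _ ≤ C * y / x := by
        gcongr
        exact Nat.floor_le hy

/-- Cutting the sum into blocks where `⌊log n - T⌋` is constant, each block is at most `C * e`. -/
lemma exists_sum_div_mul_le (ha : ∀ n, 0 ≤ a n)
    (hC : ∀ n : ℕ, ∑ k ∈ Finset.Icc 1 n, a k ≤ C * n) :
    ∃ M, 0 ≤ M ∧ ∀ (T : ℝ) (s : Finset ℕ),
      ∑ n ∈ s, a n / n * (1 / (1 + (T - Real.log n) ^ 2)) ≤ M := by
  have hC0 : 0 ≤ C := (ha 1).trans (by simpa using hC 1)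
  set S := ∑' j : ℤ, 3 * (1 / (1 + (j : ℝ) ^ 2))
  refine ⟨C * Real.exp 1 * S, mul_nonneg (by positivity) (tsum_nonneg fun j ↦ by positivity),
    fun T s ↦ ?_⟩
  have hblock (j : ℤ) :
      ∑ n ∈ s.erase 0 with ⌊Real.log (n : ℕ) - T⌋ = j, a n / n ≤ C * Real.exp 1 := by
    refine (sum_div_le_of_sum_Icc_le ha hC (Real.exp_pos (T + j)) (Real.exp_nonneg (T + j + 1))
      fun n hn ↦ ?_).trans_eq ?_
    · obtain ⟨hns, hnj⟩ := Finset.mem_filter.mp hn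
      have hn0 : (0 : ℝ) < n := Nat.cast_pos.mpr (Nat.pos_of_ne_zero (Finset.ne_of_mem_erase hns))
      rw [Int.floor_eq_iff] at hnj
      rw [← Real.le_log_iff_exp_le hn0, ← Real.log_le_iff_le_exp hn0]
      constructor <;> linarith
    · rw [Real.exp_add _ 1]
      field
  calc ∑ n ∈ s, a n / n * (1 / (1 + (T - Real.log n) ^ 2))
      = ∑ n ∈ s.erase 0, a n / n * (1 / (1 + (T - Real.log n) ^ 2)) :=
        (Finset.sum_erase s (by simp)).symm
    _ ≤ ∑ n ∈ s.erase 0, a n / n * (3 * (1 / (1 + (⌊Real.log n - T⌋ : ℝ) ^ 2))) := by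
        gcongr with n
        · exact div_nonneg (ha n) n.cast_nonneg
        · rw [← neg_sub, neg_sq]
          exact one_div_one_add_sq_le_floor _
    _ ≤ C * Real.exp 1 * S :=
        sum_mul_comp_le_mul_tsum (by positivity) hblock (fun j ↦ by positivity)
          (summable_int_one_div_one_add_sq.mul_left 3)

end Tail

section Tauberian

variable {a : ℕ → ℝ} {A C l δ : ℝ}

lemma summable_div_rpow_of_sum_Icc_le (ha : ∀ n, 0 ≤ a n)
    (hC : ∀ n : ℕ, ∑ k ∈ Finset.Icc 1 n, a k ≤ C * n) (hδ : 0 < δ) :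
    Summable fun n : ℕ ↦ a n / n ^ (1 + δ) := by
  have hO : (fun n : ℕ ↦ ∑ k ∈ Finset.Icc 1 n, a k) =O[atTop] fun n : ℕ ↦ (n : ℝ) ^ (1 : ℝ) := by
    refine .of_bound C (.of_forall fun n ↦ ?_)
    simpa [abs_of_nonneg (Finset.sum_nonneg fun k _ ↦ ha k)] using hC n
  have hs := (LSeriesSummable_of_sum_norm_bigO_and_nonneg (s := ((1 + δ : ℝ) : ℂ)) hO ha
    zero_le_one (by simpa using hδ)).norm
  refine hs.congr fun n ↦ ?_
  rw [LSeries.norm_term_eq, Complex.norm_of_nonneg (ha n), Complex.ofReal_re]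
  split_ifs with hn
  · simp [hn, Real.zero_rpow (by positivity : 1 + δ ≠ 0)]
  · rfl

lemma lSeries_eq_integral_count (hδ : 0 < δ) (hs : Summable fun n : ℕ ↦ a n / n ^ (1 + δ))
    (t : ℝ) : LSeries (fun n ↦ a n) (1 + δ + t * I) =
      ∫ n : ℕ, ((a n / n ^ (1 + δ) : ℝ) : ℂ) * Complex.exp (-(t * Real.log n * I)) ∂.count := by
  have hterm (n : ℕ) : LSeries.term (fun n ↦ a n) (1 + δ + t * I) n =
      ((a n / n ^ (1 + δ) : ℝ) : ℂ) * Complex.exp (-(t * Real.log n * I)) := by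
    rcases eq_or_ne n 0 with rfl | hn
    · simp [Real.zero_rpow (by positivity : 1 + δ ≠ 0)]
    · have hn' : (n : ℂ) ≠ 0 := Nat.cast_ne_zero.mpr hn
      rw [LSeries.term_of_ne_zero hn, Complex.cpow_add _ _ hn', Complex.exp_neg,
        Complex.cpow_def_of_ne_zero hn' (t * I), Complex.ofReal_div,
        Complex.ofReal_cpow n.cast_nonneg, Complex.natCast_log]
      push_cast
      rw [div_mul_eq_div_div, ← div_eq_mul_inv]
      ring_nf
  rw [integral_countable]
  · simp [LSeries, hterm]
  · refine integrable_count_iff.mpr (hs.norm.congr fun n ↦ ?_)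
    simp [Complex.norm_exp, Complex.log_im]

lemma one_div_add_mul_I_eq_integral (hδ : 0 < δ) (t : ℝ) :
    1 / (δ + t * I) =
      ∫ u in Ioi (0 : ℝ), (Real.exp (-δ * u) : ℂ) * Complex.exp (-(t * u * I)) := by
  have hre : (-(δ + t * I)).re < 0 := by simpa using hδ
  calc 1 / (δ + t * I) = ∫ u in Ioi (0 : ℝ), Complex.exp (-(δ + t * I) * u) := by
        rw [integral_exp_mul_complex_Ioi hre]
        rw [Complex.ofReal_zero, mul_zero, Complex.exp_zero, neg_div_neg_eq]
    _ = _ := by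
        refine integral_congr_ae (.of_forall fun u ↦ ?_)
        dsimp only
        rw [Complex.ofReal_exp, ← Complex.exp_add]
        push_cast
        ring_nf

lemma tsum_mul_fejerKernel_eq (hδ : 0 < δ) (hs : Summable fun n : ℕ ↦ a n / n ^ (1 + δ))
    (hl : 0 < l) {F : ℝ → ℂ} (hF : Continuous F)
    (haF : ∀ t : ℝ, LSeries (fun n ↦ a n) (1 + δ + t * I) = A * (1 / (δ + t * I)) + F t) (T : ℝ) :
    ((∑' n : ℕ, a n / n ^ (1 + δ) * fejerKernel l (T - Real.log n) : ℝ) : ℂ) =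
      A * (∫ u in Ioi (0 : ℝ), Real.exp (-δ * u) * fejerKernel l (T - u) : ℝ) +
        fejerMean l T F := by
  have hcount : Integrable (fun n : ℕ ↦ a n / n ^ (1 + δ)) .count :=
    integrable_count_iff.mpr hs.norm
  have hpole : Continuous fun t : ℝ ↦ (A : ℂ) * (1 / (δ + t * I)) := by
    refine continuous_const.mul (continuous_const.div (by fun_prop) fun t h ↦ hδ.ne' ?_)
    simpa using congrArg Complex.re h
  calc ((∑' n : ℕ, a n / n ^ (1 + δ) * fejerKernel l (T - Real.log n) : ℝ) : ℂ)
      = fejerMean l T fun t ↦ LSeries (fun n ↦ a n) (1 + δ + t * I) := by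
        simp only [lSeries_eq_integral_count hδ hs]
        rw [fejerMean_integral hcount (φ := fun n : ℕ ↦ Real.log n) (by fun_prop) hl,
          integral_countable]
        · simp
        · exact integrable_mul_fejerKernel hcount (by fun_prop) hl.le
    _ = A * fejerMean l T (fun t ↦ 1 / (δ + t * I)) + fejerMean l T F := by
        simp only [haF, fejerMean_add hpole hF, fejerMean_const_mul]
    _ = _ := by
        simp only [one_div_add_mul_I_eq_integral hδ]
        rw [fejerMean_integral (exp_neg_integrableOn_Ioi 0 hδ) (φ := fun u ↦ u) (by fun_prop) hl]

lemma one_fourth_le_integral_exp_mul_fejerKernel (hl : 0 < l) (hδ : 0 < δ) {T : ℝ}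
    (hT : 1 / l < T) (hδT : δ * (T + 1 / l) ≤ 1) :
    1 / 4 ≤ ∫ u in Ioi (0 : ℝ), Real.exp (-δ * u) * fejerKernel l (T - u) := by
  have hint : IntegrableOn (fun u ↦ Real.exp (-δ * u) * fejerKernel l (T - u)) (Ioi 0) :=
    integrable_mul_fejerKernel (exp_neg_integrableOn_Ioi 0 hδ) (by fun_prop) hl.le
  have hsub : Icc (T - 1 / l) (T + 1 / l) ⊆ Ioi 0 := fun u hu ↦ (sub_pos.mpr hT).trans_le hu.1
  have hlow : ∀ u ∈ Icc (T - 1 / l) (T + 1 / l),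
      Real.exp (-1) * (2 / 5 * l) ≤ Real.exp (-δ * u) * fejerKernel l (T - u) := by
    intro u hu
    have hker : 2 / 5 * l ≤ fejerKernel l (T - u) :=
      le_fejerKernel hl (abs_le.mpr ⟨by linarith [hu.2], by linarith [hu.1]⟩)
    have hexp : δ * u ≤ 1 := (by gcongr; exact hu.2 : δ * u ≤ δ * (T + 1 / l)).trans hδT
    gcongr
    linarith
  calc (1 / 4 : ℝ) ≤ 4 / 5 * Real.exp (-1) := by linarith [Real.exp_neg_one_gt_d9]
    _ = ∫ _ in Icc (T - 1 / l) (T + 1 / l), Real.exp (-1) * (2 / 5 * l) := by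
        rw [setIntegral_const, Real.volume_real_Icc_of_le (by linarith [one_div_pos.mpr hl]),
          smul_eq_mul]
        field
    _ ≤ ∫ u in Icc (T - 1 / l) (T + 1 / l), Real.exp (-δ * u) * fejerKernel l (T - u) :=
        setIntegral_mono_on (integrableOn_const (by simp)) (hint.mono_set hsub) measurableSet_Icc
          hlow
    _ ≤ ∫ u in Ioi (0 : ℝ), Real.exp (-δ * u) * fejerKernel l (T - u) :=
        setIntegral_mono_set hint
          (.of_forall fun u ↦ mul_nonneg (Real.exp_nonneg _) (fejerKernel_nonneg hl.le _))
          hsub.eventuallyLE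

lemma eventually_exists_le_tsum_mul_fejerKernel (ha : ∀ n, 0 ≤ a n)
    (hC : ∀ n : ℕ, ∑ k ∈ Finset.Icc 1 n, a k ≤ C * n) (hA : 0 < A) {G : ℂ → ℂ}
    (hG : ContinuousOn G {s | 1 ≤ s.re})
    (hGa : ∀ s, 1 < s.re → G s = LSeries (fun n ↦ a n) s - A / (s - 1)) (hl : 0 < l) :
    ∀ᶠ T in atTop, ∃ δ : ℝ, 0 < δ ∧
      A / 8 ≤ ∑' n : ℕ, a n / n ^ (1 + δ) * fejerKernel l (T - Real.log n) := by
  set F : ℝ → ℝ → ℂ := fun δ t ↦ G (1 + (max δ 0 : ℝ) + t * I)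
  have hF : Continuous F.uncurry := by
    refine hG.comp_continuous (f := fun p : ℝ × ℝ ↦ (1 + (max p.1 0 : ℝ) + p.2 * I : ℂ))
      (by fun_prop) fun p ↦ ?_
    simp
  have hRL := (tendsto_fejerMean_atTop hl.le (F 0)).norm
  rw [norm_zero] at hRL
  filter_upwards [hRL.eventually_lt_const (by positivity : 0 < A / 8),
    eventually_gt_atTop (1 / l)] with T hT0 hT
  have hTl : 0 < T + 1 / l := by linarith [one_div_pos.mpr hl]
  have hsmall : ∀ᶠ δ in 𝓝[>] 0, ‖fejerMean l T (F δ)‖ < A / 8 :=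
    ((continuous_fejerMean hF l T).norm.continuousAt.eventually_lt_const hT0).filter_mono
      nhdsWithin_le_nhds
  obtain ⟨δ, hδF, hδ, hδT⟩ :=
    (hsmall.and (Ioc_mem_nhdsGT (by positivity : 0 < 1 / (T + 1 / l)))).exists
  refine ⟨δ, hδ, ?_⟩
  have hFδ (t : ℝ) :
      LSeries (fun n ↦ a n) (1 + δ + t * I) = A * (1 / (δ + t * I)) + F δ t := by
    simp only [F, max_eq_left hδ.le]
    rw [hGa _ (by simpa using hδ)]
    ring_nf
  have hsum := congrArg Complex.re <| tsum_mul_fejerKernel_eq hδ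
    (summable_div_rpow_of_sum_Icc_le ha hC hδ) hl (by fun_prop : Continuous (F δ)) hFδ T
  simp only [Complex.add_re, Complex.re_ofReal_mul, Complex.ofReal_re] at hsum
  have hmain := one_fourth_le_integral_exp_mul_fejerKernel hl hδ hT ((le_div_iff₀ hTl).mp hδT)
  have herr := (abs_le.mp ((Complex.abs_re_le_norm _).trans hδF.le)).1
  linarith [mul_le_mul_of_nonneg_left hmain hA.le]

lemma div_rpow_mul_fejerKernel_le (ha : ∀ n, 0 ≤ a n) (hδ : 0 ≤ δ) (hl : 0 < l) {ε : ℝ}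
    (hε : 0 < ε) (T : ℝ) (n : ℕ) :
    a n / n ^ (1 + δ) * fejerKernel l (T - Real.log n) ≤
      l * (if n ∈ Finset.Ioc ⌊Real.exp (T - ε)⌋₊ ⌊Real.exp (T + ε)⌋₊
        then a n / Real.exp (T - ε) else 0) +
      4 / l * (1 + 1 / ε ^ 2) * (a n / n * (1 / (1 + (T - Real.log n) ^ 2))) := by
  have han := ha n
  have hker := fejerKernel_nonneg hl.le (T - Real.log n)
  rcases eq_or_ne n 0 with rfl | hn
  · simp [Real.zero_rpow (by positivity : 1 + δ ≠ 0)]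
  have hn0 : (0 : ℝ) < n := by positivity
  have hn1 : (1 : ℝ) ≤ n := Nat.one_le_cast.mpr (Nat.one_le_iff_ne_zero.mpr hn)
  have hpow : (n : ℝ) ≤ (n : ℝ) ^ (1 + δ) := Real.self_le_rpow_of_one_le hn1 (by linarith)
  rcases lt_or_ge |T - Real.log n| ε with hnear | hfar
  · obtain ⟨hlo, hhi⟩ := abs_lt.mp hnear
    have hlt : Real.exp (T - ε) < n := (Real.lt_log_iff_exp_lt hn0).mp (by linarith)
    have hle : (n : ℝ) ≤ Real.exp (T + ε) := (Real.log_le_iff_le_exp hn0).mp (by linarith)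
    rw [if_pos (Finset.mem_Ioc.mpr
      ⟨(Nat.floor_lt (Real.exp_nonneg _)).mpr hlt, Nat.le_floor hle⟩)]
    refine le_add_of_le_of_nonneg ?_ (by positivity)
    calc a n / n ^ (1 + δ) * fejerKernel l (T - Real.log n) ≤ a n / Real.exp (T - ε) * l := by
          gcongr
          · exact hlt.le.trans hpow
          · exact fejerKernel_le hl.le _
      _ = l * (a n / Real.exp (T - ε)) := mul_comm _ _
  · refine le_add_of_nonneg_of_le (by positivity) ?_
    calc a n / n ^ (1 + δ) * fejerKernel l (T - Real.log n)
        ≤ a n / n * (4 / l * (1 + 1 / ε ^ 2) / (1 + (T - Real.log n) ^ 2)) := by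
          gcongr
          exact fejerKernel_le_of_le_abs hl hε hfar
      _ = _ := by ring

lemma tsum_mul_fejerKernel_le (ha : ∀ n, 0 ≤ a n) {M T : ℝ}
    (hM : ∀ s : Finset ℕ, ∑ n ∈ s, a n / n * (1 / (1 + (T - Real.log n) ^ 2)) ≤ M)
    (hδ : 0 ≤ δ) (hl : 0 < l) {ε : ℝ} (hε : 0 < ε) :
    ∑' n : ℕ, a n / n ^ (1 + δ) * fejerKernel l (T - Real.log n) ≤
      l * ((∑ n ∈ Finset.Ioc ⌊Real.exp (T - ε)⌋₊ ⌊Real.exp (T + ε)⌋₊, a n) / Real.exp (T - ε)) +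
        4 / l * (1 + 1 / ε ^ 2) * M := by
  refine Real.tsum_le_of_sum_le
    (fun n ↦ mul_nonneg (div_nonneg (ha n) (by positivity)) (fejerKernel_nonneg hl.le _))
    fun s ↦ (Finset.sum_le_sum fun n _ ↦ div_rpow_mul_fejerKernel_le ha hδ hl hε T n).trans ?_
  rw [Finset.sum_add_distrib, ← Finset.mul_sum, ← Finset.mul_sum, ← Finset.sum_filter,
    ← Finset.sum_div]
  gcongr
  · exact fun n _ _ ↦ ha n
  · exact fun n hn ↦ (Finset.mem_filter.mp hn).2
  · exact hM s

theorem exists_eventually_mul_le_sum_Ioc (ha : ∀ n, 0 ≤ a n)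
    (hC : ∀ n : ℕ, ∑ k ∈ Finset.Icc 1 n, a k ≤ C * n) (hA : 0 < A) {G : ℂ → ℂ}
    (hG : ContinuousOn G {s | 1 ≤ s.re})
    (hGa : ∀ s, 1 < s.re → G s = LSeries (fun n ↦ a n) s - A / (s - 1)) {r : ℝ} (hr : 1 < r) :
    ∃ c > 0, ∀ᶠ x : ℝ in atTop, c * x ≤ ∑ n ∈ Finset.Ioc ⌊x⌋₊ ⌊r * x⌋₊, a n := by
  obtain ⟨M, hM0, hM⟩ := exists_sum_div_mul_le ha hC
  set ε := Real.log r / 2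
  have hε : 0 < ε := half_pos (Real.log_pos hr)
  set D := (1 + 1 / ε ^ 2) * M
  -- The bandwidth is chosen to make the tail term `4 / l * D` at most `A / 16`.
  set l := 64 * D / A + 1 with hl_def
  have hl : 0 < l := by positivity
  have htail : 4 / l * D ≤ A / 16 := by
    have hlA : l * A = 64 * D + A := by rw [hl_def]; field
    rw [div_mul_eq_mul_div, div_le_div_iff₀ hl (by norm_num)]
    linarith
  refine ⟨A / (16 * l), by positivity, ?_⟩
  have hshift : Tendsto (fun x ↦ Real.log x + ε) atTop atTop :=
    tendsto_atTop_add_const_right _ _ Real.tendsto_log_atTop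
  filter_upwards [hshift.eventually (eventually_exists_le_tsum_mul_fejerKernel ha hC hA hG hGa hl),
    eventually_gt_atTop 0] with x ⟨δ, hδ, hlow⟩ hx
  have hup := tsum_mul_fejerKernel_le ha (hM (Real.log x + ε)) hδ.le hl hε
  have hexp : Real.exp (Real.log x + ε + ε) = r * x := by
    rw [add_assoc, add_halves, Real.exp_add, Real.exp_log hx, Real.exp_log (by positivity),
      mul_comm]
  rw [add_sub_cancel_right, Real.exp_log hx, hexp, mul_assoc (4 / l)] at hup
  set S := ∑ n ∈ Finset.Ioc ⌊x⌋₊ ⌊r * x⌋₊, a n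
  have hS : A / 16 ≤ l * (S / x) := by linarith
  rw [← mul_div_assoc, le_div_iff₀ hx] at hS
  rw [div_mul_eq_mul_div, div_le_iff₀ (by positivity)]
  linarith

end Tauberian

section Chebyshev

open Chebyshev (psi theta)

lemma exists_continuousOn_eq_lSeries_vonMangoldt_sub :
    ∃ G : ℂ → ℂ, ContinuousOn G {s | 1 ≤ s.re} ∧ ∀ s, 1 < s.re →
      G s = LSeries (fun n ↦ (ArithmeticFunction.vonMangoldt n : ℝ)) s - (1 : ℝ) / (s - 1) := by
  refine ⟨ArithmeticFunction.vonMangoldt.LFunctionResidueClassAux (1 : ZMod 1),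
    ArithmeticFunction.vonMangoldt.continuousOn_LFunctionResidueClassAux _, fun s hs ↦ ?_⟩
  have hres (n : ℕ) : ArithmeticFunction.vonMangoldt.residueClass (1 : ZMod 1) n =
      ArithmeticFunction.vonMangoldt n := by
    simp [ArithmeticFunction.vonMangoldt.residueClass, Subsingleton.elim (n : ZMod 1) 1]
  rw [ArithmeticFunction.vonMangoldt.eqOn_LFunctionResidueClassAux isUnit_one hs]
  simp [hres]

lemma exists_eventually_mul_le_psi_sub_psi {r : ℝ} (hr : 1 < r) :
    ∃ c > 0, ∀ᶠ x in atTop, c * x ≤ psi (r * x) - psi x := by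
  obtain ⟨G, hG, hGΛ⟩ := exists_continuousOn_eq_lSeries_vonMangoldt_sub
  have hpsi (n : ℕ) :
      ∑ k ∈ Finset.Icc 1 n, ArithmeticFunction.vonMangoldt k ≤ (Real.log 4 + 4) * n := by
    simpa [psi, ← Finset.Icc_add_one_left_eq_Ioc] using
      Chebyshev.psi_le_const_mul_self n.cast_nonneg
  obtain ⟨c, hc, hsum⟩ := exists_eventually_mul_le_sum_Ioc
    (fun n ↦ ArithmeticFunction.vonMangoldt_nonneg) hpsi one_pos hG hGΛ hr
  refine ⟨c, hc, ?_⟩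
  filter_upwards [hsum, eventually_ge_atTop 0] with x hx hx0
  have hfloor : ⌊x⌋₊ ≤ ⌊r * x⌋₊ := Nat.floor_le_floor (le_mul_of_one_le_left hx0 hr.le)
  rwa [psi, psi, ← Finset.sum_Ioc_consecutive _ (Nat.zero_le _) hfloor, add_sub_cancel_left]

lemma isLittleO_psi_sub_theta : (psi - theta) =o[atTop] fun x ↦ x := by
  refine Chebyshev.isBigO_psi_sub_theta_sqrt.trans_isLittleO <|
    (Asymptotics.isLittleO_iff_tendsto' ?_).mpr ?_
  · filter_upwards [eventually_ne_atTop 0] with x hx hx0 using absurd hx0 hx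
  · simpa only [Real.sqrt_div_self, Function.comp_def] using
      tendsto_inv_atTop_zero.comp Real.tendsto_sqrt_atTop

lemma exists_eventually_mul_le_theta_sub_theta {r : ℝ} (hr : 1 < r) :
    ∃ c > 0, ∀ᶠ x in atTop, c * x ≤ theta (r * x) - theta x := by
  obtain ⟨c, hc, hpsi⟩ := exists_eventually_mul_le_psi_sub_psi hr
  have hr0 : 0 < r := one_pos.trans hr
  have herr := (isLittleO_psi_sub_theta.comp_tendsto (tendsto_id.const_mul_atTop hr0)).bound
    (by positivity : 0 < c / 2 / r)
  refine ⟨c / 2, half_pos hc, ?_⟩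
  filter_upwards [hpsi, herr, eventually_ge_atTop 0] with x hx herrx hx0
  have herr' : psi (r * x) - theta (r * x) ≤ c / 2 * x := by
    calc psi (r * x) - theta (r * x) ≤ c / 2 / r * ‖r * x‖ := (le_abs_self _).trans herrx
      _ = c / 2 * x := by
        rw [Real.norm_of_nonneg (by positivity)]
        field
  linarith [Chebyshev.theta_le_psi x]

lemma theta_sub_theta_le_s6 {x y : ℝ} (hxy : x ≤ y) :
    theta y - theta x ≤
      ((Nat.primeCounting ⌊y⌋₊ : ℝ) - Nat.primeCounting ⌊x⌋₊) * Real.log y := by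
  have hsub := Nat.primesLE_mono (Nat.floor_le_floor hxy)
  rw [Chebyshev.theta_eq_sum_primesLE, Chebyshev.theta_eq_sum_primesLE,
    ← Finset.sum_sdiff_eq_sub hsub, ← Nat.primesLE_card_eq_primeCounting,
    ← Nat.primesLE_card_eq_primeCounting, ← Finset.cast_card_sdiff hsub, ← nsmul_eq_mul]
  refine Finset.sum_le_card_nsmul _ _ _ fun p hp ↦ ?_
  obtain ⟨hpy, hp⟩ := Nat.mem_primesLE.mp (Finset.mem_sdiff.mp hp).1
  exact Real.log_le_log (Nat.cast_pos.mpr hp.pos) ((Nat.le_floor_iff' hp.ne_zero).mp hpy)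

lemma exists_eventually_primeCounting_le_mul {r : ℝ} (hr : 1 < r) :
    ∃ c > 0, ∀ᶠ x : ℝ in atTop,
      (Nat.primeCounting ⌊x⌋₊ : ℝ) ≤ (1 - c) * Nat.primeCounting ⌊r * x⌋₊ := by
  obtain ⟨c, hc, htheta⟩ := exists_eventually_mul_le_theta_sub_theta hr
  have hr0 : 0 < r := one_pos.trans hr
  set D := Real.log 4 + 1
  have hcheb := (tendsto_id.const_mul_atTop hr0).eventually
    (Chebyshev.eventually_primeCounting_le one_pos)
  refine ⟨c / (D * r), by positivity, ?_⟩
  filter_upwards [htheta, hcheb, eventually_gt_atTop 1] with x hx hpi hx1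
  have hxr : x ≤ r * x := le_mul_of_one_le_left (by linarith) hr.le
  have hlog : 0 < Real.log (r * x) := Real.log_pos (hx1.trans_le hxr)
  set P := (Nat.primeCounting ⌊r * x⌋₊ : ℝ)
  have hgap : c / (D * r) * P ≤ P - Nat.primeCounting ⌊x⌋₊ := by
    refine le_of_mul_le_mul_right ?_ hlog
    calc c / (D * r) * P * Real.log (r * x)
        = c / (D * r) * (P * Real.log (r * x)) := mul_assoc _ _ _
      _ ≤ c / (D * r) * (D * (r * x)) :=
        mul_le_mul_of_nonneg_left ((le_div_iff₀ hlog).mp hpi) (by positivity)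
      _ = c * x := by field
      _ ≤ theta (r * x) - theta x := hx
      _ ≤ _ := theta_sub_theta_le_s6 hxr
  linarith

end Chebyshev

section FractionalDensity

lemma exists_mem_of_ncard_lt {U : Set ℕ} {m n : ℕ}
    (h : {p ∈ U | p ≤ m}.ncard < {p ∈ U | p ≤ n}.ncard) : ∃ p ∈ U, m < p ∧ p ≤ n := by
  contrapose! h
  refine ncard_le_ncard (fun p ⟨hpU, hpn⟩ ↦ ⟨hpU, ?_⟩) ((finite_Iic m).subset fun p hp ↦ hp.2)
  exact not_lt.mp fun hmp ↦ (h p hpU hmp).not_ge hpn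

lemma eventually_exists_mem_of_tendsto_ncard_div {U : Set ℕ} {f : ℕ → ℝ} {γ : ℝ} (hγ : 0 < γ)
    (hU : Tendsto (fun n ↦ ({p ∈ U | p ≤ n}.ncard : ℝ) / f n) atTop (𝓝 γ)) {c r : ℝ} (hc : 0 < c)
    (hr : 0 < r) (hf : ∀ᶠ x : ℝ in atTop, f ⌊x⌋₊ ≤ (1 - c) * f ⌊r * x⌋₊) :
    ∀ᶠ x : ℝ in atTop, ∃ p ∈ U, x < p ∧ (p : ℝ) ≤ r * x := by
  have hU_left := hU.comp (tendsto_nat_floor_atTop (α := ℝ))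
  have hU_right := hU_left.comp (tendsto_id.const_mul_atTop hr)
  have hlim : (1 - c) * γ < γ := by linarith [mul_pos hc hγ]
  filter_upwards [hf, eventually_ge_atTop 0, hU_left.eventually_const_lt hγ,
    hU_right.eventually_const_lt hγ, (hU_left.const_mul (1 - c)).eventually_lt hU_right hlim]
    with x hfx hx hleft hright hlt
  simp only [Function.comp_apply, id] at hleft hright hlt
  set N : ℕ → ℕ := fun n ↦ {p ∈ U | p ≤ n}.ncard
  have hpos {n : ℕ} (h : 0 < (N n : ℝ) / f n) : 0 < f n :=
    lt_of_not_ge fun hfn ↦ h.not_ge (div_nonpos_of_nonneg_of_nonpos (Nat.cast_nonneg _) hfn)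
  have hfl := hpos hleft
  have hfr := hpos hright
  have hN : (N ⌊x⌋₊ : ℝ) < N ⌊r * x⌋₊ := by
    refine (div_lt_div_iff_of_pos_right hfr).mp (lt_of_le_of_lt ?_ hlt)
    rw [← mul_div_assoc, div_le_div_iff₀ hfr hfl]
    calc (N ⌊x⌋₊ : ℝ) * f ⌊x⌋₊ ≤ N ⌊x⌋₊ * ((1 - c) * f ⌊r * x⌋₊) := by gcongr
      _ = (1 - c) * N ⌊x⌋₊ * f ⌊r * x⌋₊ := by ring
  obtain ⟨p, hpU, hxp, hpr⟩ := exists_mem_of_ncard_lt (Nat.cast_lt.mp hN)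
  exact ⟨p, hpU, (Nat.floor_lt hx).mp hxp, (Nat.le_floor_iff (by positivity)).mp hpr⟩

lemma Ioi_subset_closure_quotients {U : Set ℕ}
    (hU : ∀ r > 1, ∀ᶠ x : ℝ in atTop, ∃ p ∈ U, x < p ∧ (p : ℝ) ≤ r * x) :
    Ioi (0 : ℝ) ⊆ closure {x : ℝ | ∃ p ∈ U, ∃ q ∈ U, x = (p : ℝ) / (q : ℝ)} := by
  intro a (ha : 0 < a)
  refine mem_closure_iff_nhds.mpr fun V hV ↦ ?_
  obtain ⟨b, hab, hV⟩ := exists_Ico_subset_of_mem_nhds hV (exists_gt a)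
  obtain ⟨s, has, hsb⟩ := exists_between hab
  have hnum : ∀ᶠ x : ℝ in atTop, ∀ y ≥ x, ∃ p ∈ U, a * y < p ∧ (p : ℝ) ≤ s / a * (a * y) :=
    eventually_forall_ge_atTop.mpr <| (tendsto_id.const_mul_atTop ha).eventually
      (hU (s / a) ((one_lt_div ha).mpr has))
  obtain ⟨x, ⟨q, hqU, hxq, -⟩, hx0, hx⟩ :=
    ((hU 2 one_lt_two).and ((eventually_ge_atTop 0).and hnum)).exists
  have hq : (0 : ℝ) < q := hx0.trans_lt hxq
  obtain ⟨p, hpU, hlo, hhi⟩ := hx q hxq.le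
  refine ⟨p / q, hV ⟨((lt_div_iff₀ hq).mpr hlo).le, ((div_le_iff₀ hq).mpr ?_).trans_lt hsb⟩,
    p, hpU, q, hqU, rfl⟩
  rwa [← mul_assoc, div_mul_cancel₀ s ha.ne'] at hhi

lemma ncard_setOf_prime_le (n : ℕ) : {p : ℕ | p.Prime ∧ p ≤ n}.ncard = n.primeCounting := by
  rw [← Nat.primesLE_card_eq_primeCounting, ← ncard_coe_finset]
  congr 1
  ext p
  simp [Nat.mem_primesLE, and_comm]

end FractionalDensity

theorem stmt_6_general (U : Set ℕ) (γ : ℝ) (hγ : 0 < γ)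
    (hU : Filter.Tendsto
      (fun n : ℕ => ({p ∈ U | p ≤ n}.ncard : ℝ) / ({p : ℕ | Nat.Prime p ∧ p ≤ n}.ncard : ℝ))
      Filter.atTop (nhds γ)) :
    Set.Ioi (0 : ℝ) ⊆
      closure {x : ℝ | ∃ p ∈ U, ∃ q ∈ U, x = (p : ℝ) / (q : ℝ)} := by
  simp only [ncard_setOf_prime_le] at hU
  refine Ioi_subset_closure_quotients fun r hr ↦ ?_
  obtain ⟨c, hc, hprime⟩ := exists_eventually_primeCounting_le_mul hr
  exact eventually_exists_mem_of_tendsto_ncard_div hγ hU hc (one_pos.trans hr) hprime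

/-- Corollary: if `U` is a set of primes with positive relative density, then
`U` is fractionally dense in the positive reals. -/
theorem stmt_6 (U : Set ℕ) (hUP : ∀ p ∈ U, Nat.Prime p) (γ : ℝ) (hγ : 0 < γ)
    (hU : Filter.Tendsto
      (fun n : ℕ => ({p ∈ U | p ≤ n}.ncard : ℝ) / ({p : ℕ | Nat.Prime p ∧ p ≤ n}.ncard : ℝ))
      Filter.atTop (nhds γ)) :
    Set.Ioi (0 : ℝ) ⊆
      closure {x : ℝ | ∃ p ∈ U, ∃ q ∈ U, x = (p : ℝ) / (q : ℝ)} :=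
  stmt_6_general U γ hγ hU
end

section
/- Let a, b, m, n be natural numbers with m ≥ 2 and n ≥ 2 such that gcd(a, m) = 1 and gcd(b, n) = 1. Then the set { p/q : p and q are prime numbers, p ≡ a (mod m), q ≡ b (mod n) } is dense in ℝ_{>0}. -/
/-!
Let `F` and `G` be the Dirichlet series `∑ log p * p ^ (-s)` over the primes `p ≡ a (mod m)`, resp.
over the primes `q ≡ b (mod n)`. By Dirichlet's theorem `(s - 1) F(s)` and `(s - 1) G(s)` extend
continuously to `re s ≥ 1`, with positive values `A` and `B` at `s = 1`. The product
`exp (-i c t) F(1 + ε - i t) G(1 + ε + i t)` is a sum of exponentials in `t` with nonnegative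
coefficients and frequencies `log p - log q - c`. Suppose that no `log p - log q` is within `η` of
`c`, and integrate against a kernel `K` with `K 0 > 0` whose cosine transform is nonpositive outside
`(-η, η)`: the real part of the result is nonpositive for every `ε > 0`. But the poles contribute
`A B / (ε ^ 2 + t ^ 2)` near `t = 0`, a Poisson kernel up to the factor `ε`, so `ε` times that
integral tends to `(π / 2) K(0) A B > 0`, a contradiction.
-/

open Filter Topology MeasureTheory Set
open scoped LSeries.notation

section CosineKernel

open Real

/-- A kernel on `[0, π]` whose cosine transform is nonpositive at all frequencies `u` with
`u ^ 2 ≥ 2`. If `ψ` is the self-convolution of `cos` restricted to `[-π / 2, π / 2]`, it is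
`2 (2 ψ + ψ'')` on `[0, π]`, so that its cosine transform is `2 - u ^ 2` times a square. -/
noncomputable def cosineKernel (t : ℝ) : ℝ := (π - t) * cos t + 3 * sin t

lemma continuous_cosineKernel : Continuous cosineKernel := by
  unfold cosineKernel
  fun_prop

-- Multiplied out by `(1 - u ^ 2) ^ 2`, so that no division by zero occurs at `u = ±1`.
lemma sq_mul_integral_cosineKernel_mul_cos (u : ℝ) :
    (1 - u ^ 2) ^ 2 * ∫ t in 0..π, cosineKernel t * cos (u * t) =
      (4 - 2 * u ^ 2) * (1 + cos (u * π)) := by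
  have hderiv (t : ℝ) : HasDerivAt
      (fun t ↦ (1 - u ^ 2) * ((π - t) * (sin t * cos (u * t) - u * (cos t * sin (u * t)))) +
        (3 * u ^ 3 - 5 * u) * (sin t * sin (u * t)) + (2 * u ^ 2 - 4) * (cos t * cos (u * t)))
      ((1 - u ^ 2) ^ 2 * (cosineKernel t * cos (u * t))) t := by
    have hu : HasDerivAt (fun t ↦ u * t) u t := hasDerivAt_const_mul u
    have hs := hasDerivAt_sin t
    have hc := hasDerivAt_cos t
    have hπ : HasDerivAt (fun t ↦ π - t) (-1) t := (hasDerivAt_id t).const_sub π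
    refine ((((hπ.mul ((hs.mul hu.cos).sub ((hc.mul hu.sin).const_mul u))).const_mul _).add
      ((hs.mul hu.sin).const_mul _)).add ((hc.mul hu.cos).const_mul _)).congr_deriv ?_
    simp only [cosineKernel, Pi.mul_apply, Pi.sub_apply]
    ring
  have hcont : Continuous fun t ↦ (1 - u ^ 2) ^ 2 * (cosineKernel t * cos (u * t)) := by
    have := continuous_cosineKernel
    fun_prop
  rw [← intervalIntegral.integral_const_mul, intervalIntegral.integral_eq_sub_of_hasDerivAt
    (fun t _ ↦ hderiv t) (hcont.intervalIntegrable _ _)]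
  simp only [sin_pi, cos_pi, sin_zero, cos_zero, mul_zero]
  ring

lemma integral_cosineKernel_mul_cos_nonpos {u : ℝ} (hu : 2 ≤ u ^ 2) :
    ∫ t in 0..π, cosineKernel t * cos (u * t) ≤ 0 := by
  have hpos : 0 < (1 - u ^ 2) ^ 2 := by nlinarith
  refine nonpos_of_mul_nonpos_right ?_ hpos
  rw [sq_mul_integral_cosineKernel_mul_cos]
  exact mul_nonpos_of_nonpos_of_nonneg (by linarith) (by linarith [neg_one_le_cos (u * π)])

lemma exists_cosine_transform_nonpos {η : ℝ} (hη : 0 < η) :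
    ∃ (K : ℝ → ℝ) (T : ℝ), Continuous K ∧ 0 < K 0 ∧ 0 < T ∧
      ∀ u, η ≤ |u| → ∫ t in 0..T, K t * cos (u * t) ≤ 0 := by
  refine ⟨fun t ↦ cosineKernel (η / 2 * t), π / (η / 2),
    continuous_cosineKernel.comp (continuous_const_mul _), ?_, by positivity, fun u hu ↦ ?_⟩
  · simpa [cosineKernel] using pi_pos
  · have hu' : 2 ≤ (u / (η / 2)) ^ 2 := by
      rw [div_pow, le_div_iff₀ (by positivity)]
      nlinarith [sq_le_sq' (by linarith) hu, sq_abs u]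
    have hscale : ∫ t in 0..π / (η / 2), cosineKernel (η / 2 * t) * cos (u * t) =
        (η / 2)⁻¹ * ∫ s in 0..π, cosineKernel s * cos (u / (η / 2) * s) := by
      have := intervalIntegral.integral_comp_mul_left (a := 0) (b := π / (η / 2))
        (fun s ↦ cosineKernel s * cos (u / (η / 2) * s)) (by positivity : η / 2 ≠ 0)
      rw [mul_zero, mul_div_cancel₀ _ (by positivity), smul_eq_mul] at this
      rw [← this]
      congr! 4 with t
      field_simp
    rw [hscale]
    exact mul_nonpos_of_nonneg_of_nonpos (by positivity) (integral_cosineKernel_mul_cos_nonpos hu')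

end CosineKernel

section PoissonKernel

open Real

lemma mapsTo_rescale {ε : ℝ} (hε : 0 < ε) (T : ℝ) :
    MapsTo (fun y ↦ (ε, ε * y)) (Ioc 0 (T / ε)) (Ici 0 ×ˢ Icc 0 T) := fun _ hy ↦
  ⟨hε.le, mul_nonneg hε.le hy.1.le, (le_div_iff₀' hε).1 hy.2⟩

lemma eventually_le_div {T : ℝ} (hT : 0 < T) {y : ℝ} (hy : 0 < y) :
    ∀ᶠ ε in 𝓝[>] (0 : ℝ), y ≤ T / ε := by
  filter_upwards [Ioo_mem_nhdsGT (div_pos hT hy)] with ε hε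
  exact (le_div_comm₀ hε.1 hy).1 hε.2.le

lemma tendsto_rescale {X : Type*} [TopologicalSpace X] {Θ : ℝ × ℝ → X} {T : ℝ} (hT : 0 < T)
    (hΘ : ContinuousOn Θ (Ici 0 ×ˢ Icc 0 T)) {y : ℝ} (hy : 0 < y) :
    Tendsto (fun ε ↦ Θ (ε, ε * y)) (𝓝[>] 0) (𝓝 (Θ (0, 0))) := by
  refine (hΘ (0, 0) (by simp [hT.le])).tendsto.comp (tendsto_nhdsWithin_iff.2 ⟨?_, ?_⟩)
  · exact tendsto_nhdsWithin_of_tendsto_nhds (Continuous.tendsto' (by fun_prop) _ _ (by simp))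
  · filter_upwards [self_mem_nhdsWithin, eventually_le_div hT hy] with ε hε hyT
    exact mapsTo_rescale hε T ⟨hy, hyT⟩

variable {E : Type*} [NormedAddCommGroup E] [NormedSpace ℝ E]

lemma integral_poisson_smul_eq_integral_Ioc {ε T : ℝ} (hε : 0 < ε) (hT : 0 ≤ T) (f : ℝ → E) :
    ∫ t in 0..T, (ε / (ε ^ 2 + t ^ 2)) • f t =
      ∫ y in Ioc 0 (T / ε), (1 + y ^ 2)⁻¹ • f (ε * y) := by
  have hsubst := intervalIntegral.smul_integral_comp_mul_left (a := 0) (b := T / ε)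
    (fun t ↦ (ε / (ε ^ 2 + t ^ 2)) • f t) ε
  rw [mul_zero, mul_div_cancel₀ _ hε.ne'] at hsubst
  rw [← hsubst, ← intervalIntegral.integral_smul, intervalIntegral.integral_of_le (by positivity)]
  refine setIntegral_congr_fun measurableSet_Ioc fun y _ ↦ ?_
  simp only [smul_smul]
  congr 1
  field_simp

variable {Θ : ℝ × ℝ → E} {T : ℝ}

lemma tendsto_integral_smul_rescale [CompleteSpace E] {φ : ℝ → ℝ} (hφ : IntegrableOn φ (Ioi 0))
    (hT : 0 < T) (hΘ : ContinuousOn Θ (Ici 0 ×ˢ Icc 0 T)) :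
    Tendsto (fun ε ↦ ∫ y in Ioc 0 (T / ε), φ y • Θ (ε, ε * y)) (𝓝[>] 0)
      (𝓝 ((∫ y in Ioi 0, φ y) • Θ (0, 0))) := by
  obtain ⟨C, hC⟩ := (isCompact_Icc.prod isCompact_Icc).exists_bound_of_continuousOn
    (hΘ.mono (prod_mono_left (Icc_subset_Ici_self (b := 0) (a := 1))))
  have hC0 : 0 ≤ C := (norm_nonneg _).trans (hC (0, 0) (by simp [hT.le]))
  have hIoc (ε : ℝ) : ∫ y in Ioc 0 (T / ε), φ y • Θ (ε, ε * y) =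
      ∫ y in Ioi 0, (Iic (T / ε)).indicator (fun y ↦ φ y • Θ (ε, ε * y)) y := by
    rw [setIntegral_indicator measurableSet_Iic, Ioi_inter_Iic]
  simp only [hIoc, ← integral_smul_const]
  refine tendsto_integral_filter_of_dominated_convergence (fun y ↦ ‖φ y‖ * C) ?_ ?_
    (hφ.norm.mul_const C) ?_
  · filter_upwards [self_mem_nhdsWithin] with ε hε
    rw [aestronglyMeasurable_indicator_iff measurableSet_Iic,
      Measure.restrict_restrict measurableSet_Iic, inter_comm, Ioi_inter_Iic]
    exact (hφ.mono_set Ioc_subset_Ioi_self).aestronglyMeasurable.smul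
      ((hΘ.comp (by fun_prop) (mapsTo_rescale hε T)).aestronglyMeasurable measurableSet_Ioc)
  · filter_upwards [Ioo_mem_nhdsGT one_pos] with ε hε
    filter_upwards [ae_restrict_mem measurableSet_Ioi] with y hy
    by_cases hyT : y ≤ T / ε
    · rw [indicator_of_mem (mem_Iic.2 hyT), norm_smul]
      gcongr
      exact hC _ ⟨⟨hε.1.le, hε.2.le⟩, (mapsTo_rescale hε.1 T ⟨hy, hyT⟩).2⟩
    · rw [indicator_of_notMem (notMem_Iic.2 (not_le.1 hyT)), norm_zero]
      positivity
  · filter_upwards [ae_restrict_mem measurableSet_Ioi] with y hy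
    refine ((tendsto_rescale hT hΘ hy).const_smul (φ y)).congr' ?_
    filter_upwards [eventually_le_div hT hy] with ε hyT
    rw [indicator_of_mem (mem_Iic.2 hyT)]

lemma tendsto_integral_poisson_smul [CompleteSpace E] (hT : 0 < T)
    (hΘ : ContinuousOn Θ (Ici 0 ×ˢ Icc 0 T)) :
    Tendsto (fun ε ↦ ∫ t in 0..T, (ε / (ε ^ 2 + t ^ 2)) • Θ (ε, t)) (𝓝[>] 0)
      (𝓝 ((π / 2) • Θ (0, 0))) := by
  have hlim := tendsto_integral_smul_rescale integrable_inv_one_add_sq.integrableOn hT hΘ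
  rw [integral_Ioi_inv_one_add_sq, arctan_zero, sub_zero] at hlim
  refine hlim.congr' ?_
  filter_upwards [self_mem_nhdsWithin] with ε hε
  exact (integral_poisson_smul_eq_integral_Ioc hε hT.le fun t ↦ Θ (ε, t)).symm

end PoissonKernel

lemma integral_mul_tsum_cos_nonpos {ι : Type*} [Countable ι] {w u : ι → ℝ} (hw : ∀ i, 0 ≤ w i)
    (hsum : Summable w) {K : ℝ → ℝ} {a b : ℝ} (hK : IntervalIntegrable K volume a b)
    (hneg : ∀ i, w i ≠ 0 → ∫ t in a..b, K t * Real.cos (u i * t) ≤ 0) :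
    ∫ t in a..b, K t * ∑' i, w i * Real.cos (u i * t) ≤ 0 := by
  have hle (i : ι) (t : ℝ) : ‖w i * Real.cos (u i * t)‖ ≤ w i := by
    rw [norm_mul, Real.norm_of_nonneg (hw i)]
    exact mul_le_of_le_one_right (hw i) (Real.abs_cos_le_one _)
  have hsum_integral : HasSum (fun i ↦ ∫ t in a..b, K t * (w i * Real.cos (u i * t)))
      (∫ t in a..b, K t * ∑' i, w i * Real.cos (u i * t)) := by
    refine intervalIntegral.hasSum_integral_of_dominated_convergence (fun i t ↦ ‖K t‖ * w i)
      (fun i ↦ ?_) (fun i ↦ .of_forall fun t _ ↦ ?_)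
      (.of_forall fun t _ ↦ hsum.mul_left _) ?_ (.of_forall fun t _ ↦ ?_)
    · exact hK.aestronglyMeasurable_restrict_uIoc.mul
        (Continuous.aestronglyMeasurable (by fun_prop))
    · rw [norm_mul]
      gcongr
      exact hle i t
    · simpa only [tsum_mul_left] using hK.norm.mul_const _
    · exact ((hsum.of_norm_bounded (hle · t)).hasSum).mul_left _
  refine hasSum_le (fun i ↦ ?_) hsum_integral hasSum_zero
  simp_rw [mul_left_comm (K _)]
  rw [intervalIntegral.integral_const_mul]
  rcases eq_or_ne (w i) 0 with hi | hi
  · simp [hi]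
  · exact mul_nonpos_of_nonneg_of_nonpos (hw i) (hneg i hi)

section DirichletSeries

open Complex

lemma ne_zero_of_term_ne_zero {f : ℕ → ℂ} {s : ℂ} {n : ℕ} (h : LSeries.term f s n ≠ 0) :
    n ≠ 0 ∧ f n ≠ 0 := by
  constructor <;> intro h0 <;> simp [LSeries.term_def, h0] at h

lemma term_add_mul_I {f : ℕ → ℝ} {n : ℕ} (hf : 0 ≤ f n) (σ t : ℝ) :
    LSeries.term ↗f (σ + t * I) n =
      ‖LSeries.term ↗f σ n‖ * cexp (-(t * Real.log n) * I) := by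
  rcases eq_or_ne n 0 with rfl | hn
  · simp
  have hn' : (n : ℂ) ≠ 0 := Nat.cast_ne_zero.2 hn
  rw [LSeries.norm_term_eq, if_neg hn, norm_real, Real.norm_of_nonneg hf, ofReal_re,
    LSeries.term_of_ne_zero hn, cpow_add _ _ hn', cpow_def_of_ne_zero hn' (t * I), ofReal_div,
    ofReal_cpow n.cast_nonneg, ofReal_natCast, div_mul_eq_div_div_swap, div_right_comm,
    div_eq_mul_inv _ (cexp _), ← exp_neg, natCast_log]
  ring_nf

lemma re_exp_mul_LSeries_mul_LSeries {f g : ℕ → ℝ} (hf : ∀ n, 0 ≤ f n) (hg : ∀ n, 0 ≤ g n)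
    {σ : ℝ} (hfσ : LSeriesSummable ↗f σ) (hgσ : LSeriesSummable ↗g σ) (c t : ℝ) :
    (cexp (-(c * t) * I) * (L ↗f (σ + (-t : ℝ) * I) * L ↗g (σ + t * I))).re =
      ∑' z : ℕ × ℕ, ‖LSeries.term ↗f σ z.1‖ * ‖LSeries.term ↗g σ z.2‖ *
        Real.cos ((Real.log z.1 - Real.log z.2 - c) * t) := by
  have hf' : LSeriesSummable ↗f (σ + (-t : ℝ) * I) := hfσ.of_re_le_re (by simp)
  have hg' : LSeriesSummable ↗g (σ + t * I) := hgσ.of_re_le_re (by simp)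
  rw [LSeries, LSeries, tsum_mul_tsum_of_summable_norm hf'.norm hg'.norm, ← tsum_mul_left,
    re_tsum ((summable_mul_of_summable_norm hf'.norm hg'.norm).mul_left _)]
  refine tsum_congr fun ⟨p, q⟩ ↦ ?_
  rw [term_add_mul_I (hf p), term_add_mul_I (hg q), mul_mul_mul_comm, ← exp_add, mul_left_comm,
    ← exp_add, ← ofReal_mul, re_ofReal_mul, ← exp_ofReal_mul_I_re]
  congr 3
  push_cast
  ring

lemma continuousOn_LSeries_of_LSeriesSummable {f : ℕ → ℂ} {s₀ : ℂ} (hf : LSeriesSummable f s₀) :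
    ContinuousOn (L f) {s | s₀.re ≤ s.re} := by
  refine continuousOn_tsum (fun n ↦ Continuous.continuousOn ?_) hf.norm
    fun n s hs ↦ LSeries.norm_term_le_of_re_le_re f hs n
  rcases eq_or_ne n 0 with rfl | hn
  · simpa using continuous_const
  · have : NeZero n := ⟨hn⟩
    simp only [LSeries.term_of_ne_zero hn]
    fun_prop (disch := simp [hn])

/-- A Wiener–Ikehara type hypothesis: `L f` converges absolutely for `re s > 1` and `(s - 1) L f s`
extends continuously to the closed half-plane `re s ≥ 1`, with value `A` at `s = 1`. The value
`A = 0` is allowed. -/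
structure LSeriesHasResidueAtOne (f : ℕ → ℂ) (A : ℂ) : Prop where
  summable : ∀ ⦃s : ℂ⦄, 1 < s.re → LSeriesSummable f s
  exists_extension : ∃ Φ : ℂ → ℂ, ContinuousOn Φ {s | 1 ≤ s.re} ∧ Φ 1 = A ∧
    ∀ s : ℂ, 1 < s.re → Φ s = (s - 1) * L f s

namespace LSeriesHasResidueAtOne

lemma sub_of_LSeriesSummable {f g : ℕ → ℂ} {A : ℂ} (hf : LSeriesHasResidueAtOne f A)
    (hg : LSeriesSummable g 1) : LSeriesHasResidueAtOne (f - g) A where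
  summable s hs := (hf.summable hs).sub (hg.of_re_le_re (by simpa using hs.le))
  exists_extension := by
    obtain ⟨Φ, hΦ, hΦ1, hΦf⟩ := hf.exists_extension
    have hLg : ContinuousOn (L g) {s | 1 ≤ s.re} := by
      simpa using continuousOn_LSeries_of_LSeriesSummable hg
    refine ⟨fun s ↦ Φ s - (s - 1) * L g s, by fun_prop, by simp [hΦ1], fun s hs ↦ ?_⟩
    beta_reduce
    rw [LSeries_sub (hf.summable hs) (hg.of_re_le_re (by simpa using hs.le)), hΦf s hs, mul_sub]

lemma tendsto_mul_integral {f g : ℕ → ℂ} {A B : ℂ} (hf : LSeriesHasResidueAtOne f A)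
    (hg : LSeriesHasResidueAtOne g B) {K : ℝ → ℝ} (hK : Continuous K) {T : ℝ} (hT : 0 < T)
    (c : ℝ) :
    Tendsto (fun ε : ℝ ↦ ε * ∫ t in 0..T, K t * (cexp (-(c * t) * I) *
      (L f ((1 + ε : ℝ) + (-t : ℝ) * I) * L g ((1 + ε : ℝ) + t * I))).re)
      (𝓝[>] 0) (𝓝 (Real.pi / 2 * (K 0 * (A * B).re))) := by
  obtain ⟨Φ, hΦ, hΦ1, hΦf⟩ := hf.exists_extension
  obtain ⟨Ψ, hΨ, hΨ1, hΨg⟩ := hg.exists_extension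
  let Θ (x : ℝ × ℝ) : ℝ := K x.2 * (cexp (-(c * x.2) * I) *
    (Φ (1 + x.1 + (-x.2 : ℝ) * I) * Ψ (1 + x.1 + x.2 * I))).re
  have hΘ : ContinuousOn Θ (Ici 0 ×ˢ Icc 0 T) := by
    have hΦ' : ContinuousOn (fun x : ℝ × ℝ ↦ Φ (1 + x.1 + (-x.2 : ℝ) * I)) (Ici 0 ×ˢ Icc 0 T) :=
      hΦ.comp (Continuous.continuousOn (by fun_prop)) fun x hx ↦ by simpa using hx.1
    have hΨ' : ContinuousOn (fun x : ℝ × ℝ ↦ Ψ (1 + x.1 + x.2 * I)) (Ici 0 ×ˢ Icc 0 T) :=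
      hΨ.comp (Continuous.continuousOn (by fun_prop)) fun x hx ↦ by simpa using hx.1
    exact (hK.comp continuous_snd).continuousOn.mul <| continuous_re.comp_continuousOn <|
      (Continuous.continuousOn (by fun_prop)).mul (hΦ'.mul hΨ')
  have hΘ_zero : Θ (0, 0) = K 0 * (A * B).re := by simp [Θ, hΦ1, hΨ1]
  have hΘ_eq {ε : ℝ} (hε : 0 < ε) (t : ℝ) : (ε / (ε ^ 2 + t ^ 2)) • Θ (ε, t) =
      ε * (K t * (cexp (-(c * t) * I) *
        (L f ((1 + ε : ℝ) + (-t : ℝ) * I) * L g ((1 + ε : ℝ) + t * I))).re) := by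
    have hpoles : (1 + ε + (-t : ℝ) * I - 1) * (1 + ε + t * I - 1) = ((ε ^ 2 + t ^ 2 : ℝ) : ℂ) := by
      push_cast
      linear_combination (-t ^ 2 : ℂ) * I_sq
    simp only [Θ]
    rw [hΦf _ (by simpa), hΨg _ (by simpa), mul_mul_mul_comm, hpoles, mul_left_comm,
      re_ofReal_mul, smul_eq_mul, ofReal_add, ofReal_one]
    field_simp
  have hlim := tendsto_integral_poisson_smul hT hΘ
  rw [hΘ_zero, smul_eq_mul] at hlim
  refine hlim.congr' ?_
  filter_upwards [self_mem_nhdsWithin] with ε (hε : 0 < ε)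
  simp only [hΘ_eq hε, intervalIntegral.integral_const_mul]

end LSeriesHasResidueAtOne

section RatioDensity

variable {f g : ℕ → ℝ}

lemma integral_mul_re_LSeries_mul_LSeries_nonpos (hf : ∀ n, 0 ≤ f n) (hg : ∀ n, 0 ≤ g n)
    {σ : ℝ} (hfσ : LSeriesSummable ↗f σ) (hgσ : LSeriesSummable ↗g σ) {K : ℝ → ℝ} {T c η : ℝ}
    (hK : IntervalIntegrable K volume 0 T)
    (hKη : ∀ u, η ≤ |u| → ∫ t in 0..T, K t * Real.cos (u * t) ≤ 0)
    (hgap : ∀ p q : ℕ, p ≠ 0 → q ≠ 0 → f p ≠ 0 → g q ≠ 0 →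
      η ≤ |Real.log p - Real.log q - c|) :
    ∫ t in 0..T,
      K t * (cexp (-(c * t) * I) * (L ↗f (σ + (-t : ℝ) * I) * L ↗g (σ + t * I))).re ≤ 0 := by
  simp only [re_exp_mul_LSeries_mul_LSeries hf hg hfσ hgσ]
  refine integral_mul_tsum_cos_nonpos (fun z ↦ by positivity)
    (hfσ.norm.mul_norm hgσ.norm |>.congr fun z ↦ by simp) hK fun ⟨p, q⟩ hw ↦ hKη _ ?_
  obtain ⟨hp, hq⟩ : LSeries.term ↗f σ p ≠ 0 ∧ LSeries.term ↗g σ q ≠ 0 := by simpa using hw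
  have ⟨hp0, hfp⟩ := ne_zero_of_term_ne_zero hp
  have ⟨hq0, hgq⟩ := ne_zero_of_term_ne_zero hq
  exact hgap p q hp0 hq0 (ofReal_ne_zero.1 hfp) (ofReal_ne_zero.1 hgq)

theorem dense_log_sub_log {A B : ℝ} (hf : ∀ n, 0 ≤ f n) (hg : ∀ n, 0 ≤ g n)
    (hA : 0 < A) (hB : 0 < B) (hfA : LSeriesHasResidueAtOne ↗f A)
    (hgB : LSeriesHasResidueAtOne ↗g B) :
    Dense {x : ℝ | ∃ p q : ℕ, p ≠ 0 ∧ q ≠ 0 ∧ f p ≠ 0 ∧ g q ≠ 0 ∧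
      x = Real.log p - Real.log q} := by
  refine fun c ↦ Metric.mem_closure_iff.2 fun η hη ↦ ?_
  by_contra! hempty
  have hgap (p q : ℕ) (hp : p ≠ 0) (hq : q ≠ 0) (hfp : f p ≠ 0) (hgq : g q ≠ 0) :
      η ≤ |Real.log p - Real.log q - c| := by
    have := hempty _ ⟨p, q, hp, hq, hfp, hgq, rfl⟩
    rwa [dist_comm, Real.dist_eq] at this
  obtain ⟨K, T, hK, hK0, hT, hKη⟩ := exists_cosine_transform_nonpos hη
  have hpos : 0 < Real.pi / 2 * (K 0 * ((A : ℂ) * B).re) := by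
    rw [← ofReal_mul, ofReal_re]
    positivity
  refine hpos.not_ge (le_of_tendsto (hfA.tendsto_mul_integral hgB hK hT c) ?_)
  filter_upwards [self_mem_nhdsWithin] with ε (hε : 0 < ε)
  exact mul_nonpos_of_nonneg_of_nonpos hε.le <|
    integral_mul_re_LSeries_mul_LSeries_nonpos hf hg (hfA.summable (by simpa))
      (hgB.summable (by simpa)) (hK.intervalIntegrable _ _) hKη hgap

theorem Ioi_zero_subset_closure_div {A B : ℝ} (hf : ∀ n, 0 ≤ f n) (hg : ∀ n, 0 ≤ g n)
    (hA : 0 < A) (hB : 0 < B) (hfA : LSeriesHasResidueAtOne ↗f A)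
    (hgB : LSeriesHasResidueAtOne ↗g B) :
    Ioi (0 : ℝ) ⊆ closure {x : ℝ | ∃ p q : ℕ, f p ≠ 0 ∧ g q ≠ 0 ∧ x = (p : ℝ) / q} := by
  intro x hx
  rw [← Real.exp_log hx]
  refine map_mem_closure Real.continuous_exp (dense_log_sub_log hf hg hA hB hfA hgB (Real.log x)) ?_
  rintro _ ⟨p, q, hp, hq, hfp, hgq, rfl⟩
  refine ⟨p, q, hfp, hgq, ?_⟩
  rw [Real.exp_sub, Real.exp_log (by positivity), Real.exp_log (by positivity)]

end RatioDensity

section PrimesInResidueClass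

open ArithmeticFunction.vonMangoldt

/-- The coefficients of the Dirichlet series `∑ log p * p ^ (-s)` over the primes
`p ≡ a (mod m)`. -/
noncomputable def primeLog {m : ℕ} (a : ZMod m) : ℕ → ℝ :=
  {p : ℕ | p.Prime ∧ (p : ZMod m) = a}.indicator fun p ↦ Real.log p

lemma primeLog_nonneg {m : ℕ} (a : ZMod m) (n : ℕ) : 0 ≤ primeLog a n :=
  indicator_nonneg (fun p _ ↦ Real.log_natCast_nonneg p) n

lemma residueClass_sub_primeLog {m : ℕ} (a : ZMod m) (n : ℕ) :
    residueClass a n - primeLog a n = if n.Prime then 0 else residueClass a n := by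
  by_cases hn : n.Prime
  · by_cases ha : (n : ZMod m) = a <;>
      simp [primeLog, residueClass, indicator, hn, ha, ArithmeticFunction.vonMangoldt_apply_prime]
  · simp [primeLog, indicator, hn]

lemma LSeriesSummable_residueClass_sub_primeLog {m : ℕ} (a : ZMod m) :
    LSeriesSummable (↗(residueClass a) - ↗(primeLog a)) 1 := by
  have hsum : Summable fun n : ℕ ↦ (residueClass a n - primeLog a n) / n := by
    simpa only [residueClass_sub_primeLog] using summable_residueClass_non_primes_div a
  refine (summable_ofReal.2 hsum).congr fun n ↦ ?_
  simp [LSeries.term_def₀, primeLog, div_eq_mul_inv, cpow_neg]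

lemma lseriesHasResidueAtOne_residueClass {m : ℕ} [NeZero m] {a : ZMod m} (ha : IsUnit a) :
    LSeriesHasResidueAtOne ↗(residueClass a) (m.totient : ℂ)⁻¹ where
  summable s hs := LSeriesSummable_of_abscissaOfAbsConv_lt_re <|
    (abscissaOfAbsConv_residueClass_le_one a).trans_lt (mod_cast hs)
  exists_extension := by
    have hcont := continuousOn_LFunctionResidueClassAux a
    refine ⟨fun s ↦ (s - 1) * LFunctionResidueClassAux a s + (m.totient : ℂ)⁻¹,
      by fun_prop, by simp, fun s hs ↦ ?_⟩
    have hs1 : s - 1 ≠ 0 := sub_ne_zero.2 fun h ↦ by simp [h] at hs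
    simp only [eqOn_LFunctionResidueClassAux ha hs]
    field_simp
    ring

lemma lseriesHasResidueAtOne_primeLog {m : ℕ} [NeZero m] {a : ZMod m} (ha : IsUnit a) :
    LSeriesHasResidueAtOne ↗(primeLog a) ((m.totient : ℝ)⁻¹ : ℝ) := by
  have := (lseriesHasResidueAtOne_residueClass ha).sub_of_LSeriesSummable
    (LSeriesSummable_residueClass_sub_primeLog a)
  simpa [sub_sub_cancel] using this

end PrimesInResidueClass

end DirichletSeries

/-- Theorem 7: for `m, n ≥ 2`, `gcd(a,m) = gcd(b,n) = 1`, the set of ratios `p/q`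
of primes with `p ≡ a (mod m)` and `q ≡ b (mod n)` is dense in the positive reals. -/
theorem stmt_7 (a b m n : ℕ) (hm : 2 ≤ m) (hn : 2 ≤ n)
    (ha : Nat.gcd a m = 1) (hb : Nat.gcd b n = 1) :
    Set.Ioi (0 : ℝ) ⊆
      closure {x : ℝ | ∃ p q : ℕ, Nat.Prime p ∧ Nat.Prime q ∧
        p % m = a % m ∧ q % n = b % n ∧ x = (p : ℝ) / (q : ℝ)} := by
  have : NeZero m := ⟨by lia⟩
  have : NeZero n := ⟨by lia⟩
  have hpole_a := lseriesHasResidueAtOne_primeLog ((ZMod.isUnit_iff_coprime a m).2 ha)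
  have hpole_b := lseriesHasResidueAtOne_primeLog ((ZMod.isUnit_iff_coprime b n).2 hb)
  refine (Ioi_zero_subset_closure_div (primeLog_nonneg _) (primeLog_nonneg _)
    (by simp [NeZero.pos]) (by simp [NeZero.pos]) hpole_a hpole_b).trans (closure_mono ?_)
  rintro x ⟨p, q, hp, hq, rfl⟩
  obtain ⟨hp_prime, hp_mod⟩ := mem_of_indicator_ne_zero hp
  obtain ⟨hq_prime, hq_mod⟩ := mem_of_indicator_ne_zero hq
  exact ⟨p, q, hp_prime, hq_prime, (ZMod.natCast_eq_natCast_iff' p a m).1 hp_mod,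
    (ZMod.natCast_eq_natCast_iff' q b n).1 hq_mod, rfl⟩
end

section
/- Let a and m be natural numbers with m ≥ 2 and gcd(a, m) = 1, and let α > 1 be a real number. Then there exists a positive integer m₀, depending only on α, such that for every integer n ≥ m₀ the interval [α^n, α^{n+1}] contains a prime number p with p ≡ a (mod m). -/
/-!
Choose a compactly supported weight `w` with `w 0 > 0` whose Fourier transform is nonpositive
outside `(-δ, δ)`. Let `f` be the von Mangoldt weight on the primes congruent to `a`. If no such
prime satisfies `|log p - x| < δ`, then `∑ f n n^(-σ) 𝓕 w (log n - x) ≤ 0` for every `σ > 1`. By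
Fubini this sum is the inverse Fourier transform at `x` of `w` times the `L`-series of `f` along
the line `Re s = σ`. By non-vanishing of Dirichlet `L`-functions on `Re s = 1`, that `L`-series is a
pole `A / (s - 1)` with `A > 0` plus a function continuous up to `Re s = 1`. Let `σ → 1` and then
`x → ∞`: the continuous part disappears by the Riemann-Lebesgue lemma, and the pole contributes
`A * ∫ 𝓕 w = A * w 0 > 0`, a contradiction for large `x`.
-/

open Filter MeasureTheory Set Topology
open scoped FourierTransform ComplexOrder

section Fourier

lemma fourier_comp_mul_left {E : Type*} [NormedAddCommGroup E] [NormedSpace ℂ E] (w : ℝ → E)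
    {c : ℝ} (hc : c ≠ 0) (u : ℝ) : 𝓕 (fun t ↦ w (c * t)) u = |c|⁻¹ • 𝓕 w (u / c) := by
  have hscale := Measure.integral_comp_mul_left (fun t ↦ 𝐞 (-(t * (u / c))) • w t) c
  rw [Real.fourier_real_eq, Real.fourier_real_eq, ← abs_inv, ← hscale]
  congr! 5 with t
  field_simp

lemma integral_fourier_eq_apply_zero_s8 {V E : Type*} [NormedAddCommGroup V] [InnerProductSpace ℝ V]
    [FiniteDimensional ℝ V] [MeasurableSpace V] [BorelSpace V] [NormedAddCommGroup E]
    [NormedSpace ℂ E] [CompleteSpace E] {w : V → E} (hw : Continuous w) (hint : Integrable w)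
    (hint' : Integrable (𝓕 w)) : ∫ u, 𝓕 w u = w 0 := by
  have hinv := congrFun (hw.fourierInv_fourier_eq hint hint') 0
  simpa [Real.fourierInv_eq] using hinv

open Real in
lemma fourier_ofReal_of_even {w : ℝ → ℝ} (hw : Integrable w) (heven : w.Even) (u : ℝ) :
    𝓕 (fun t ↦ (w t : ℂ)) u = (∫ t, w t * cos (2 * π * u * t) : ℝ) := by
  have hint (u : ℝ) : Integrable fun t ↦ 𝐞 (-(t * u)) • (w t : ℂ) := by
    simpa [mul_comm] using (fourierIntegral_convergent_iff u).mpr hw.ofReal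
  have hneg : ∫ t, 𝐞 (-(t * -u)) • (w t : ℂ) = ∫ t, 𝐞 (-(t * u)) • (w t : ℂ) := by
    rw [← integral_neg_eq_self]
    simp [heven _]
  have hcos (t : ℝ) : 𝐞 (-(t * u)) • (w t : ℂ) + 𝐞 (-(t * -u)) • (w t : ℂ) =
      2 * ((w t * cos (2 * π * u * t) : ℝ) : ℂ) := by
    simp only [Circle.smul_def, fourierChar_apply, smul_eq_mul, Complex.ofReal_mul,
      Complex.ofReal_cos, Complex.cos]
    push_cast
    ring_nf
  rw [fourier_real_eq, ← mul_right_inj' two_ne_zero, two_mul]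
  nth_rw 2 [← hneg]
  rw [← integral_add (hint u) (hint (-u)), integral_congr_ae (.of_forall hcos),
    integral_const_mul, integral_complex_ofReal]

lemma integral_even_eq_two_mul_intervalIntegral {g : ℝ → ℝ} (heven : g.Even) {R : ℝ} (hR : 0 ≤ R)
    (hg : ∀ t, R < t → g t = 0) : ∫ t, g t = 2 * ∫ t in 0..R, g t := by
  have habs : ∀ t, g |t| = g t := fun t ↦ by
    rcases abs_choice t with h | h <;> rw [h]
    exact heven t
  rw [← integral_congr_ae (.of_forall habs), integral_comp_abs,
    intervalIntegral.integral_of_le hR]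
  congr 1
  exact setIntegral_eq_of_subset_of_forall_sdiff_eq_zero measurableSet_Ioi Ioc_subset_Ioi_self
    fun t ht ↦ hg t (by simpa using ht.2 ∘ fun h ↦ ⟨ht.1, h⟩)

end Fourier

section MinorantWeight

open Real

/-- The even weight supported on `[-π, π]` whose Fourier transform, in the frequency `v = 2πu`, is
`4 (4 - v²) (1 + cos πv) / (1 - v²)²`, hence nonpositive for `|v| ≥ 2`. It is `2 (4g + g'')` for the
autocorrelation `g = (sin r - r cos r) / 2` of the cosine on `[-π/2, π/2]`, with `r = π - |t|`
truncated at `0`. -/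
noncomputable def minorantWeight (t : ℝ) : ℝ :=
  5 * sin (max (π - |t|) 0) - 3 * max (π - |t|) 0 * cos (max (π - |t|) 0)

lemma continuous_minorantWeight : Continuous minorantWeight := by
  unfold minorantWeight; fun_prop

lemma even_minorantWeight : minorantWeight.Even := fun t ↦ by simp [minorantWeight]

lemma minorantWeight_of_pi_le_abs {t : ℝ} (ht : π ≤ |t|) : minorantWeight t = 0 := by
  simp [minorantWeight, ht]

lemma minorantWeight_of_mem_Icc {t : ℝ} (ht : t ∈ Icc 0 π) :
    minorantWeight t = 3 * (π - t) * cos t + 5 * sin t := by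
  rw [minorantWeight, abs_of_nonneg ht.1, max_eq_left (sub_nonneg.mpr ht.2), sin_pi_sub,
    cos_pi_sub]
  ring

lemma hasCompactSupport_minorantWeight : HasCompactSupport minorantWeight :=
  .intro (isCompact_Icc (a := -π) (b := π)) fun _ ht ↦
    minorantWeight_of_pi_le_abs (by rw [mem_Icc, ← abs_le] at ht; exact (not_le.mp ht).le)

lemma integrable_minorantWeight : Integrable minorantWeight :=
  continuous_minorantWeight.integrable_of_hasCompactSupport hasCompactSupport_minorantWeight

lemma integral_pi_sub_mul_cos_add_sin {a : ℝ} (ha : a ≠ 0) :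
    ∫ t in 0..π, (3 * (π - t) * cos (a * t) + 5 * sin (a * t)) =
      (3 + 5 * a) * (1 - cos (a * π)) / a ^ 2 := by
  rw [intervalIntegral.integral_eq_sub_of_hasDerivAt
    (f := fun t ↦ 3 * (π - t) * (sin (a * t) / a) - (3 / a ^ 2 + 5 / a) * cos (a * t))]
  · simp only [sub_self, mul_zero, zero_mul, sin_zero, cos_zero]
    field_simp
    ring
  · intro t _
    have hlin : HasDerivAt (fun t ↦ a * t) a t := hasDerivAt_const_mul a
    have hsin := (((hasDerivAt_id t).const_sub π).const_mul 3).mul (hlin.sin.div_const a)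
    refine (hsin.sub (hlin.cos.const_mul (3 / a ^ 2 + 5 / a))).congr_deriv ?_
    simp only [id]
    field_simp
    ring
  · exact Continuous.intervalIntegrable (by fun_prop) _ _

lemma fourier_minorantWeight_eq_integral (u : ℝ) :
    𝓕 (fun t ↦ (minorantWeight t : ℂ)) u =
      (2 * ∫ t in 0..π, (3 * (π - t) * cos t + 5 * sin t) * cos (2 * π * u * t) : ℝ) := by
  have heven : (fun t ↦ minorantWeight t * cos (2 * π * u * t)).Even := fun t ↦ by
    simp [even_minorantWeight t]
  rw [fourier_ofReal_of_even integrable_minorantWeight even_minorantWeight,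
    integral_even_eq_two_mul_intervalIntegral heven pi_pos.le fun t ht ↦ by
      rw [minorantWeight_of_pi_le_abs (ht.le.trans (le_abs_self t)), zero_mul]]
  congr 2
  refine intervalIntegral.integral_congr fun t ht ↦ ?_
  rw [uIcc_of_le pi_pos.le] at ht
  simp only [minorantWeight_of_mem_Icc ht]

lemma two_mul_integral_mul_cos {v : ℝ} (hv : v ^ 2 ≠ 1) :
    2 * ∫ t in 0..π, (3 * (π - t) * cos t + 5 * sin t) * cos (v * t) =
      4 * (4 - v ^ 2) * (1 + cos (v * π)) / (1 - v ^ 2) ^ 2 := by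
  obtain ⟨hne, hne'⟩ : 1 - v ≠ 0 ∧ 1 + v ≠ 0 := by
    rw [← mul_ne_zero_iff]
    exact fun h ↦ hv (by linarith)
  have hsplit : ∀ t, 2 * ((3 * (π - t) * cos t + 5 * sin t) * cos (v * t)) =
      (3 * (π - t) * cos ((1 + v) * t) + 5 * sin ((1 + v) * t)) +
        (3 * (π - t) * cos ((1 - v) * t) + 5 * sin ((1 - v) * t)) := fun t ↦ by
    rw [one_add_mul, one_sub_mul, cos_add, cos_sub, sin_add, sin_sub]
    ring
  rw [← intervalIntegral.integral_const_mul]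
  simp_rw [hsplit]
  rw [intervalIntegral.integral_add (Continuous.intervalIntegrable (by fun_prop) _ _)
      (Continuous.intervalIntegrable (by fun_prop) _ _), integral_pi_sub_mul_cos_add_sin hne,
    integral_pi_sub_mul_cos_add_sin hne', one_add_mul, one_sub_mul, add_comm π,
    cos_add_pi, cos_pi_sub, show 1 - v ^ 2 = (1 - v) * (1 + v) by ring]
  field_simp
  ring

lemma fourier_minorantWeight {u : ℝ} (hu : (2 * π * u) ^ 2 ≠ 1) :
    𝓕 (fun t ↦ (minorantWeight t : ℂ)) u = ((4 * (4 - (2 * π * u) ^ 2) *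
      (1 + cos (2 * π * u * π)) / (1 - (2 * π * u) ^ 2) ^ 2 : ℝ) : ℂ) := by
  rw [fourier_minorantWeight_eq_integral, two_mul_integral_mul_cos hu]

lemma fourier_minorantWeight_nonpos {u : ℝ} (hu : 2 ≤ |2 * π * u|) :
    𝓕 (fun t ↦ (minorantWeight t : ℂ)) u ≤ 0 := by
  have hsq : 4 ≤ (2 * π * u) ^ 2 := by rw [← sq_abs]; nlinarith
  rw [fourier_minorantWeight (by linarith), ← Complex.ofReal_zero, Complex.real_le_real]
  have hcos := neg_one_le_cos (2 * π * u * π)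
  exact div_nonpos_of_nonpos_of_nonneg
    (mul_nonpos_of_nonpos_of_nonneg (by linarith) (by linarith)) (sq_nonneg _)

lemma norm_fourier_minorantWeight_le {u : ℝ} (hu : 2 ≤ |2 * π * u|) :
    ‖𝓕 (fun t ↦ (minorantWeight t : ℂ)) u‖ ≤ 8 * (1 + (2 * π * u) ^ 2)⁻¹ := by
  have hsq : 4 ≤ (2 * π * u) ^ 2 := by rw [← sq_abs]; nlinarith
  have hcos := neg_one_le_cos (2 * π * u * π)
  rw [fourier_minorantWeight (by linarith), Complex.norm_real, norm_eq_abs, abs_div, abs_mul,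
    abs_mul, abs_of_nonpos (by linarith : 4 - (2 * π * u) ^ 2 ≤ 0),
    abs_of_nonneg (by linarith : 0 ≤ 1 + cos (2 * π * u * π)), abs_of_pos (by norm_num),
    abs_of_nonneg (sq_nonneg _), ← div_eq_mul_inv, div_le_div_iff₀ (by nlinarith) (by positivity)]
  generalize (2 * π * u) ^ 2 = x at *
  have hle := cos_le_one (2 * π * u * π)
  calc 4 * -(4 - x) * (1 + cos (2 * π * u * π)) * (1 + x) ≤ 4 * -(4 - x) * 2 * (1 + x) := by
        gcongr <;> linarith
    _ ≤ 8 * (1 - x) ^ 2 := by nlinarith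

lemma integrable_fourier_minorantWeight :
    Integrable (𝓕 fun t ↦ (minorantWeight t : ℂ)) := by
  have hcont : Continuous (𝓕 fun t ↦ (minorantWeight t : ℂ)) :=
    VectorFourier.fourierIntegral_continuous Real.continuous_fourierChar
      (innerSL ℝ).continuous₂ integrable_minorantWeight.ofReal
  refine hcont.locallyIntegrable.integrable_of_isBigO_cocompact
    (g := fun u ↦ (1 + (2 * π * u) ^ 2)⁻¹) (.of_bound 8 ?_) ?_
  · filter_upwards [((tendsto_norm_cocompact_atTop (E := ℝ)).const_mul_atTop
      two_pi_pos).eventually_ge_atTop 2] with u hu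
    rw [norm_of_nonneg (by positivity : 0 ≤ (1 + (2 * π * u) ^ 2)⁻¹)]
    refine norm_fourier_minorantWeight_le ?_
    rwa [abs_mul, abs_of_pos two_pi_pos]
  · exact ((integrable_inv_one_add_sq.comp_mul_left' two_pi_pos.ne').integrableAtFilter _)

theorem exists_fourier_nonpos_of_le_abs {δ : ℝ} (hδ : 0 < δ) :
    ∃ w : ℝ → ℂ, Continuous w ∧ HasCompactSupport w ∧ Integrable (𝓕 w) ∧ 0 < w 0 ∧
      ∀ u, δ ≤ |u| → 𝓕 w u ≤ 0 := by
  have hc : 0 < π * δ := by positivity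
  have hfourier := fourier_comp_mul_left (fun t ↦ (minorantWeight t : ℂ)) hc.ne'
  refine ⟨fun t ↦ minorantWeight (π * δ * t), ?_, ?_, ?_, ?_, fun u hu ↦ ?_⟩
  · exact Complex.continuous_ofReal.comp (continuous_minorantWeight.comp (by fun_prop))
  · exact (hasCompactSupport_minorantWeight.comp_left (g := Complex.ofReal) rfl).comp_homeomorph
      (Homeomorph.mulLeft₀ _ hc.ne')
  · rw [funext hfourier]
    exact (integrable_fourier_minorantWeight.comp_div hc.ne').smul _
  · simp [minorantWeight_of_mem_Icc ⟨le_rfl, pi_pos.le⟩, pi_pos]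
  · rw [hfourier]
    refine smul_nonpos_of_nonneg_of_nonpos (by positivity) (fourier_minorantWeight_nonpos ?_)
    rw [show 2 * π * (u / (π * δ)) = 2 * (u / δ) by field_simp, abs_mul, abs_div, abs_of_pos hδ,
      abs_two]
    linarith [(one_le_div hδ).mpr hu]

end MinorantWeight

section Tauberian

open Real

variable {f : ℕ → ℂ} {w : ℝ → ℂ}

lemma integral_mul_fourier_sub {Y : Type*} [MeasurableSpace Y] {μ : Measure Y} [SFinite μ]
    {c : Y → ℂ} {ℓ : Y → ℝ} (hc : Integrable c μ) (hℓ : Measurable ℓ) (hw : Integrable w) (x : ℝ) :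
    ∫ y, c y * 𝓕 w (ℓ y - x) ∂μ = 𝓕⁻ (fun t ↦ w t * ∫ y, 𝐞 (-(t * ℓ y)) • c y ∂μ) x := by
  have hint : Integrable (fun z : Y × ℝ ↦ 𝐞 (-(z.2 * (ℓ z.1 - x))) • (c z.1 * w z.2))
      (μ.prod volume) :=
    (hc.mul_prod hw).bdd_mul (c := 1) (by fun_prop)
      (.of_forall fun _ ↦ (Circle.norm_coe _).le)
  have hchar (y : Y) (t : ℝ) : 𝐞 (-(t * (ℓ y - x))) = 𝐞 (t * x) * 𝐞 (-(t * ℓ y)) := by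
    rw [← AddChar.map_add_eq_mul]
    ring_nf
  simp_rw [fourierInv_eq, fourier_real_eq, Circle.smul_def, smul_eq_mul, ← integral_const_mul]
  rw [integral_integral_swap (hint.congr (.of_forall fun z ↦ mul_left_comm ..))]
  congr! 4 with t _
  rw [hchar, Circle.coe_mul, RCLike.inner_apply, conj_trivial, mul_comm x]
  ring

lemma LSeries_term_add_two_pi_mul_I (f : ℕ → ℂ) (s : ℂ) (t : ℝ) (n : ℕ) :
    LSeries.term f (s + 2 * π * t * Complex.I) n = 𝐞 (-(t * log n)) • LSeries.term f s n := by
  rcases eq_or_ne n 0 with rfl | hn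
  · simp
  · have hn' : (n : ℂ) ≠ 0 := Nat.cast_ne_zero.mpr hn
    have hpow : (n : ℂ) ^ (2 * π * t * Complex.I) = (𝐞 (-(t * log n)) : ℂ)⁻¹ := by
      rw [fourierChar_apply, Complex.cpow_def_of_ne_zero hn', ← Complex.exp_neg,
        ← Complex.natCast_log]
      push_cast
      ring_nf
    rw [LSeries.term_of_ne_zero hn, LSeries.term_of_ne_zero hn, Complex.cpow_add _ _ hn', hpow,
      Circle.smul_def, smul_eq_mul, div_mul_eq_div_div, div_inv_eq_mul, mul_comm]

lemma integral_count_eq_tsum {Y E : Type*} [Countable Y] [MeasurableSpace Y]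
    [MeasurableSingletonClass Y] [NormedAddCommGroup E] [NormedSpace ℝ E] [FiniteDimensional ℝ E]
    (g : Y → E) : ∫ y, g y ∂.count = ∑' y, g y := by
  by_cases hg : Summable g
  · simp [integral_countable (integrable_count_iff.mpr hg.norm)]
  · rw [tsum_eq_zero_of_not_summable hg, integral_undef]
    rwa [integrable_count_iff, summable_norm_iff]

lemma tsum_term_mul_fourier {s : ℂ} (hf : LSeriesSummable f s) (hw : Integrable w) (x : ℝ) :
    ∑' n, LSeries.term f s n * 𝓕 w (log n - x) =
      𝓕⁻ (fun t ↦ w t * LSeries f (s + 2 * π * t * Complex.I)) x := by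
  have hint : Integrable (LSeries.term f s) .count := integrable_count_iff.mpr hf.norm
  simpa only [LSeries, integral_count_eq_tsum, ← LSeries_term_add_two_pi_mul_I] using
    integral_mul_fourier_sub hint (measurable_of_countable fun n : ℕ ↦ log n) hw x

lemma fourierInv_mul_inv_eq_integral {ε : ℝ} (hε : 0 < ε) (hw : Integrable w) (x : ℝ) :
    𝓕⁻ (fun t ↦ w t * (ε + 2 * π * t * Complex.I)⁻¹) x =
      ∫ y in Ioi (0 : ℝ), Complex.exp (-ε * y) * 𝓕 w (y - x) := by
  have hint : IntegrableOn (fun y : ℝ ↦ Complex.exp (-ε * y)) (Ioi 0) :=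
    integrableOn_exp_mul_complex_Ioi (by simpa) 0
  rw [integral_mul_fourier_sub hint (ℓ := fun y ↦ y) measurable_id hw]
  congr! 3 with t
  have hre : (-(ε + 2 * π * t * Complex.I)).re < 0 := by simpa
  have hpole := integral_exp_mul_complex_Ioi hre 0
  rw [Complex.ofReal_zero, mul_zero, Complex.exp_zero, neg_div_neg_eq, one_div] at hpole
  rw [← hpole]
  congr! 2 with y
  rw [Circle.smul_def, fourierChar_apply, smul_eq_mul, ← Complex.exp_add]
  push_cast
  ring_nf

lemma tendsto_fourierInv_mul_boundary {G : ℂ → ℂ} {b : ℝ} (hG : ContinuousOn G {s | b ≤ s.re})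
    (hw : Continuous w) (hsupp : HasCompactSupport w) (x : ℝ) :
    Tendsto (fun σ : ℝ ↦ 𝓕⁻ (fun t ↦ w t * G (σ + 2 * π * t * Complex.I)) x) (𝓝[>] b)
      (𝓝 (𝓕⁻ (fun t ↦ w t * G (b + 2 * π * t * Complex.I)) x)) := by
  simp_rw [fourierInv_eq]
  refine (ContinuousOn.continuousWithinAt (f := fun σ : ℝ ↦
    ∫ t, 𝐞 (inner ℝ t x) • (w t * G (σ + 2 * π * t * Complex.I))) (s := Ici b) ?_
    self_mem_Ici).tendsto.mono_left (nhdsWithin_mono _ Ioi_subset_Ici_self)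
  refine continuousOn_integral_of_compact_support hsupp ?_ fun σ t _ ht ↦ ?_
  · have hline : ContinuousOn (fun p : ℝ × ℝ ↦ G (p.1 + 2 * π * p.2 * Complex.I))
        (Ici b ×ˢ univ) :=
      hG.comp (Continuous.continuousOn (by fun_prop)) fun p hp ↦ by simpa using hp.1
    exact ContinuousOn.smul (Continuous.continuousOn (by fun_prop))
      (ContinuousOn.mul (Continuous.continuousOn (by fun_prop)) hline)
  · simp [image_eq_zero_of_notMem_tsupport ht]

lemma tendsto_integral_Ioi_exp_neg_mul {φ : ℝ → ℂ} (hφ : IntegrableOn φ (Ioi 0)) :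
    Tendsto (fun ε : ℝ ↦ ∫ y in Ioi (0 : ℝ), Complex.exp (-ε * y) * φ y) (𝓝[>] 0)
      (𝓝 (∫ y in Ioi 0, φ y)) := by
  refine tendsto_integral_filter_of_dominated_convergence (‖φ ·‖) ?_ ?_ hφ.norm ?_
  · exact .of_forall fun ε ↦ AEStronglyMeasurable.mul (by fun_prop) hφ.1
  · filter_upwards [self_mem_nhdsWithin] with ε hε
    filter_upwards [ae_restrict_mem measurableSet_Ioi] with y hy
    have hexp : -(ε * y) ≤ 0 := neg_nonpos.mpr (mul_pos hε hy).le
    simpa [Complex.norm_exp] using mul_le_of_le_one_left (norm_nonneg _) (exp_le_one_iff.mpr hexp)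
  · refine .of_forall fun y ↦ ?_
    have hcont : Continuous fun ε : ℝ ↦ Complex.exp (-ε * y) * φ y := by fun_prop
    simpa using (hcont.tendsto 0).mono_left nhdsWithin_le_nhds

lemma tendsto_integral_Ioi_comp_sub_s8 {E : Type*} [NormedAddCommGroup E] [NormedSpace ℝ E]
    {φ : ℝ → E} (hφ : Integrable φ) :
    Tendsto (fun x ↦ ∫ y in Ioi 0, φ (y - x)) atTop (𝓝 (∫ y, φ y)) := by
  have hshift (x : ℝ) : ∫ y in Ioi 0, φ (y - x) = ∫ y in Ioi (-x), φ y := by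
    simpa using (measurePreserving_sub_right volume x).setIntegral_preimage_emb
      (measurableEmbedding_subRight x) φ (Ioi (-x))
  simp_rw [hshift]
  exact (aecover_Ioi tendsto_neg_atTop_atBot).integral_tendsto_of_countably_generated hφ

section Pole

variable {A : ℂ} {b : ℝ} {G : ℂ → ℂ}

lemma fourierInv_mul_LSeries_eq (hG : ContinuousOn G {s | b ≤ s.re})
    (hGf : EqOn G (fun s ↦ LSeries f s - A / (s - b)) {s | b < s.re})
    (hw : Continuous w) (hsupp : HasCompactSupport w) {σ : ℝ} (hσ : b < σ) (x : ℝ) :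
    𝓕⁻ (fun t ↦ w t * LSeries f (σ + 2 * π * t * Complex.I)) x =
      𝓕⁻ (fun t ↦ w t * G (σ + 2 * π * t * Complex.I)) x +
        A * ∫ y in Ioi (0 : ℝ), Complex.exp (-(σ - b : ℝ) * y) * 𝓕 w (y - x) := by
  have hint {g : ℝ → ℂ} (hg : Continuous g) : Integrable fun t ↦ 𝐞 (inner ℝ t x) • (w t * g t) :=
    Continuous.integrable_of_hasCompactSupport (by fun_prop) hsupp.mul_right.smul_left
  have hGline : Continuous fun t : ℝ ↦ G (σ + 2 * π * t * Complex.I) :=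
    hG.comp_continuous (by fun_prop) fun t ↦ by simpa using hσ.le
  have hpole : Continuous fun t : ℝ ↦ ((σ - b : ℝ) + 2 * π * t * Complex.I)⁻¹ :=
    Continuous.inv₀ (by fun_prop) fun t h ↦ by
      simpa [sub_ne_zero.mpr hσ.ne'] using congrArg Complex.re h
  rw [← fourierInv_mul_inv_eq_integral (sub_pos.mpr hσ)
    (hw.integrable_of_hasCompactSupport hsupp)]
  simp_rw [fourierInv_eq]
  rw [← integral_const_mul, ← integral_add (hint hGline) ((hint hpole).const_mul A)]
  congr! 2 with t
  have hGt : G (σ + 2 * π * t * Complex.I) = _ :=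
    hGf (show b < (σ + 2 * π * t * Complex.I : ℂ).re by simpa)
  rw [hGt, mul_smul_comm, ← smul_add]
  push_cast
  ring_nf

lemma tendsto_tsum_term_mul_fourier (hf : ∀ s : ℂ, b < s.re → LSeriesSummable f s)
    (hG : ContinuousOn G {s | b ≤ s.re})
    (hGf : EqOn G (fun s ↦ LSeries f s - A / (s - b)) {s | b < s.re})
    (hw : Continuous w) (hsupp : HasCompactSupport w) (hint : Integrable (𝓕 w)) (x : ℝ) :
    Tendsto (fun σ : ℝ ↦ ∑' n, LSeries.term f σ n * 𝓕 w (log n - x)) (𝓝[>] b)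
      (𝓝 (𝓕⁻ (fun t ↦ w t * G (b + 2 * π * t * Complex.I)) x +
        A * ∫ y in Ioi 0, 𝓕 w (y - x))) := by
  have hwi : Integrable w := hw.integrable_of_hasCompactSupport hsupp
  have hsub : Tendsto (· - b) (𝓝[>] b) (𝓝[>] 0) := tendsto_nhdsWithin_iff.mpr
    ⟨tendsto_nhdsWithin_of_tendsto_nhds (by simpa using (continuous_sub_right b).tendsto b),
      eventually_mem_nhdsWithin.mono fun _ ↦ sub_pos.mpr ∘ mem_Ioi.mp⟩
  have habel := (tendsto_integral_Ioi_exp_neg_mul (hint.comp_sub_right x).integrableOn).comp hsub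
  refine ((tendsto_fourierInv_mul_boundary hG hw hsupp x).add (habel.const_mul A)).congr' ?_
  filter_upwards [self_mem_nhdsWithin] with σ hσ
  rw [tsum_term_mul_fourier (hf σ hσ) hwi, fourierInv_mul_LSeries_eq hG hGf hw hsupp hσ]
  rfl

lemma tendsto_fourierInv_add_integral_Ioi (g : ℝ → ℂ) (A : ℂ) (hw : Continuous w)
    (hsupp : HasCompactSupport w) (hint : Integrable (𝓕 w)) :
    Tendsto (fun x ↦ 𝓕⁻ g x + A * ∫ y in Ioi 0, 𝓕 w (y - x)) atTop (𝓝 (A * w 0)) := by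
  have hlebesgue : Tendsto (𝓕⁻ g) atTop (𝓝 0) := by
    refine ((zero_at_infty_fourier g).mono_left atBot_le_cocompact).comp
      tendsto_neg_atTop_atBot |>.congr fun x ↦ ?_
    simp [fourierInv_eq_fourier_neg]
  rw [← integral_fourier_eq_apply_zero_s8 hw (hw.integrable_of_hasCompactSupport hsupp) hint]
  simpa using hlebesgue.add ((tendsto_integral_Ioi_comp_sub_s8 hint).const_mul A)

theorem eventually_exists_ne_zero_abs_log_sub_lt (hf₀ : 0 ≤ f)
    (hf : ∀ s : ℂ, b < s.re → LSeriesSummable f s) (hG : ContinuousOn G {s | b ≤ s.re})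
    (hGf : EqOn G (fun s ↦ LSeries f s - A / (s - b)) {s | b < s.re}) (hA : 0 < A)
    {δ : ℝ} (hδ : 0 < δ) : ∀ᶠ x in atTop, ∃ n, f n ≠ 0 ∧ |log n - x| < δ := by
  obtain ⟨w, hw, hsupp, hint, hw₀, hneg⟩ := exists_fourier_nonpos_of_le_abs hδ
  have hlim := tendsto_fourierInv_add_integral_Ioi (fun t ↦ w t * G (b + 2 * π * t * Complex.I)) A
    hw hsupp hint
  filter_upwards [hlim.eventually (isClosed_Iic.isOpen_compl.mem_nhds (mul_pos hA hw₀).not_ge)]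
    with x hx
  contrapose! hx
  refine le_of_tendsto (tendsto_tsum_term_mul_fourier hf hG hGf hw hsupp hint x)
    (.of_forall fun σ ↦ tsum_nonpos fun n ↦ ?_)
  rcases eq_or_ne (f n) 0 with hn | hn
  · simp [LSeries.term, hn]
  · exact mul_nonpos_of_nonneg_of_nonpos (LSeries.term_nonneg (hf₀ n) σ) (hneg _ (hx n hn))

end Pole

end Tauberian

section ArithmeticProgression

open ArithmeticFunction vonMangoldt

lemma continuousOn_LSeries_of_summable {f : ℕ → ℂ} {s : ℂ} (hf : LSeriesSummable f s) :
    ContinuousOn (LSeries f) {z | s.re ≤ z.re} :=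
  continuousOn_tsum (u := (‖LSeries.term f s ·‖))
    (fun n z _ ↦ (LSeries.hasDerivAt_term f n z).continuousAt.continuousWithinAt) hf.norm
    fun n _ hz ↦ LSeries.norm_term_le_of_re_le_re f hz n

variable {q : ℕ} {a : ZMod q}

lemma LSeriesSummable_residueClass (a : ZMod q) {s : ℂ} (hs : 1 < s.re) :
    LSeriesSummable (fun n ↦ (residueClass a n : ℂ)) s :=
  LSeriesSummable_of_abscissaOfAbsConv_lt_re <|
    (abscissaOfAbsConv_residueClass_le_one a).trans_lt (mod_cast hs)

/-- The restriction to the primes of the weight `n ↦ Λ n` on the residue class of `a`. Its support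
consists of the primes congruent to `a`. -/
noncomputable def residueClassPrimes (a : ZMod q) (n : ℕ) : ℂ :=
  if n.Prime then residueClass a n else 0

/-- The part of the weight `n ↦ Λ n` on the residue class of `a` carried by proper prime powers. -/
noncomputable def residueClassNonprimes (a : ZMod q) (n : ℕ) : ℂ :=
  if n.Prime then 0 else residueClass a n

lemma residueClass_sub_residueClassNonprimes (a : ZMod q) :
    (fun n ↦ (residueClass a n : ℂ)) - residueClassNonprimes a = residueClassPrimes a := by
  ext n
  by_cases hn : n.Prime <;> simp [residueClassPrimes, residueClassNonprimes, hn]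

lemma residueClassPrimes_nonneg (a : ZMod q) : 0 ≤ residueClassPrimes a := fun n ↦ by
  by_cases hn : n.Prime <;> simp [residueClassPrimes, hn, residueClass_nonneg]

lemma prime_and_eq_of_residueClassPrimes_ne_zero {n : ℕ} (hn : residueClassPrimes a n ≠ 0) :
    n.Prime ∧ (n : ZMod q) = a := by
  by_contra! h
  by_cases hp : n.Prime <;> simp_all [residueClassPrimes, residueClass]

lemma LSeriesSummable_residueClassNonprimes (a : ZMod q) :
    LSeriesSummable (residueClassNonprimes a) 1 := by
  refine (Complex.ofRealCLM.summable (summable_residueClass_non_primes_div a)).congr fun n ↦ ?_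
  by_cases hn : n.Prime <;> simp [LSeries.term_def₀, residueClassNonprimes, hn, div_eq_mul_inv,
    Complex.cpow_neg_one]

lemma LSeriesSummable_residueClassNonprimes_of_one_lt (a : ZMod q) {s : ℂ} (hs : 1 < s.re) :
    LSeriesSummable (residueClassNonprimes a) s :=
  (LSeriesSummable_residueClassNonprimes a).of_re_le_re (by simpa using hs.le)

lemma LSeriesSummable_residueClassPrimes (a : ZMod q) {s : ℂ} (hs : 1 < s.re) :
    LSeriesSummable (residueClassPrimes a) s := by
  rw [← residueClass_sub_residueClassNonprimes]
  exact (LSeriesSummable_residueClass a hs).sub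
    (LSeriesSummable_residueClassNonprimes_of_one_lt a hs)

lemma eqOn_LFunctionResidueClassAux_sub [NeZero q] (ha : IsUnit a) :
    EqOn (LFunctionResidueClassAux a - LSeries (residueClassNonprimes a))
      (fun s ↦ LSeries (residueClassPrimes a) s - (q.totient : ℂ)⁻¹ / (s - 1))
      {s | 1 < s.re} := fun s hs ↦ by
  beta_reduce
  rw [← residueClass_sub_residueClassNonprimes, LSeries_sub (LSeriesSummable_residueClass a hs)
    (LSeriesSummable_residueClassNonprimes_of_one_lt a hs), Pi.sub_apply,
    eqOn_LFunctionResidueClassAux ha hs, sub_right_comm]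

theorem eventually_exists_prime_abs_log_sub_lt [NeZero q] (ha : IsUnit a) {δ : ℝ} (hδ : 0 < δ) :
    ∀ᶠ x in atTop, ∃ p : ℕ, p.Prime ∧ (p : ZMod q) = a ∧ |Real.log p - x| < δ := by
  have hG : ContinuousOn (LFunctionResidueClassAux a - LSeries (residueClassNonprimes a))
      {s | 1 ≤ s.re} :=
    (continuousOn_LFunctionResidueClassAux a).sub
      (continuousOn_LSeries_of_summable (LSeriesSummable_residueClassNonprimes a))
  have hA : 0 < (q.totient : ℂ)⁻¹ := by
    simpa using Nat.totient_pos.mpr (NeZero.pos q)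
  filter_upwards [eventually_exists_ne_zero_abs_log_sub_lt (b := 1) (residueClassPrimes_nonneg a)
    (fun _ ↦ LSeriesSummable_residueClassPrimes a) hG
    (by simpa using eqOn_LFunctionResidueClassAux_sub ha) hA hδ] with x ⟨p, hp, hpx⟩
  obtain ⟨hprime, hpa⟩ := prime_and_eq_of_residueClassPrimes_ne_zero hp
  exact ⟨p, hprime, hpa, hpx⟩

end ArithmeticProgression

/-- Lemma 1: for `m ≥ 2`, `gcd(a,m) = 1` and real `α > 1`, there is a positive
integer `m₀` such that for every `n ≥ m₀` the interval `[α^n, α^(n+1)]`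
contains a prime `p ≡ a (mod m)`. -/
theorem stmt_8 (a m : ℕ) (hm : 2 ≤ m) (ha : Nat.gcd a m = 1) (α : ℝ) (hα : 1 < α) :
    ∃ m₀ : ℕ, 0 < m₀ ∧ ∀ n : ℕ, m₀ ≤ n →
      ∃ p : ℕ, Nat.Prime p ∧ p % m = a % m ∧ α ^ n ≤ (p : ℝ) ∧ (p : ℝ) ≤ α ^ (n + 1) := by
  have : NeZero m := ⟨by lia⟩
  have hunit : IsUnit (a : ZMod m) := (ZMod.isUnit_iff_coprime a m).mpr ha
  have hlog : 0 < Real.log α := Real.log_pos hα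
  have hmid : Tendsto (fun n : ℕ ↦ n * Real.log α + Real.log α / 2) atTop atTop :=
    tendsto_atTop_add_const_right _ _ (tendsto_natCast_atTop_atTop.atTop_mul_const hlog)
  obtain ⟨N, hN⟩ := eventually_atTop.mp
    (hmid.eventually (eventually_exists_prime_abs_log_sub_lt hunit (half_pos hlog)))
  refine ⟨N + 1, N.succ_pos, fun n hn ↦ ?_⟩
  obtain ⟨p, hp, hpa, hpn⟩ := hN n (by lia)
  have hp₀ : (0 : ℝ) < p := mod_cast hp.pos
  obtain ⟨hlower, hupper⟩ := abs_lt.mp hpn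
  refine ⟨p, hp, (ZMod.natCast_eq_natCast_iff' p a m).mp hpa, ?_, ?_⟩
  · rw [← Real.log_le_log_iff (by positivity) hp₀, Real.log_pow]
    linarith
  · rw [← Real.log_le_log_iff hp₀ (by positivity), Real.log_pow]
    push_cast
    linarith
end

section
/- Let K be an algebraic number field with ring of integers O_K. Then there exists a real number B_K > 1 such that for every real x > 1 there is a nonzero prime ideal 𝔭 of O_K whose absolute norm N(𝔭) satisfies x ≤ N(𝔭) ≤ B_K·x. -/
/-!
Let `n = [K : ℚ]` and take all `x` in a cube of side `M` in the coordinates of an integral basis of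
`𝓞 K`, translated by a large rational integer multiple of `M` so that all conjugates of `x` have
absolute value between `M` and `κ * M`. Then `∑ log N(x) = M ^ n * (n * log M + O(1))`.

Factoring each `(x)` into primes, the same sum is `∑ #{x | x ∈ p ^ k} * log N(p)` over `p` and
`k ≥ 1`. A nonzero ideal `I` contains an element with coordinates `O(N(I) ^ (1 / n))` by the
pigeonhole principle, hence `𝓞 K ⧸ I` has representatives of that size, and `I` contains
`M ^ n / N(I) + O(M ^ (n - 1) * N(I) ^ (1 / n - 1))` points of the cube, uniformly in `I`.
With Chebyshev's bound `∑_{N(p) ≤ Y} log N(p) = O(Y)`, deduced from the primorial bound over `ℚ`,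
the error terms and the terms with `k ≥ 2` contribute `O(M ^ n)`. Dividing by `M ^ n` gives Mertens'
theorem `∑_{N(p) ≤ Y} log N(p) / N(p) = log Y + O(1)`, so the sum must grow between `Y` and `D * Y`
once `log D` exceeds twice the error bound.
-/

namespace NumberFieldMertens

open Module Finset

section Index

variable {G : Type*} [AddCommGroup G] {H : AddSubgroup G} [H.FiniteIndex] {s t : Finset G}

theorem exists_sub_mem_of_index_lt_card (hs : H.index < #s) :
    ∃ x ∈ s, ∃ y ∈ s, x ≠ y ∧ x - y ∈ H := by
  have := H.fintypeQuotientOfFiniteIndex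
  rw [AddSubgroup.index, Nat.card_eq_fintype_card, ← card_univ] at hs
  obtain ⟨x, hx, y, hy, hne, hxy⟩ := exists_ne_map_eq_of_card_lt_of_maps_to hs
    (f := QuotientAddGroup.mk (s := H)) fun x _ ↦ mem_coe.2 (mem_univ _)
  exact ⟨x, hx, y, hy, hne, QuotientAddGroup.eq_iff_sub_mem.1 hxy⟩

variable {D : Set G} [DecidablePred (· ∈ H)]

theorem index_mul_card_filter_mem_le (hD : ∀ c : G ⧸ H, ∃ r ∈ D, (r : G ⧸ H) = c)
    (hst : ∀ x ∈ s, ∀ r ∈ D, x + r ∈ t) : H.index * #{x ∈ s | x ∈ H} ≤ #t := by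
  choose rep rep_mem mk_rep using hD
  have := H.fintypeQuotientOfFiniteIndex
  rw [AddSubgroup.index, Nat.card_eq_fintype_card, ← card_univ, ← card_product]
  refine card_le_card_of_injOn (fun y ↦ y.2 + rep y.1) ?_ ?_
  · rintro ⟨c, x⟩ h
    simp only [coe_product, coe_filter, Set.mem_prod] at h
    exact hst x h.2.1 _ (rep_mem _)
  · rintro ⟨c, x⟩ h ⟨c', x'⟩ h' hxx
    simp only [coe_product, coe_filter, Set.mem_prod, Set.mem_ofPred_eq] at h h' hxx
    have hc : c = c' := by
      have := congrArg (QuotientAddGroup.mk (s := H)) hxx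
      simpa [mk_rep, (QuotientAddGroup.eq_zero_iff x).2 h.2.2,
        (QuotientAddGroup.eq_zero_iff x').2 h'.2.2] using this
    simpa [hc] using hxx

theorem card_le_index_mul_card_filter_mem (hD : ∀ c : G ⧸ H, ∃ r ∈ D, (r : G ⧸ H) = c)
    (hts : ∀ x ∈ t, ∀ r ∈ D, x - r ∈ s) : #t ≤ H.index * #{x ∈ s | x ∈ H} := by
  choose rep rep_mem mk_rep using hD
  have := H.fintypeQuotientOfFiniteIndex
  rw [AddSubgroup.index, Nat.card_eq_fintype_card, ← card_univ, ← card_product]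
  refine card_le_card_of_injOn (fun x ↦ ((x : G ⧸ H), x - rep x)) ?_ ?_
  · intro x hx
    simpa using ⟨hts x hx _ (rep_mem _), QuotientAddGroup.eq_iff_sub_mem.1 (mk_rep x).symm⟩
  · intro x _ y _ hxy
    obtain ⟨hq, hsub⟩ := Prod.ext_iff.1 hxy
    simpa [show (x : G ⧸ H) = y from hq] using hsub

end Index

section Box

variable {ι G : Type*} [Fintype ι] [AddCommGroup G] (b : Basis ι ℤ G)

open Classical in
/-- The elements whose coordinates with respect to `b` lie in the half-open cube of side `M` with
lowest corner `z`. -/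
noncomputable def box (z : G) (M : ℕ) : Finset G :=
  (Fintype.piFinset fun _ ↦ Ico (0 : ℤ) M).map
    (b.equivFun.symm.toEquiv.trans (Equiv.addLeft z)).toEmbedding

variable {b}

theorem mem_box {z x : G} {M : ℕ} :
    x ∈ box b z M ↔ ∀ i, 0 ≤ b.repr (x - z) i ∧ b.repr (x - z) i < M := by
  simp only [box, mem_map_equiv, Equiv.symm_trans_apply, Fintype.mem_piFinset, mem_Ico]
  simp [sub_eq_neg_add, Basis.equivFun_apply]

theorem card_box (z : G) (M : ℕ) : #(box b z M) = M ^ Fintype.card ι := by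
  simp [box]

theorem abs_repr_sub_lt_of_mem_box {z x y : G} {M : ℕ} (hx : x ∈ box b z M)
    (hy : y ∈ box b z M) (i : ι) : |b.repr (x - y) i| < M := by
  have hx := mem_box.1 hx i
  have hy := mem_box.1 hy i
  simp only [map_sub, Finsupp.coe_sub, Pi.sub_apply] at hx hy ⊢
  rw [abs_lt]
  omega

variable {H : AddSubgroup G} [H.FiniteIndex] [DecidablePred (· ∈ H)] {d : ℕ}

theorem index_mul_card_box_le
    (hd : ∀ c : G ⧸ H, ∃ r, (∀ i, |b.repr r i| ≤ d) ∧ (r : G ⧸ H) = c) (z : G) (M : ℕ) :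
    H.index * #{x ∈ box b z M | x ∈ H} ≤ (M + 2 * d) ^ Fintype.card ι := by
  classical
  rw [← card_box (b := b) (z - d • ∑ i, b i)]
  refine index_mul_card_filter_mem_le (D := {r | ∀ i, |b.repr r i| ≤ d}) hd
    fun x hx r hr ↦ mem_box.2 fun i ↦ ?_
  have hx := mem_box.1 hx i
  have hr := abs_le.1 (hr i)
  have : b.repr (x + r - (z - d • ∑ i, b i)) i = b.repr (x - z) i + b.repr r i + d := by
    simp [Finsupp.single_apply]
    ring
  omega

theorem pow_le_index_mul_card_box
    (hd : ∀ c : G ⧸ H, ∃ r, (∀ i, |b.repr r i| ≤ d) ∧ (r : G ⧸ H) = c) (z : G) (M : ℕ) :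
    (M - 2 * d) ^ Fintype.card ι ≤ H.index * #{x ∈ box b z M | x ∈ H} := by
  classical
  rw [← card_box (b := b) (z + d • ∑ i, b i)]
  refine card_le_index_mul_card_filter_mem (D := {r | ∀ i, |b.repr r i| ≤ d}) hd
    fun x hx r hr ↦ mem_box.2 fun i ↦ ?_
  have hx := mem_box.1 hx i
  have hr := abs_le.1 (hr i)
  have : b.repr (x - (z + d • ∑ i, b i)) i = b.repr (x - r - z) i + b.repr r i - d := by
    simp [Finsupp.single_apply]
    ring
  omega

theorem abs_index_mul_card_box_sub_le
    (hd : ∀ c : G ⧸ H, ∃ r, (∀ i, |b.repr r i| ≤ d) ∧ (r : G ⧸ H) = c) (z : G) (M : ℕ) :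
    |(H.index * #{x ∈ box b z M | x ∈ H} : ℝ) - M ^ Fintype.card ι| ≤
      2 * d * Fintype.card ι * (M + 2 * d) ^ (Fintype.card ι - 1) := by
  set n := Fintype.card ι
  have upper : (H.index * #{x ∈ box b z M | x ∈ H} : ℝ) ≤ (M + 2 * d) ^ n :=
    mod_cast index_mul_card_box_le hd z M
  have lower : ((M - 2 * d : ℕ) : ℝ) ^ n ≤ H.index * #{x ∈ box b z M | x ∈ H} :=
    mod_cast pow_le_index_mul_card_box hd z M
  have le_sub_add : (M : ℝ) ≤ (M - 2 * d : ℕ) + 2 * d :=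
    mod_cast (by omega : M ≤ M - 2 * d + 2 * d)
  have sub_le : ((M - 2 * d : ℕ) : ℝ) ≤ M := mod_cast Nat.sub_le _ _
  have pow_sub_pow_le {u v : ℝ} (hv : 0 ≤ v) (hvu : v ≤ u) (huv : u ≤ v + 2 * d)
      (hu : u ≤ M + 2 * d) : u ^ n - v ^ n ≤ 2 * d * n * (M + 2 * d) ^ (n - 1) := by
    refine (le_abs_self _).trans ((abs_pow_sub_pow_le u v n).trans ?_)
    rw [abs_of_nonneg (sub_nonneg.2 hvu), abs_of_nonneg hv, abs_of_nonneg (hv.trans hvu),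
      max_eq_left hvu]
    have hu' : 0 ≤ u := hv.trans hvu
    gcongr
    linarith
  rw [abs_le]
  constructor
  · linarith [pow_sub_pow_le (Nat.cast_nonneg _) sub_le le_sub_add (by linarith)]
  · linarith [pow_sub_pow_le (u := M + 2 * d) (v := M) (by positivity) (by simp) le_rfl le_rfl]

end Box

section SmallRepresentatives

variable {ι R : Type*} [Fintype ι] [CommRing R] (b : Basis ι ℤ R)

/-- The sum of the absolute values of the structure constants of the basis `b`, which bounds the
growth of coordinates under multiplication. -/
noncomputable def mulConst : ℕ := ∑ i, ∑ j, ∑ k, (b.repr (b j * b k) i).natAbs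

variable {b}

theorem abs_repr_mul_le {x y : R} {X Y : ℤ} (hx : ∀ i, |b.repr x i| ≤ X)
    (hy : ∀ i, |b.repr y i| ≤ Y) (i : ι) : |b.repr (x * y) i| ≤ mulConst b * (X * Y) := by
  have hX : 0 ≤ X := (abs_nonneg _).trans (hx i)
  have expand : b.repr (x * y) i =
      ∑ j, ∑ k, b.repr x j * b.repr y k * b.repr (b j * b k) i := by
    conv_lhs => rw [← b.sum_repr x, ← b.sum_repr y, sum_mul_sum]
    simp [mul_assoc, mul_left_comm, -zsmul_eq_mul]
  calc |b.repr (x * y) i|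
      ≤ ∑ j, ∑ k, |b.repr x j * b.repr y k * b.repr (b j * b k) i| := by
        rw [expand]
        exact (abs_sum_le_sum_abs _ _).trans (sum_le_sum fun j _ ↦ abs_sum_le_sum_abs _ _)
    _ ≤ ∑ j, ∑ k, |b.repr (b j * b k) i| * (X * Y) := by
        gcongr with j _ k _
        rw [abs_mul, abs_mul, mul_comm]
        gcongr
        exacts [hx j, hy k]
    _ = (∑ j, ∑ k, |b.repr (b j * b k) i|) * (X * Y) := by simp only [sum_mul]
    _ ≤ mulConst b * (X * Y) := by
        have hY : 0 ≤ Y := (abs_nonneg _).trans (hy i)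
        gcongr
        simp only [mulConst, Nat.cast_sum, Int.natCast_natAbs]
        exact single_le_sum (f := fun i ↦ ∑ j, ∑ k, |b.repr (b j * b k) i|)
          (fun i _ ↦ by positivity) (mem_univ i)

theorem exists_abs_repr_le_and_dvd_sub {g : R} {N m : ℕ} (hN : N ≠ 0) (hgN : g ∣ (N : R))
    (hg : ∀ i, |b.repr g i| ≤ m) (x : R) :
    ∃ r, (∀ i, |b.repr r i| ≤ (mulConst b * m : ℕ)) ∧ g ∣ x - r := by
  obtain ⟨g', hg'⟩ := hgN
  have hN' : 0 < (N : ℤ) := mod_cast Nat.pos_of_ne_zero hN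
  -- Dividing by `g` amounts to dividing the coordinates of a multiple of `x` by the integer `N`.
  let q := b.equivFun.symm fun i ↦ b.repr (x * g') i / N
  let s := b.equivFun.symm fun i ↦ b.repr (x * g') i % N
  have repr_s (i : ι) : b.repr s i = b.repr (x * g') i % N :=
    congrFun (b.equivFun.apply_symm_apply _) i
  have repr_q (i : ι) : b.repr q i = b.repr (x * g') i / N :=
    congrFun (b.equivFun.apply_symm_apply _) i
  have div_add_mod : x * g' = N • q + s := b.ext_elem fun i ↦ by
    simp [repr_s, repr_q, Int.mul_ediv_add_emod, -nsmul_eq_mul]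
  have nsmul_remainder : N • (x - g * q) = g * s := by
    rw [nsmul_eq_mul] at div_add_mod ⊢
    linear_combination x * hg' + g * div_add_mod
  refine ⟨x - g * q, fun i ↦ ?_, by simp⟩
  have abs_repr_s (i : ι) : |b.repr s i| ≤ N := by
    rw [repr_s, abs_of_nonneg (Int.emod_nonneg _ hN'.ne')]
    exact (Int.emod_lt_of_pos _ hN').le
  have := abs_repr_mul_le hg abs_repr_s i
  rw [← nsmul_remainder, map_nsmul, Finsupp.smul_apply, nsmul_eq_mul, abs_mul, Nat.abs_cast] at this
  push_cast
  nlinarith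

end SmallRepresentatives

theorem exists_nat_lt_pow_and_le_two_mul_rpow {N n : ℕ} (hN : N ≠ 0) (hn : n ≠ 0) :
    ∃ m : ℕ, N < m ^ n ∧ (m : ℝ) ≤ 2 * (N : ℝ) ^ (n : ℝ)⁻¹ := by
  set ρ := (N : ℝ) ^ (n : ℝ)⁻¹
  have one_le_ρ : 1 ≤ ρ :=
    Real.one_le_rpow (mod_cast Nat.one_le_iff_ne_zero.2 hN) (by positivity)
  refine ⟨⌊ρ⌋₊ + 1, ?_, ?_⟩
  · have : ρ ^ n < (⌊ρ⌋₊ + 1 : ℝ) ^ n :=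
      pow_lt_pow_left₀ (Nat.lt_floor_add_one ρ) (by positivity) hn
    rw [Real.rpow_inv_natCast_pow (Nat.cast_nonneg _) hn] at this
    exact_mod_cast this
  · push_cast
    linarith [Nat.floor_le (zero_le_one.trans one_le_ρ)]

section Ideal

variable {ι R : Type*} [Fintype ι] [CommRing R] [IsDedekindDomain R] [Module.Free ℤ R]
  [Module.Finite ℤ R] {b : Basis ι ℤ R}

theorem exists_abs_repr_le_and_sub_mem {I : Ideal R} (hI : I ≠ ⊥) {m : ℕ}
    (hm : Ideal.absNorm I < m ^ Fintype.card ι) (x : R) :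
    ∃ r, (∀ i, |b.repr r i| ≤ (mulConst b * m : ℕ)) ∧ x - r ∈ I := by
  have := Ideal.finiteIndex hI
  rw [← card_box (b := b) 0] at hm
  obtain ⟨u, hu, v, hv, huv, hmem⟩ := exists_sub_mem_of_index_lt_card (H := I.toAddSubgroup) hm
  have hspan : Ideal.absNorm (Ideal.span {u - v}) ≠ 0 := by
    simpa [Ideal.absNorm_eq_zero_iff, sub_eq_zero] using huv
  obtain ⟨r, hr, hdvd⟩ := exists_abs_repr_le_and_dvd_sub hspan
    (Ideal.mem_span_singleton.1 (Ideal.absNorm_mem _))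
    (fun i ↦ (abs_repr_sub_lt_of_mem_box hu hv i).le) x
  exact ⟨r, hr, I.mem_of_dvd hdvd hmem⟩

variable [Nonempty ι]

open Classical in
theorem exists_abs_absNorm_mul_card_box_sub_le (b : Basis ι ℤ R) {κ : ℝ} (hκ : 0 ≤ κ) :
    ∃ C, 0 ≤ C ∧ ∀ (I : Ideal R) (z : R) (M : ℕ), I ≠ ⊥ →
      (Ideal.absNorm I : ℝ) ^ (Fintype.card ι : ℝ)⁻¹ ≤ κ * M →
      |(Ideal.absNorm I * #{x ∈ box b z M | x ∈ I} : ℝ) - M ^ Fintype.card ι| ≤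
        C * (Ideal.absNorm I : ℝ) ^ (Fintype.card ι : ℝ)⁻¹ * M ^ (Fintype.card ι - 1) := by
  set n := Fintype.card ι
  let c : ℝ := (mulConst b : ℕ)
  refine ⟨4 * c * n * (1 + 4 * c * κ) ^ (n - 1), by positivity, fun I z M hI hIM ↦ ?_⟩
  obtain ⟨m, lt_m_pow, m_le⟩ := exists_nat_lt_pow_and_le_two_mul_rpow
    (mt Ideal.absNorm_eq_zero_iff.1 hI) (Fintype.card_ne_zero (α := ι))
  set ρ := (Ideal.absNorm I : ℝ) ^ (n : ℝ)⁻¹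
  have hrep (q : R ⧸ I.toAddSubgroup) :
      ∃ r, (∀ i, |b.repr r i| ≤ (mulConst b * m : ℕ)) ∧ (r : R ⧸ I.toAddSubgroup) = q := by
    obtain ⟨x, rfl⟩ := QuotientAddGroup.mk_surjective q
    obtain ⟨r, hr, hxr⟩ := exists_abs_repr_le_and_sub_mem (b := b) hI lt_m_pow x
    exact ⟨r, hr, (QuotientAddGroup.eq_iff_sub_mem.2 hxr).symm⟩
  have := Ideal.finiteIndex hI
  have mul_m_le : ((mulConst b * m : ℕ) : ℝ) ≤ c * (2 * ρ) := by
    push_cast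
    gcongr
  calc |(Ideal.absNorm I * #{x ∈ box b z M | x ∈ I} : ℝ) - M ^ n|
      ≤ 2 * (mulConst b * m : ℕ) * n * (M + 2 * (mulConst b * m : ℕ)) ^ (n - 1) := by
        exact abs_index_mul_card_box_sub_le hrep z M
    _ ≤ 2 * (c * (2 * ρ)) * n * (M + 2 * (c * (2 * (κ * M)))) ^ (n - 1) := by
        gcongr
        exact mul_m_le.trans (by gcongr)
    _ = 4 * c * n * (1 + 4 * c * κ) ^ (n - 1) * ρ * M ^ (n - 1) := by
        rw [show (M + 2 * (c * (2 * (κ * M))) : ℝ) = (1 + 4 * c * κ) * M by ring, mul_pow]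
        ring

open Classical in
theorem exists_absNorm_mul_card_box_le (b : Basis ι ℤ R) {κ : ℝ} (hκ : 0 ≤ κ) :
    ∃ C, 0 ≤ C ∧ ∀ (I : Ideal R) (z : R) (M : ℕ), I ≠ ⊥ →
      (Ideal.absNorm I : ℝ) ^ (Fintype.card ι : ℝ)⁻¹ ≤ κ * M →
      (Ideal.absNorm I * #{x ∈ box b z M | x ∈ I} : ℝ) ≤ C * M ^ Fintype.card ι := by
  obtain ⟨C, hC, count⟩ := exists_abs_absNorm_mul_card_box_sub_le b hκ
  refine ⟨1 + C * κ, by positivity, fun I z M hI hIM ↦ ?_⟩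
  calc (Ideal.absNorm I * #{x ∈ box b z M | x ∈ I} : ℝ)
      ≤ M ^ Fintype.card ι +
          C * (Ideal.absNorm I : ℝ) ^ (Fintype.card ι : ℝ)⁻¹ * M ^ (Fintype.card ι - 1) := by
        linarith [(abs_le.1 (count I z M hI hIM)).2]
    _ ≤ M ^ Fintype.card ι + C * (κ * M) * M ^ (Fintype.card ι - 1) := by gcongr
    _ = (1 + C * κ) * M ^ Fintype.card ι := by
        rw [← mul_pow_sub_one (Fintype.card_ne_zero (α := ι)) (M : ℝ)]
        ring

end Ideal

section AbelSummation

variable {α : Type*} {s : Finset α} {N : α → ℕ} {w : α → ℝ} {f : ℕ → ℝ} {C : ℝ}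

-- The boundary term of Abel summation is kept so that the bound can be proved by induction on `m`.
theorem sum_mul_comp_add_le (hN : ∀ i ∈ s, 1 ≤ N i)
    (hw : ∀ m : ℕ, ∑ i ∈ s with N i ≤ m, w i ≤ C * m) (hf : AntitoneOn f (Set.Ici 1)) (m : ℕ) :
    ∑ i ∈ s with N i ≤ m, w i * f (N i) + (C * m - ∑ i ∈ s with N i ≤ m, w i) * f m ≤
      C * ∑ k ∈ Icc 1 m, f k := by
  have filter_zero : {i ∈ s | N i ≤ 0} = ∅ :=
    filter_eq_empty_iff.2 fun i hi ↦ by have := hN i hi; omega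
  induction m with
  | zero =>
    rw [filter_zero]
    simp
  | succ m ih =>
    have split (g : α → ℝ) : ∑ i ∈ s with N i ≤ m + 1, g i =
        ∑ i ∈ s with N i ≤ m, g i + ∑ i ∈ s with N i = m + 1, g i := by
      classical
      rw [← sum_union (disjoint_filter.2 fun i _ ↦ by omega), ← filter_or]
      simp only [Nat.le_succ_iff]
    have top : ∑ i ∈ s with N i = m + 1, w i * f (N i) =
        (∑ i ∈ s with N i = m + 1, w i) * f (m + 1) := by
      rw [sum_mul]
      exact sum_congr rfl fun i hi ↦ by rw [(mem_filter.1 hi).2]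
    have decrease : (C * m - ∑ i ∈ s with N i ≤ m, w i) * f (m + 1) ≤
        (C * m - ∑ i ∈ s with N i ≤ m, w i) * f m := by
      rcases Nat.eq_zero_or_pos m with rfl | hm
      · rw [filter_zero]
        simp
      · exact mul_le_mul_of_nonneg_left (hf hm (Set.mem_Ici.2 (by omega)) m.le_succ)
          (sub_nonneg.2 (hw m))
    rw [split, split, top, sum_Icc_succ_top (by omega)]
    push_cast
    linarith

theorem sum_mul_comp_le_mul_sum (hN : ∀ i ∈ s, 1 ≤ N i)
    (hw : ∀ m : ℕ, ∑ i ∈ s with N i ≤ m, w i ≤ C * m) (hf : AntitoneOn f (Set.Ici 1))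
    (hf₀ : ∀ k, 0 ≤ f k) {Y : ℕ} (hY : ∀ i ∈ s, N i ≤ Y) :
    ∑ i ∈ s, w i * f (N i) ≤ C * ∑ k ∈ Icc 1 Y, f k := by
  have boundary_nonneg := mul_nonneg (sub_nonneg.2 (hw Y)) (hf₀ Y)
  have abel := sum_mul_comp_add_le hN hw hf Y
  rw [filter_true_of_mem hY] at boundary_nonneg abel
  linarith

theorem antitoneOn_natCast_rpow {s : ℝ} (hs : s ≤ 0) :
    AntitoneOn (fun k : ℕ ↦ (k : ℝ) ^ s) (Set.Ici 1) := fun _ hk _ _ hkl ↦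
  Real.rpow_le_rpow_of_nonpos (Nat.cast_pos.2 hk) (Nat.cast_le.2 hkl) hs

theorem mul_sum_rpow_sub_one_le {e : ℝ} (he : 0 < e) (he₁ : e ≤ 1) (Y : ℕ) :
    e * ∑ k ∈ Icc 1 Y, (k : ℝ) ^ (e - 1) ≤ (Y : ℝ) ^ e := by
  induction Y with
  | zero => simp [he.ne']
  | succ m ih =>
    have hm : (0 : ℝ) < m + 1 := by positivity
    have bernoulli : (m : ℝ) ^ e ≤ (m + 1 : ℝ) ^ e * (1 - e / (m + 1)) := by
      calc (m : ℝ) ^ e = (m + 1 : ℝ) ^ e * (1 + -(1 / (m + 1) : ℝ)) ^ e := by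
            rw [← Real.mul_rpow hm.le]
            · congr 1; field_simp; ring
            · rw [← sub_eq_add_neg, sub_nonneg, div_le_one hm]; simp
        _ ≤ (m + 1 : ℝ) ^ e * (1 + e * -(1 / (m + 1) : ℝ)) := by
            gcongr
            refine rpow_one_add_le_one_add_mul_self ?_ he.le he₁
            rw [neg_le_neg_iff, div_le_one hm]; simp
        _ = _ := by ring
    rw [sum_Icc_succ_top (by omega), mul_add]
    push_cast
    rw [Real.rpow_sub_one hm.ne']
    linear_combination ih + bernoulli

theorem sum_Icc_inv_sq_le_two (Y : ℕ) : ∑ k ∈ Icc 1 Y, ((k : ℝ) ^ 2)⁻¹ ≤ 2 := by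
  simpa using! sum_Ioo_inv_sq_le (α := ℝ) 0 (Y + 1)

end AbelSummation

section Primes

open IsDedekindDomain

variable {R : Type*} [CommRing R] [IsDedekindDomain R] [Module.Free ℤ R] [Module.Finite ℤ R]

theorem two_le_absNorm (p : HeightOneSpectrum R) : 2 ≤ Ideal.absNorm p.asIdeal := by
  have h0 : Ideal.absNorm p.asIdeal ≠ 0 := mt Ideal.absNorm_eq_zero_iff.1 p.ne_bot
  have h1 : Ideal.absNorm p.asIdeal ≠ 1 := mt Ideal.absNorm_eq_one_iff.1 p.isPrime.ne_top
  omega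

open Classical in
theorem card_filter_le_pow_succ_eq_multiplicity {I : Ideal R} (hI : I ≠ ⊥) {L : ℕ}
    (hL : Ideal.absNorm I ≤ L) (p : HeightOneSpectrum R) :
    #{k ∈ range L | I ≤ p.asIdeal ^ (k + 1)} = multiplicity p.asIdeal I := by
  have hfin : FiniteMultiplicity p.asIdeal I := FiniteMultiplicity.of_prime_left p.prime hI
  have mult_lt : multiplicity p.asIdeal I < L := by
    have hdvd := map_dvd Ideal.absNorm (pow_multiplicity_dvd p.asIdeal I)
    rw [map_pow] at hdvd
    calc multiplicity p.asIdeal I < 2 ^ multiplicity p.asIdeal I := Nat.lt_two_pow_self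
      _ ≤ Ideal.absNorm p.asIdeal ^ multiplicity p.asIdeal I :=
        Nat.pow_le_pow_left (two_le_absNorm p) _
      _ ≤ Ideal.absNorm I :=
        Nat.le_of_dvd (Nat.pos_of_ne_zero (mt Ideal.absNorm_eq_zero_iff.1 hI)) hdvd
      _ ≤ L := hL
  have : {k ∈ range L | I ≤ p.asIdeal ^ (k + 1)} = range (multiplicity p.asIdeal I) := by
    ext k
    rw [mem_filter, mem_range, mem_range, ← Ideal.dvd_iff_le, hfin.pow_dvd_iff_le_multiplicity]
    omega
  rw [this, card_range]

variable (R) [CharZero R]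

theorem finite_setOf_absNorm_le (Y : ℕ) :
    {p : HeightOneSpectrum R | Ideal.absNorm p.asIdeal ≤ Y}.Finite :=
  (Ideal.finite_setOfPred_absNorm_le Y).preimage
    (fun _ _ _ _ h ↦ HeightOneSpectrum.ext h)

/-- The nonzero prime ideals of absolute norm at most `Y`. -/
noncomputable def primesLE (Y : ℕ) : Finset (HeightOneSpectrum R) :=
  (finite_setOf_absNorm_le R Y).toFinset

variable {R}

@[simp]
theorem mem_primesLE {Y : ℕ} {p : HeightOneSpectrum R} :
    p ∈ primesLE R Y ↔ Ideal.absNorm p.asIdeal ≤ Y := by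
  simp [primesLE]

theorem prod_primesLE_dvd_span_primorial (Y : ℕ) :
    ∏ p ∈ primesLE R Y, p.asIdeal ∣ Ideal.span {(primorial Y : R)} := by
  rw [← prod_image (f := fun I : Ideal R ↦ I) fun _ _ _ _ h ↦ HeightOneSpectrum.ext h]
  refine prod_primes_dvd _ (fun I hI ↦ ?_) fun I hI ↦ ?_
  all_goals obtain ⟨p, hp, rfl⟩ := mem_image.1 hI
  · exact p.prime
  have : NeZero p.asIdeal := ⟨p.ne_bot⟩
  have under_prime := Nat.absNorm_under_prime p.asIdeal
  have under_le : Ideal.absNorm (Ideal.under ℤ p.asIdeal) ≤ Y :=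
    (Nat.le_of_dvd (by have := two_le_absNorm p; omega)
      (Int.absNorm_under_dvd_absNorm p.asIdeal)).trans (mem_primesLE.1 hp)
  rw [Ideal.dvd_span_singleton]
  exact p.asIdeal.mem_of_dvd (Nat.cast_dvd_cast (under_prime.dvd_primorial_iff.2 under_le))
    (Int.absNorm_under_mem p.asIdeal)

theorem sum_log_absNorm_le (Y : ℕ) :
    ∑ p ∈ primesLE R Y, Real.log (Ideal.absNorm p.asIdeal) ≤
      finrank ℤ R * Real.log 4 * Y := by
  have prod_le : ∏ p ∈ primesLE R Y, Ideal.absNorm p.asIdeal ≤ (4 ^ Y) ^ finrank ℤ R := by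
    have hdvd := map_dvd Ideal.absNorm (prod_primesLE_dvd_span_primorial (R := R) Y)
    rw [map_prod, Ideal.absNorm_span_natCast] at hdvd
    exact (Nat.le_of_dvd (pow_pos (primorial_pos Y) _) hdvd).trans
      (Nat.pow_le_pow_left (primorial_le_four_pow Y) _)
  have absNorm_ne_zero (p : HeightOneSpectrum R) : (Ideal.absNorm p.asIdeal : ℝ) ≠ 0 := by
    have := two_le_absNorm p
    positivity
  calc ∑ p ∈ primesLE R Y, Real.log (Ideal.absNorm p.asIdeal)
      = Real.log (∏ p ∈ primesLE R Y, Ideal.absNorm p.asIdeal : ℕ) := by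
        push_cast
        rw [Real.log_prod fun p _ ↦ absNorm_ne_zero p]
    _ ≤ Real.log (((4 ^ Y) ^ finrank ℤ R : ℕ) : ℝ) :=
        Real.log_le_log (mod_cast prod_pos fun p _ ↦ by have := two_le_absNorm p; omega)
          (mod_cast prod_le)
    _ = _ := by
        push_cast
        rw [← pow_mul, Real.log_pow]
        push_cast
        ring

theorem sum_log_absNorm_mul_le {f : ℕ → ℝ} (hf : AntitoneOn f (Set.Ici 1)) (hf₀ : ∀ k, 0 ≤ f k)
    (Y : ℕ) :
    ∑ p ∈ primesLE R Y, Real.log (Ideal.absNorm p.asIdeal) * f (Ideal.absNorm p.asIdeal) ≤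
      finrank ℤ R * Real.log 4 * ∑ k ∈ Icc 1 Y, f k := by
  refine sum_mul_comp_le_mul_sum (fun p _ ↦ by have := two_le_absNorm p; omega)
    (fun m ↦ le_trans ?_ (sum_log_absNorm_le m)) hf hf₀ fun p hp ↦ mem_primesLE.1 hp
  exact sum_le_sum_of_subset_of_nonneg (fun p hp ↦ mem_primesLE.2 (mem_filter.1 hp).2)
    fun p _ _ ↦ Real.log_natCast_nonneg _

theorem log_absNorm_eq_sum_multiplicity {I : Ideal R} (hI : I ≠ ⊥) {Y : ℕ}
    (hY : Ideal.absNorm I ≤ Y) : Real.log (Ideal.absNorm I) =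
      ∑ p ∈ primesLE R Y, multiplicity p.asIdeal I * Real.log (Ideal.absNorm p.asIdeal) := by
  have dvd_le {J : Ideal R} (hJ : J ∣ I) : Ideal.absNorm J ≤ Ideal.absNorm I :=
    Nat.le_of_dvd (Nat.pos_of_ne_zero (mt Ideal.absNorm_eq_zero_iff.1 hI))
      (map_dvd Ideal.absNorm hJ)
  have factor : I = ∏ p ∈ primesLE R Y, p.asIdeal ^ multiplicity p.asIdeal I := by
    conv_lhs => rw [← Ideal.finprod_heightOneSpectrum_pow_multiplicity hI]
    refine finprod_eq_prod_of_mulSupport_subset _ fun p hp ↦ ?_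
    refine mem_coe.2 (mem_primesLE.2 ((dvd_le ?_).trans hY))
    by_contra hpI
    exact hp (by simp [multiplicity_eq_zero.2 hpI])
  conv_lhs => rw [factor]
  rw [map_prod, Nat.cast_prod, Real.log_prod]
  · simp
  · intro p _
    have := two_le_absNorm p
    simp only [map_pow, Nat.cast_pow]
    positivity

open Classical in
theorem sum_log_absNorm_span_eq {s : Finset R} {Y : ℕ}
    (hs : ∀ x ∈ s, x ≠ 0) (hY : ∀ x ∈ s, Ideal.absNorm (Ideal.span {x}) ≤ Y) :
    ∑ x ∈ s, Real.log (Ideal.absNorm (Ideal.span {x})) =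
      ∑ p ∈ primesLE R Y, #{x ∈ s | x ∈ p.asIdeal} * Real.log (Ideal.absNorm p.asIdeal) +
      ∑ p ∈ primesLE R Y, ∑ k ∈ range Y,
        #{x ∈ s | x ∈ p.asIdeal ^ (k + 2)} * Real.log (Ideal.absNorm p.asIdeal) := by
  calc ∑ x ∈ s, Real.log (Ideal.absNorm (Ideal.span {x}))
      = ∑ x ∈ s, ∑ p ∈ primesLE R Y,
          #{k ∈ range (Y + 1) | x ∈ p.asIdeal ^ (k + 1)} * Real.log (Ideal.absNorm p.asIdeal) := by
        refine sum_congr rfl fun x hx ↦ ?_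
        have hspan : Ideal.span {x} ≠ ⊥ := mt Ideal.span_singleton_eq_bot.1 (hs x hx)
        simp only [log_absNorm_eq_sum_multiplicity hspan (hY x hx),
          ← card_filter_le_pow_succ_eq_multiplicity hspan (Nat.le_succ_of_le (hY x hx)),
          Ideal.span_singleton_le_iff_mem]
    _ = ∑ p ∈ primesLE R Y, ∑ k ∈ range (Y + 1),
          #{x ∈ s | x ∈ p.asIdeal ^ (k + 1)} * Real.log (Ideal.absNorm p.asIdeal) := by
        rw [sum_comm]
        refine sum_congr rfl fun p _ ↦ ?_
        rw [← sum_mul, ← sum_mul]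
        congr 1
        exact_mod_cast sum_card_bipartiteAbove_eq_sum_card_bipartiteBelow
          fun x k ↦ x ∈ p.asIdeal ^ (k + 1)
    _ = _ := by
        rw [← sum_add_distrib]
        refine sum_congr rfl fun p _ ↦ ?_
        rw [sum_range_succ', zero_add, pow_one, add_comm]

end Primes

theorem abs_mul_log_sub_le {N c m C d e : ℝ} (hN : 1 ≤ N) (h : |N * c - m| ≤ C * N ^ e * d) :
    |c * Real.log N - m * (Real.log N / N)| ≤ C * d * (Real.log N * N ^ (e - 1)) := by
  have N_pos : 0 < N := zero_lt_one.trans_le hN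
  have weight_nonneg : 0 ≤ Real.log N / N := div_nonneg (Real.log_nonneg hN) N_pos.le
  calc |c * Real.log N - m * (Real.log N / N)|
      = |N * c - m| * (Real.log N / N) := by
        rw [← abs_of_nonneg weight_nonneg, ← abs_mul, abs_of_nonneg weight_nonneg]
        congr 1
        field_simp
    _ ≤ C * N ^ e * d * (Real.log N / N) := by gcongr
    _ = C * d * (Real.log N * N ^ (e - 1)) := by
        rw [Real.rpow_sub_one N_pos.ne']
        ring

section Mertens

open IsDedekindDomain

variable {ι R : Type*} [Fintype ι] [CommRing R] [IsDedekindDomain R] [Module.Free ℤ R]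
  [Module.Finite ℤ R]

theorem abs_sum_log_absNorm_box_sub_le {b : Basis ι ℤ R} {κ : ℝ} {z : R} {M : ℕ} (hκ : 0 < κ)
    (hM : 1 ≤ M)
    (lower : ∀ x ∈ box b z M, (M : ℝ) ^ Fintype.card ι ≤ Ideal.absNorm (Ideal.span {x}))
    (upper : ∀ x ∈ box b z M, Ideal.absNorm (Ideal.span {x}) ≤ (κ * M) ^ Fintype.card ι) :
    |∑ x ∈ box b z M, Real.log (Ideal.absNorm (Ideal.span {x})) -
        M ^ Fintype.card ι * (Fintype.card ι * Real.log M)| ≤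
      M ^ Fintype.card ι * (Fintype.card ι * Real.log κ) := by
  have hM₀ : (0 : ℝ) < M := by positivity
  have pointwise {x : R} (hx : x ∈ box b z M) :
      |Real.log (Ideal.absNorm (Ideal.span {x})) - Fintype.card ι * Real.log M| ≤
        Fintype.card ι * Real.log κ := by
    have log_lower := Real.log_le_log (by positivity) (lower x hx)
    have log_upper := Real.log_le_log ((pow_pos hM₀ _).trans_le (lower x hx)) (upper x hx)
    rw [Real.log_pow] at log_lower log_upper
    rw [Real.log_mul hκ.ne' hM₀.ne'] at log_upper
    rw [abs_of_nonneg] <;> linarith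
  calc _ = |∑ x ∈ box b z M,
          (Real.log (Ideal.absNorm (Ideal.span {x})) - Fintype.card ι * Real.log M)| := by
        simp [card_box]
    _ ≤ ∑ _x ∈ box b z M, Fintype.card ι * Real.log κ :=
        (abs_sum_le_sum_abs _ _).trans (sum_le_sum fun x hx ↦ pointwise hx)
    _ = _ := by simp [card_box]

open Classical in
theorem exists_absNorm_mul_card_box_le_of_absNorm_le [Nonempty ι] (b : Basis ι ℤ R) {κ : ℝ}
    (hκ : 0 ≤ κ) :
    ∃ C, 0 ≤ C ∧ ∀ (I : Ideal R) (z : R) (M : ℕ), I ≠ ⊥ → 0 ∉ box b z M →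
      (∀ x ∈ box b z M, Ideal.absNorm (Ideal.span {x}) ≤ (κ * M) ^ Fintype.card ι) →
      (Ideal.absNorm I * #{x ∈ box b z M | x ∈ I} : ℝ) ≤ C * M ^ Fintype.card ι := by
  obtain ⟨C, hC, count⟩ := exists_absNorm_mul_card_box_le b hκ
  refine ⟨C, hC, fun I z M hI zero_notMem upper ↦ ?_⟩
  rcases ({x ∈ box b z M | x ∈ I}).eq_empty_or_nonempty with empty | ⟨x, hx⟩
  · rw [empty]
    simpa using by positivity
  obtain ⟨hxbox, hxI⟩ := mem_filter.1 hx
  have hspan : Ideal.absNorm (Ideal.span {x}) ≠ 0 := by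
    simpa [Ideal.absNorm_eq_zero_iff] using ne_of_mem_of_not_mem hxbox zero_notMem
  have absNorm_le : (Ideal.absNorm I : ℝ) ≤ Ideal.absNorm (Ideal.span {x}) :=
    mod_cast Nat.le_of_dvd (Nat.pos_of_ne_zero hspan)
      (Ideal.absNorm_dvd_absNorm_of_le ((Ideal.span_singleton_le_iff_mem I).2 hxI))
  refine count I z M hI ?_
  rw [← Real.pow_rpow_inv_natCast (by positivity : 0 ≤ κ * M) (Fintype.card_ne_zero (α := ι))]
  gcongr
  exact absNorm_le.trans (upper x hxbox)

open Classical in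
theorem exists_sum_card_box_pow_le [Nonempty ι] (b : Basis ι ℤ R) {κ : ℝ} (hκ : 0 ≤ κ) :
    ∃ C, 0 ≤ C ∧ ∀ (p : HeightOneSpectrum R) (z : R) (M L : ℕ), 0 ∉ box b z M →
      (∀ x ∈ box b z M, Ideal.absNorm (Ideal.span {x}) ≤ (κ * M) ^ Fintype.card ι) →
      ∑ k ∈ range L, (#{x ∈ box b z M | x ∈ p.asIdeal ^ (k + 2)} : ℝ) ≤
        C * M ^ Fintype.card ι * ((Ideal.absNorm p.asIdeal : ℝ) ^ 2)⁻¹ := by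
  obtain ⟨C, hC, count⟩ := exists_absNorm_mul_card_box_le_of_absNorm_le b hκ
  refine ⟨C * 2, by positivity, fun p z M L zero_notMem upper ↦ ?_⟩
  set n := Fintype.card ι
  set N : ℝ := ((Ideal.absNorm p.asIdeal : ℕ) : ℝ)
  have two_le_N : 2 ≤ N := Nat.ofNat_le_cast.2 (two_le_absNorm p)
  have term_le (k : ℕ) : (#{x ∈ box b z M | x ∈ p.asIdeal ^ (k + 2)} : ℝ) ≤
      C * M ^ n * (N ^ 2)⁻¹ * (1 / 2) ^ k := by
    have := count (p.asIdeal ^ (k + 2)) z M (pow_ne_zero _ p.ne_bot) zero_notMem upper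
    rw [map_pow, Nat.cast_pow, mul_comm, ← le_div_iff₀ (by positivity)] at this
    calc _ ≤ C * M ^ n / N ^ (k + 2) := this
      _ = C * M ^ n * (N ^ 2)⁻¹ * (1 / N) ^ k := by
        rw [pow_add, one_div, inv_pow]
        ring
      _ ≤ _ := by gcongr
  calc _ ≤ ∑ k ∈ range L, C * M ^ n * (N ^ 2)⁻¹ * (1 / 2) ^ k := sum_le_sum fun k _ ↦ term_le k
    _ ≤ C * M ^ n * (N ^ 2)⁻¹ * 2 := by
        rw [← mul_sum]
        gcongr
        exact sum_geometric_two_le L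
    _ = _ := by ring

variable [CharZero R]

variable (R) in
/-- The sum of `log N(p) / N(p)` over the nonzero primes `p` of absolute norm `N(p) ≤ Y`, the
subject of Mertens' first theorem. -/
noncomputable def mertensSum (Y : ℕ) : ℝ :=
  ∑ p ∈ primesLE R Y, Real.log (Ideal.absNorm p.asIdeal) / Ideal.absNorm p.asIdeal

theorem exists_heightOneSpectrum_of_mertensSum_lt {Y Z : ℕ}
    (h : mertensSum R Y < mertensSum R Z) :
    ∃ p : HeightOneSpectrum R, Y < Ideal.absNorm p.asIdeal ∧ Ideal.absNorm p.asIdeal ≤ Z := by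
  contrapose! h
  refine sum_le_sum_of_subset_of_nonneg (fun p hp ↦ ?_) fun p _ _ ↦
    div_nonneg (Real.log_natCast_nonneg _) (Nat.cast_nonneg _)
  rw [mem_primesLE] at hp ⊢
  by_contra! hY
  exact (h p hY).not_ge hp

open Classical in
theorem exists_abs_sum_card_box_mul_log_sub_le [Nonempty ι] (b : Basis ι ℤ R) {κ : ℝ}
    (hκ : 0 ≤ κ) :
    ∃ C, ∀ (z : R) (M Y : ℕ), (Y : ℝ) ^ (Fintype.card ι : ℝ)⁻¹ ≤ κ * M →
      |∑ p ∈ primesLE R Y, #{x ∈ box b z M | x ∈ p.asIdeal} * Real.log (Ideal.absNorm p.asIdeal)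
        - M ^ Fintype.card ι * mertensSum R Y| ≤ C * M ^ Fintype.card ι := by
  obtain ⟨C, hC, count⟩ := exists_abs_absNorm_mul_card_box_sub_le b hκ
  set n := Fintype.card ι
  have hn : n ≠ 0 := Fintype.card_ne_zero
  set e : ℝ := (n : ℝ)⁻¹
  have he : 0 < e := by positivity
  have he₁ : e ≤ 1 := Nat.cast_inv_le_one n
  refine ⟨C * (n * Real.log 4 * (n * κ)), fun z M Y hY ↦ ?_⟩
  have pointwise {p : HeightOneSpectrum R} (hp : p ∈ primesLE R Y) :
      |#{x ∈ box b z M | x ∈ p.asIdeal} * Real.log (Ideal.absNorm p.asIdeal) -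
        M ^ n * (Real.log (Ideal.absNorm p.asIdeal) / Ideal.absNorm p.asIdeal)| ≤
      C * M ^ (n - 1) *
        (Real.log (Ideal.absNorm p.asIdeal) * (Ideal.absNorm p.asIdeal : ℝ) ^ (e - 1)) := by
    have N_pos : (0 : ℝ) < Ideal.absNorm p.asIdeal := by
      have := two_le_absNorm p
      positivity
    refine abs_mul_log_sub_le (mod_cast N_pos) (count p.asIdeal z M p.ne_bot ?_)
    exact (Real.rpow_le_rpow N_pos.le (mod_cast mem_primesLE.1 hp) he.le).trans hY
  have chebyshev := sum_log_absNorm_mul_le (R := R)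
    (antitoneOn_natCast_rpow (sub_nonpos.2 he₁)) (fun k ↦ by positivity) Y
  rw [finrank_eq_card_basis b] at chebyshev
  have sum_rpow_le : ∑ k ∈ Icc 1 Y, (k : ℝ) ^ (e - 1) ≤ n * (κ * M) := by
    have := (mul_sum_rpow_sub_one_le he he₁ Y).trans hY
    rwa [inv_mul_le_iff₀ (by positivity)] at this
  rw [mertensSum, mul_sum, ← sum_sub_distrib]
  calc _ ≤ ∑ p ∈ primesLE R Y, C * M ^ (n - 1) *
        (Real.log (Ideal.absNorm p.asIdeal) * (Ideal.absNorm p.asIdeal : ℝ) ^ (e - 1)) :=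
        (abs_sum_le_sum_abs _ _).trans (sum_le_sum fun p hp ↦ pointwise hp)
    _ ≤ C * M ^ (n - 1) * (n * Real.log 4 * (n * (κ * M))) := by
        rw [← mul_sum]
        gcongr
        exact chebyshev.trans (by gcongr)
    _ = C * (n * Real.log 4 * (n * κ)) * M ^ n := by
        rw [← mul_pow_sub_one hn (M : ℝ)]
        ring

open Classical in
theorem exists_sum_card_box_pow_mul_log_le [Nonempty ι] (b : Basis ι ℤ R) {κ : ℝ}
    (hκ : 0 ≤ κ) :
    ∃ C, ∀ (z : R) (M Y L : ℕ), 0 ∉ box b z M →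
      (∀ x ∈ box b z M, Ideal.absNorm (Ideal.span {x}) ≤ (κ * M) ^ Fintype.card ι) →
      ∑ p ∈ primesLE R Y, ∑ k ∈ range L, #{x ∈ box b z M | x ∈ p.asIdeal ^ (k + 2)} *
        Real.log (Ideal.absNorm p.asIdeal) ≤ C * M ^ Fintype.card ι := by
  obtain ⟨C, hC, count⟩ := exists_sum_card_box_pow_le b hκ
  set n := Fintype.card ι
  refine ⟨C * (n * Real.log 4 * 2), fun z M Y L zero_notMem upper ↦ ?_⟩
  have chebyshev := sum_log_absNorm_mul_le (R := R) (f := fun k ↦ ((k : ℝ) ^ 2)⁻¹)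
    (fun k (hk : 1 ≤ k) l _ hkl ↦ inv_anti₀ (by positivity) (by gcongr)) (fun k ↦ by positivity) Y
  rw [finrank_eq_card_basis b] at chebyshev
  calc _ ≤ ∑ p ∈ primesLE R Y, C * M ^ n *
        (Real.log (Ideal.absNorm p.asIdeal) * ((Ideal.absNorm p.asIdeal : ℝ) ^ 2)⁻¹) := by
        refine sum_le_sum fun p _ ↦ ?_
        rw [← sum_mul, mul_left_comm, mul_comm]
        exact mul_le_mul_of_nonneg_left (count p z M L zero_notMem upper)
          (Real.log_natCast_nonneg _)
    _ ≤ C * M ^ n * (n * Real.log 4 * 2) := by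
        rw [← mul_sum]
        gcongr
        exact chebyshev.trans (by gcongr; exact sum_Icc_inv_sq_le_two Y)
    _ = _ := by ring

theorem exists_abs_mertensSum_sub_le [Nonempty ι] (b : Basis ι ℤ R) {κ : ℝ} (hκ : 0 < κ) :
    ∃ C, ∀ (z : R) (M Y : ℕ), 1 ≤ M →
      (∀ x ∈ box b z M, (M : ℝ) ^ Fintype.card ι ≤ Ideal.absNorm (Ideal.span {x})) →
      (∀ x ∈ box b z M, Ideal.absNorm (Ideal.span {x}) ≤ (κ * M) ^ Fintype.card ι) →
      (κ * M) ^ Fintype.card ι ≤ Y → (Y : ℝ) ^ (Fintype.card ι : ℝ)⁻¹ ≤ 2 * κ * M →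
      |mertensSum R Y - Fintype.card ι * Real.log M| ≤ C := by
  classical
  obtain ⟨C₁, first_powers⟩ := exists_abs_sum_card_box_mul_log_sub_le b
    (by positivity : 0 ≤ 2 * κ)
  obtain ⟨C₂, higher_powers⟩ := exists_sum_card_box_pow_mul_log_le b hκ.le
  set n := Fintype.card ι
  refine ⟨n * Real.log κ + C₁ + C₂, fun z M Y hM lower upper le_Y Y_le ↦ ?_⟩
  have hM' : (0 : ℝ) < M ^ n := by positivity
  have ne_zero {x : R} (hx : x ∈ box b z M) : x ≠ 0 := by
    rintro rfl
    have absNorm_pos := hM'.trans_le (lower 0 hx)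
    rw [Ideal.span_singleton_eq_bot.2 rfl, Ideal.absNorm_bot, Nat.cast_zero] at absNorm_pos
    exact absNorm_pos.false
  have factorization := sum_log_absNorm_span_eq (fun x hx ↦ ne_zero hx)
    fun x hx ↦ mod_cast (upper x hx).trans le_Y
  have norms := abs_le.1 (abs_sum_log_absNorm_box_sub_le hκ hM lower upper)
  have first := abs_le.1 (first_powers z M Y Y_le)
  have higher := higher_powers z M Y Y (fun h ↦ ne_zero h rfl) upper
  have higher_nonneg : 0 ≤ ∑ p ∈ primesLE R Y, ∑ k ∈ range Y,
      #{x ∈ box b z M | x ∈ p.asIdeal ^ (k + 2)} * Real.log (Ideal.absNorm p.asIdeal) :=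
    sum_nonneg fun p _ ↦ sum_nonneg fun k _ ↦
      mul_nonneg (Nat.cast_nonneg _) (Real.log_natCast_nonneg _)
  refine le_of_mul_le_mul_left ?_ hM'
  rw [← abs_of_pos hM', ← abs_mul, abs_of_pos hM', abs_le]
  constructor <;> linarith

end Mertens

theorem exists_nat_mul_le_and_le_two_mul {κ ρ : ℝ} (hκ : 0 < κ) (hκρ : κ ≤ ρ) :
    ∃ M : ℕ, 1 ≤ M ∧ κ * M ≤ ρ ∧ ρ ≤ 2 * κ * M := by
  have one_le : 1 ≤ ⌊ρ / κ⌋₊ := Nat.one_le_floor_iff _ |>.2 ((one_le_div hκ).2 hκρ)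
  refine ⟨⌊ρ / κ⌋₊, one_le, ?_, ?_⟩
  · rw [← le_div_iff₀' hκ]
    exact Nat.floor_le (div_nonneg (hκ.le.trans hκρ) hκ.le)
  · have lt := (div_lt_iff₀' hκ).1 (Nat.lt_floor_add_one (ρ / κ))
    have : (1 : ℝ) ≤ ⌊ρ / κ⌋₊ := mod_cast one_le
    nlinarith

section RingOfIntegers

open NumberField IsDedekindDomain Asymptotics Filter

variable {K : Type*} [Field K] [NumberField K]

theorem absNorm_span_eq_prod (x : 𝓞 K) :
    (Ideal.absNorm (Ideal.span {x}) : ℝ) = ∏ σ : K →ₐ[ℚ] ℂ, ‖σ x‖ := by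
  rw [Ideal.absNorm_span_singleton, ← norm_prod, ← Algebra.norm_eq_prod_embeddings,
    ← Algebra.coe_norm_int]
  simp

variable {ι : Type*} [Fintype ι]

theorem exists_norm_embedding_mem_Icc (b : Basis ι ℤ (𝓞 K)) :
    ∃ A κ : ℕ, 0 < κ ∧ ∀ M : ℕ, ∀ x ∈ box b ((A * M : ℕ) : 𝓞 K) M, ∀ σ : K →ₐ[ℚ] ℂ,
      ‖σ x‖ ∈ Set.Icc (M : ℝ) (κ * M) := by
  obtain ⟨B, hB⟩ := exists_nat_ge (∑ i, house (b i : K))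
  refine ⟨B + 1, 2 * B + 1, by omega, fun M x hx σ ↦ ?_⟩
  set z : 𝓞 K := (((B + 1) * M : ℕ) : 𝓞 K)
  have norm_sub_le : ‖σ x - ((B + 1) * M : ℕ)‖ ≤ B * M := by
    calc ‖σ x - ((B + 1) * M : ℕ)‖ = ‖σ (x - z : 𝓞 K)‖ := by simp [z]
      _ = ‖∑ i, (b.repr (x - z) i : ℂ) * σ (b i)‖ := by
        conv_lhs => rw [← b.sum_repr (x - z)]
        simp
      _ ≤ ∑ i, M * house (b i : K) := by
        refine (norm_sum_le _ _).trans (sum_le_sum fun i _ ↦ ?_)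
        rw [norm_mul, Complex.norm_intCast]
        have := mem_box.1 hx i
        gcongr
        · rw [abs_of_nonneg] <;> norm_cast <;> omega
        · exact norm_embedding_le_house _ σ.toRingHom
      _ ≤ B * M := by
        rw [← mul_sum, mul_comm]
        gcongr
  have h := abs_le.1 ((abs_norm_sub_norm_le _ _).trans norm_sub_le)
  rw [Complex.norm_natCast] at h
  push_cast at h ⊢
  constructor <;> linarith

theorem exists_absNorm_mem_Icc_of_mem_box (b : Basis ι ℤ (𝓞 K)) :
    ∃ A κ : ℕ, 0 < κ ∧ ∀ M : ℕ, ∀ x ∈ box b ((A * M : ℕ) : 𝓞 K) M,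
      (Ideal.absNorm (Ideal.span {x}) : ℝ) ∈
        Set.Icc ((M : ℝ) ^ Fintype.card ι) ((κ * M) ^ Fintype.card ι) := by
  obtain ⟨A, κ, hκ, bounds⟩ := exists_norm_embedding_mem_Icc b
  have card_eq : Fintype.card ι = Fintype.card (K →ₐ[ℚ] ℂ) := by
    rw [AlgHom.card, ← RingOfIntegers.rank, finrank_eq_card_basis b]
  refine ⟨A, κ, hκ, fun M x hx ↦ ?_⟩
  rw [absNorm_span_eq_prod, card_eq, ← card_univ, ← prod_const, ← prod_const]
  exact ⟨prod_le_prod (fun _ _ ↦ by positivity) fun σ _ ↦ (bounds M x hx σ).1,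
    prod_le_prod (fun _ _ ↦ by positivity) fun σ _ ↦ (bounds M x hx σ).2⟩

variable (K) in
theorem mertensSum_sub_log_isBigO_one :
    (fun Y : ℕ ↦ mertensSum (𝓞 K) Y - Real.log Y) =O[atTop] (1 : ℕ → ℝ) := by
  let b := Module.finBasis ℤ (𝓞 K)
  obtain ⟨A, κ, hκ, bounds⟩ := exists_absNorm_mem_Icc_of_mem_box b
  have : Nonempty (Fin (finrank ℤ (𝓞 K))) := Fin.pos_iff_nonempty.1 finrank_pos
  obtain ⟨C, estimate⟩ := exists_abs_mertensSum_sub_le b (Nat.cast_pos.2 hκ : (0 : ℝ) < κ)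
  set n := Fintype.card (Fin (finrank ℤ (𝓞 K)))
  have hn : n ≠ 0 := Fintype.card_ne_zero
  refine IsBigO.of_bound (C + n * Real.log (2 * κ)) ?_
  filter_upwards [eventually_ge_atTop (κ ^ n)] with Y hY
  have hκ' : (0 : ℝ) < κ := Nat.cast_pos.2 hκ
  have hY' : (κ : ℝ) ^ n ≤ Y := mod_cast hY
  set ρ : ℝ := (Y : ℝ) ^ (n : ℝ)⁻¹
  have ρ_pow : ρ ^ n = Y := Real.rpow_inv_natCast_pow (Nat.cast_nonneg _) hn
  have κ_le_ρ : κ ≤ ρ := by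
    rw [← ρ_pow] at hY'
    exact (pow_le_pow_iff_left₀ hκ'.le (by positivity) hn).1 hY'
  obtain ⟨M, hM, κM_le, ρ_le⟩ := exists_nat_mul_le_and_le_two_mul hκ' κ_le_ρ
  have near_log_M := estimate _ M Y hM (fun x hx ↦ (bounds M x hx).1)
    (fun x hx ↦ (bounds M x hx).2) (by rw [← ρ_pow]; gcongr) ρ_le
  have log_near : |n * Real.log M - Real.log Y| ≤ n * Real.log (2 * κ) := by
    have M_pos : (0 : ℝ) < M := mod_cast hM
    have lower := Real.log_le_log (by positivity) κM_le
    have upper := Real.log_le_log (hκ'.trans_le κ_le_ρ) ρ_le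
    rw [Real.log_mul (by positivity) M_pos.ne'] at lower upper
    have log_κ_nonneg := Real.log_natCast_nonneg κ
    rw [← ρ_pow, Real.log_pow, abs_sub_comm, ← mul_sub, abs_of_nonneg (by nlinarith)]
    gcongr
    linarith
  simpa using (abs_sub_le _ _ _).trans (add_le_add near_log_M log_near)

variable (K) in
theorem exists_heightOneSpectrum_absNorm_mem_Ioc :
    ∃ D Y₀ : ℕ, ∀ Y ≥ Y₀, ∃ p : HeightOneSpectrum (𝓞 K),
      Y < Ideal.absNorm p.asIdeal ∧ Ideal.absNorm p.asIdeal ≤ D * Y := by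
  obtain ⟨C, mertens⟩ := (mertensSum_sub_log_isBigO_one K).bound
  simp only [Real.norm_eq_abs, Pi.one_apply, abs_one, mul_one, eventually_atTop] at mertens
  obtain ⟨Y₀, mertens⟩ := mertens
  obtain ⟨D, hD⟩ := exists_nat_gt (Real.exp (2 * C))
  refine ⟨D, max Y₀ 1, fun Y hY ↦ exists_heightOneSpectrum_of_mertensSum_lt ?_⟩
  have D_pos : (0 : ℝ) < D := (Real.exp_pos _).trans hD
  have hY₀ : Y₀ ≤ Y := (le_max_left _ _).trans hY
  have Y_pos : (0 : ℝ) < Y := mod_cast (le_max_right _ _).trans hY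
  have hDY : Y₀ ≤ D * Y := hY₀.trans (Nat.le_mul_of_pos_left _ (mod_cast D_pos))
  have upper := (abs_le.1 (mertens Y hY₀)).2
  have lower := (abs_le.1 (mertens (D * Y) hDY)).1
  have log_D := (Real.lt_log_iff_exp_lt D_pos).2 hD
  rw [Nat.cast_mul, Real.log_mul D_pos.ne' Y_pos.ne'] at lower
  linarith

end RingOfIntegers

end NumberFieldMertens

/-- Bertrand's postulate for number fields (Hulse–Ram Murty): there is `B > 1`
such that for every `x > 1` there is a nonzero prime ideal of `𝓞 K` whose
absolute norm lies in `[x, B*x]`. -/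
theorem stmt_9 (K : Type*) [Field K] [NumberField K] :
    ∃ B : ℝ, 1 < B ∧ ∀ x : ℝ, 1 < x →
      ∃ 𝔭 : Ideal (NumberField.RingOfIntegers K), 𝔭.IsPrime ∧ 𝔭 ≠ ⊥ ∧
        x ≤ (Ideal.absNorm 𝔭 : ℝ) ∧ (Ideal.absNorm 𝔭 : ℝ) ≤ B * x := by
  obtain ⟨D, Y₀, exists_prime⟩ := NumberFieldMertens.exists_heightOneSpectrum_absNorm_mem_Ioc K
  refine ⟨D * (Y₀ + 2), ?_, fun x hx ↦ ?_⟩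
  · obtain ⟨p, lt_absNorm, absNorm_le⟩ := exists_prime Y₀ le_rfl
    have one_lt_D : 1 < D := by nlinarith
    exact_mod_cast (by nlinarith : 1 < D * (Y₀ + 2))
  · obtain ⟨p, lt_absNorm, absNorm_le⟩ := exists_prime (Y₀ + ⌈x⌉₊) (by omega)
    have le_ceil := Nat.le_ceil x
    have ceil_lt := Nat.ceil_lt_add_one (zero_le_one.trans hx.le)
    refine ⟨p.asIdeal, p.isPrime, p.ne_bot, ?_, ?_⟩
    · have : ((Y₀ + ⌈x⌉₊ : ℕ) : ℝ) < Ideal.absNorm p.asIdeal := mod_cast lt_absNorm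
      push_cast at this
      linarith [Y₀.cast_nonneg (α := ℝ)]
    · calc (Ideal.absNorm p.asIdeal : ℝ) ≤ D * (Y₀ + ⌈x⌉₊) := mod_cast absNorm_le
        _ ≤ D * (Y₀ * x + 2 * x) := by
          gcongr
          · exact le_mul_of_one_le_right (Nat.cast_nonneg _) hx.le
          · linarith
        _ = D * (Y₀ + 2) * x := by ring
end
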